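/- arXiv:2205.04938 — 3 statements merged into one kernel-verified Lean document; each statement's English description precedes it below -/
import Mathlib

section
/- Let T be a semistandard Young tableau of rectangular shape a × b with entries at most k, let B be a box of T, and let B* be the box corresponding to B under 180° rotation of the rectangle. Then the multiset of entries of box B over the promotion orbit segment {Pro^i(T) : 0 ≤ i ≤ k−1} equals the multiset {k+1−m : m ∈ Dist(T,B*)}, where Dist(T,B*) is the corresponding multiset of entries of B*. -/
open scoped Classical

/-- `T ∈ SSYT_k(a × b)`: a filling of the `a × b` rectangle (rows indexed by `Fin a`,
columns by `Fin b`) with entries in `{1,…,k}`, weakly increasing along rows and strictly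
increasing down columns. -/
def IsSSYT (a b k : ℕ) (T : Fin a → Fin b → ℤ) : Prop :=
  (∀ x y, 1 ≤ T x y ∧ T x y ≤ (k : ℤ)) ∧
  (∀ (x : Fin a) (y y' : Fin b), y ≤ y' → T x y ≤ T x y') ∧
  (∀ (y : Fin b) (x x' : Fin a), x < x' → T x y < T x' y)

/-- The Bender–Knuth involution `ρ_j` on rectangular fillings.  An entry `j` in box
`(x,y)` is free if the box below does not contain `j+1`; an entry `j+1` is free if the
box above does not contain `j`.  In each row, the `a` free `j`'s followed by `b` free
`(j+1)`'s are replaced by `b` free `j`'s followed by `a` free `(j+1)`'s: a free box gets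
the value `j` precisely when its rank among the free boxes of its row is at most the
number of free `(j+1)`'s. -/
noncomputable def bk (a b : ℕ) (j : ℤ) (T : Fin a → Fin b → ℤ) : Fin a → Fin b → ℤ :=
  fun x y =>
    let low : Fin b → Prop := fun y' =>
      T x y' = j ∧ ∀ h : (x : ℕ) + 1 < a, T ⟨(x : ℕ) + 1, h⟩ y' ≠ j + 1
    let high : Fin b → Prop := fun y' =>
      T x y' = j + 1 ∧ ∀ x' : Fin a, (x' : ℕ) + 1 = (x : ℕ) → T x' y' ≠ j
    if low y ∨ high y then
      if (Finset.univ.filter (fun y' : Fin b => (low y' ∨ high y') ∧ y' ≤ y)).card ≤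
          (Finset.univ.filter (fun y' : Fin b => high y')).card
      then j else j + 1
    else T x y

/-- Promotion `Pro = ρ_{k−1} ∘ ⋯ ∘ ρ_2 ∘ ρ_1` on fillings of the `a × b` rectangle with
entries at most `k` (so `ρ_1` is applied first). -/
noncomputable def pro (a b k : ℕ) (T : Fin a → Fin b → ℤ) : Fin a → Fin b → ℤ :=
  (List.range (k - 1)).foldl (fun S i => bk a b ((i : ℤ) + 1) S) T

/-- `SSYTDist(T,B)`: the multiset of entries of box `B = (x,y)` over the promotion orbit
segment `{Pro^i(T) : 0 ≤ i ≤ k−1}`. -/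
noncomputable def SSYTDist (a b k : ℕ) (T : Fin a → Fin b → ℤ) (x : Fin a) (y : Fin b) :
    Multiset ℤ :=
  (Multiset.range k).map (fun i => (pro a b k)^[i] T x y)

namespace Antip

def inR (a q u v : ℕ) : Prop := 1 ≤ u ∧ u ≤ a ∧ 1 ≤ v ∧ v ≤ q

noncomputable def sent (a q : ℕ) (B : ℝ) (u v : ℕ) : ℝ :=
  if u = 0 ∧ v = 1 then 1 else if u = a + 1 ∧ v = q then B else 0

def Good (a q : ℕ) (B : ℝ) (f : ℕ → ℕ → ℝ) : Prop :=
  (∀ u v, inR a q u v → 0 < f u v) ∧ ∀ u v, ¬ inR a q u v → f u v = sent a q B u v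

def Row (a q : ℕ) (f f' : ℕ → ℕ → ℝ) : Prop :=
  ∀ u v, inR a q u v → f' u v * f u v =
    (f (u-1) v + f u (v-1)) * ((f' (u+1) v)⁻¹ + (f' u (v+1))⁻¹)⁻¹

lemma sent_nonneg {a q : ℕ} {B : ℝ} (hB : 0 < B) (u v : ℕ) : 0 ≤ sent a q B u v := by
  unfold sent; split_ifs <;> linarith

lemma Good.nonneg {a q : ℕ} {B : ℝ} (hB : 0 < B) {f : ℕ → ℕ → ℝ} (h : Good a q B f) (u v : ℕ) :
    0 ≤ f u v := by
  by_cases hi : inR a q u v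
  · exact (h.1 u v hi).le
  · rw [h.2 u v hi]; exact sent_nonneg hB u v

lemma Good.S_pos {a q : ℕ} {B : ℝ} (hB : 0 < B) {f : ℕ → ℕ → ℝ} (h : Good a q B f) {u v : ℕ}
    (hi : inR a q u v) : 0 < f (u-1) v + f u (v-1) := by
  obtain ⟨h1, h2, h3, h4⟩ := hi
  have n1 := h.nonneg hB (u-1) v
  have n2 := h.nonneg hB u (v-1)
  by_cases hv : v = 1
  · by_cases hu : u = 1
    · subst hu hv
      rw [h.2 (1-1) 1 (by unfold inR; omega)]
      simp only [sent]; simp at n2 ⊢; linarith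
    · have := h.1 (u-1) v ⟨by omega, by omega, by omega, by omega⟩
      linarith
  · have := h.1 u (v-1) ⟨by omega, by omega, by omega, by omega⟩
    linarith

lemma Good.P_pos {a q : ℕ} {B : ℝ} (hB : 0 < B) {f : ℕ → ℕ → ℝ} (h : Good a q B f) {u v : ℕ}
    (hi : inR a q u v) : 0 < (f (u+1) v)⁻¹ + (f u (v+1))⁻¹ := by
  obtain ⟨h1, h2, h3, h4⟩ := hi
  have n1 := inv_nonneg.2 (h.nonneg hB (u+1) v)
  have n2 := inv_nonneg.2 (h.nonneg hB u (v+1))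
  by_cases hv : v = q
  · by_cases hu : u = a
    · subst hu hv
      have : 0 < (f (u+1) v)⁻¹ := by
        rw [h.2 (u+1) v (by unfold inR; omega)]
        simp only [sent]; simp; exact hB
      linarith
    · have := inv_pos.2 (h.1 (u+1) v ⟨by omega, by omega, by omega, by omega⟩)
      linarith
  · have := inv_pos.2 (h.1 u (v+1) ⟨by omega, by omega, by omega, by omega⟩)
    linarith

/-- path sums -/
noncomputable def G (w : ℕ → ℕ → ℝ) (i : ℕ) : ℕ → ℕ → ℝ
  | u, 0 => if u = i then 1 else 0
  | 0, _ + 1 => 0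
  | u + 1, v + 1 => w (u+1) (v+1) * (G w i u (v+1) + G w i (u+1) v)
termination_by u v => u + v

lemma G_zero (w) (i u : ℕ) : G w i u 0 = if u = i then 1 else 0 := by
  cases u <;> simp [G]

lemma G_zero' (w) (i v : ℕ) : G w i 0 (v+1) = 0 := by simp [G]

lemma G_zero1 (w) (i v : ℕ) (hi : 1 ≤ i) : G w i 0 v = 0 := by
  cases v
  · rw [G_zero, if_neg (by omega)]
  · simp [G]

lemma G_succ (w) (i u v : ℕ) : G w i (u+1) (v+1) =
    w (u+1) (v+1) * (G w i u (v+1) + G w i (u+1) v) := by rw [G]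

lemma G_one (w) (i v : ℕ) (hi : 2 ≤ i) : G w i 1 v = 0 := by
  induction v with
  | zero => rw [G_zero, if_neg (by omega)]
  | succ v ih => rw [G_succ, ih, G_zero']; simp

lemma G_congr (a q : ℕ) (w w' : ℕ → ℕ → ℝ) (h : ∀ u v, inR a q u v → w u v = w' u v) (i : ℕ) :
    ∀ v, v ≤ q → ∀ u, u ≤ a → G w i u v = G w' i u v := by
  intro v
  induction v with
  | zero => intro _ u _; rw [G_zero, G_zero]
  | succ v ihv =>
    intro hv u
    induction u with
    | zero => intro _; rw [G_zero', G_zero']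
    | succ u ihu =>
      intro hu
      rw [G_succ, G_succ, ihu (by omega), ihv (by omega) _ hu,
        h _ _ ⟨by omega, by omega, by omega, by omega⟩]

noncomputable def Aw (f : ℕ → ℕ → ℝ) (u v : ℕ) : ℝ := f u v / (f (u-1) v + f u (v-1))
noncomputable def Dw (f : ℕ → ℕ → ℝ) (u v : ℕ) : ℝ :=
  ((f (u+1) v)⁻¹ + (f u (v+1))⁻¹)⁻¹ / f u v

lemma conv1 {a q : ℕ} {B : ℝ} (hB : 0 < B) {f : ℕ → ℕ → ℝ} (h : Good a q B f) (i : ℕ) (hi : 1 ≤ i) :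
    ∀ v, v < q → ∀ u, u < a → G (Dw f) i u v =
      f u (v+1) / f (u+1) (v+1) * G (Aw f) (i+1) (u+1) (v+1) - G (Aw f) (i+1) u (v+1) := by
  intro v
  induction v with
  | zero =>
    intro hv u hu
    rw [G_zero, G_succ, G_zero]
    rcases Nat.eq_zero_or_pos u with rfl | hu0
    · rw [G_zero', if_neg (by omega), if_neg (by omega)]; simp
    have p1 := h.1 u 1 ⟨by omega, by omega, by omega, by omega⟩
    have p2 := h.1 (u+1) 1 ⟨by omega, by omega, by omega, by omega⟩
    have z : f (u+1) 0 = 0 := by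
      rw [h.2 _ _ (by unfold inR; omega)]; simp only [sent]
      rw [if_neg (by omega), if_neg (by omega)]
    have hA : Aw f (u+1) 1 = f (u+1) 1 / f u 1 := by
      simp [Aw, z]
    simp only [zero_add, hA]
    have : (u + 1 = i + 1) ↔ u = i := by omega
    simp only [this]
    field_simp; ring
  | succ v ihv =>
    intro hv u
    induction u with
    | zero =>
      intro hu
      rw [G_zero', G_zero', zero_add, G_one _ _ _ (by omega)]; simp
    | succ u ihu =>
      intro hu
      have ih1 := ihu (by omega)
      have ih2 := ihv (by omega) (u+1) hu
      have r1 := G_succ (Aw f) (i+1) (u+1) (v+1)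
      have r2 := G_succ (Aw f) (i+1) u (v+1)
      have p0 := h.nonneg hB u (v+1+1)
      have p1 := h.1 (u+1) (v+1+1) ⟨by omega, by omega, by omega, by omega⟩
      have p2 := h.1 (u+1+1) (v+1+1) ⟨by omega, by omega, by omega, by omega⟩
      have p3 := h.1 (u+1+1) (v+1) ⟨by omega, by omega, by omega, by omega⟩
      have p4 := h.1 (u+1) (v+1) ⟨by omega, by omega, by omega, by omega⟩
      rw [G_succ, ih1, ih2]
      clear ih1 ih2 ihu ihv
      generalize G (Aw f) (i+1) = H at *
      simp only [Aw, Dw, Nat.add_sub_cancel] at r1 r2 ⊢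
      generalize H (u+1+1) (v+1+1) = h22 at *
      generalize H (u+1) (v+1+1) = h12 at *
      generalize H (u+1+1) (v+1) = h21 at *
      generalize H (u+1) (v+1) = h11 at *
      generalize H u (v+1+1) = h02 at *
      generalize f (u+1) (v+1+1) = f12 at *
      generalize f (u+1+1) (v+1+1) = f22 at *
      generalize f (u+1+1) (v+1) = f21 at *
      generalize f (u+1) (v+1) = f11 at *
      generalize f u (v+1+1) = f02 at *
      have r2' : h02 = h12 * (f02 + f11) / f12 - h11 := by
        rw [r2]; field_simp; ring
      have : 0 < f21 + f12 := by positivity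
      rw [r2', r1]
      field_simp
      ring

lemma conv2 {a q : ℕ} {B : ℝ} (hB : 0 < B) {f : ℕ → ℕ → ℝ} (h : Good a q B f) (i : ℕ) (hi : 1 ≤ i)
    (hq : 1 ≤ q) : ∀ u, u < a → G (Dw f) i u q = G (Aw f) (i+1) (u+1) q := by
  obtain ⟨v, rfl⟩ : ∃ v, q = v + 1 := ⟨q - 1, by omega⟩
  intro u
  induction u with
  | zero =>
    intro hu
    rw [G_zero', zero_add, G_one _ _ _ (by omega)]
  | succ u ihu =>
    intro hu
    have ih1 := ihu (by omega)
    have ih2 := conv1 hB h i hi v (by omega) (u+1) hu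
    have r1 := G_succ (Aw f) (i+1) (u+1) v
    have p1 := h.1 (u+1) (v+1) ⟨by omega, by omega, by omega, by omega⟩
    have p2 := h.1 (u+1+1) (v+1) ⟨by omega, by omega, by omega, by omega⟩
    have z : f (u+1) (v+1+1) = 0 := by
      rw [h.2 _ _ (by unfold inR; omega)]; simp only [sent]
      rw [if_neg (by omega), if_neg (by omega)]
    rw [G_succ, ih1, ih2]
    simp only [Dw, z]
    simp
    field_simp

lemma F_eq_G {a q : ℕ} {B : ℝ} (hB : 0 < B) {f : ℕ → ℕ → ℝ} (h : Good a q B f) :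
    ∀ v, v < q → ∀ u, u < a → f (u+1) (v+1) = G (Aw f) 1 (u+1) (v+1) := by
  intro v
  induction v with
  | zero =>
    intro hv u
    induction u with
    | zero =>
      intro hu
      have := h.S_pos hB (u := 1) (v := 1) ⟨by omega, by omega, by omega, by omega⟩
      have z : f 0 1 = 1 := by
        rw [h.2 _ _ (by unfold inR; omega)]; simp [sent]
      have z' : f 1 0 = 0 := by
        rw [h.2 _ _ (by unfold inR; omega)]; simp only [sent]
        rw [if_neg (by omega), if_neg (by omega)]
      rw [G_succ, G_zero', G_zero]
      simp [Aw, z, z']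
    | succ u ihu =>
      intro hu
      have := h.S_pos hB (u := u+1+1) (v := 1) ⟨by omega, by omega, by omega, by omega⟩
      have z' : f (u+1+1) 0 = 0 := by
        rw [h.2 _ _ (by unfold inR; omega)]; simp only [sent]
        rw [if_neg (by omega), if_neg (by omega)]
      rw [G_succ, ← ihu (by omega), G_zero, if_neg (by omega)]
      simp [Aw, z'] at this ⊢
      field_simp
  | succ v ihv =>
    intro hv u
    induction u with
    | zero =>
      intro hu
      have := h.S_pos hB (u := 1) (v := v+1+1) ⟨by omega, by omega, by omega, by omega⟩
      have z : f 0 (v+1+1) = 0 := by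
        rw [h.2 _ _ (by unfold inR; omega)]; simp only [sent]
        rw [if_neg (by omega), if_neg (by omega)]
      rw [G_succ, G_zero', ← ihv (by omega) 0 hu]
      simp [Aw, z] at this ⊢
      field_simp
    | succ u ihu =>
      intro hu
      have := h.S_pos hB (u := u+1+1) (v := v+1+1) ⟨by omega, by omega, by omega, by omega⟩
      rw [G_succ, ← ihu (by omega), ← ihv (by omega) _ hu]
      simp [Aw] at this ⊢
      field_simp

lemma green {a q : ℕ} (hq : 1 ≤ q) (w g : ℕ → ℕ → ℝ)
    (hw : ∀ u v, inR a q u v → 0 < w u v)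
    (hg : ∀ u v, inR a q u v → g u v = w u v * (g (u+1) v + g u (v+1)))
    (g1 : g (a+1) q = 1) (g2 : ∀ v, v < q → g (a+1) v = 0) (g3 : ∀ u, g u (q+1) = 0)
    (i : ℕ) (hi : 1 ≤ i) (hia : i ≤ a) : G w i a q = g i 1 := by
  have key : ∀ v, v < q → ∀ n, n ≤ a →
      ∑ u ∈ Finset.range n, G w i (u+1) (v+1) * g (u+1) (v+1+1) + G w i n (v+1) * g (n+1) (v+1)
      = ∑ u ∈ Finset.range n, G w i (u+1) v * g (u+1) (v+1) := by
    intro v hv n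
    induction n with
    | zero => intro _; simp [G_zero']
    | succ n ih =>
      intro hn
      rw [Finset.sum_range_succ, Finset.sum_range_succ, ← ih (by omega)]
      have e1 := G_succ w i n v
      have hin : inR a q (n+1) (v+1) := ⟨by omega, by omega, by omega, by omega⟩
      have e2 := hg (n+1) (v+1) hin
      have := hw _ _ hin
      have e3 : G w i (n+1) v = G w i (n+1) (v+1) / w (n+1) (v+1) - G w i n (v+1) := by
        rw [e1]; field_simp; ring
      rw [e3, e2]
      field_simp; ring
  have E : ∀ v, v < q → ∑ u ∈ Finset.range a, G w i (u+1) v * g (u+1) (v+1) = g i 1 := by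
    intro v
    induction v with
    | zero =>
      intro _
      rw [Finset.sum_eq_single (i-1)]
      · rw [G_zero, if_pos (by omega), Nat.sub_add_cancel hi, one_mul]
      · intro b _ hb
        rw [G_zero, if_neg (by omega), zero_mul]
      · intro hh; simp at hh; omega
    | succ v ih =>
      intro hv
      rw [← ih (by omega), ← key v (by omega) a le_rfl, g2 _ hv]
      simp
  obtain ⟨v, rfl⟩ : ∃ v, q = v + 1 := ⟨q - 1, by omega⟩
  have h1 := key v (by omega) a le_rfl
  rw [E v (by omega)] at h1
  rw [← h1, g1]
  simp [g3]

section recip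
variable {a q : ℕ} {B : ℝ} {F : ℕ → ℕ → ℕ → ℝ}

lemma Dw_Aw (hB : 0 < B) (hG : ∀ l, Good a q B (F l)) (hR : ∀ l, Row a q (F l) (F (l+1)))
    (l u v : ℕ) (hi : inR a q u v) : Dw (F (l+1)) u v = Aw (F l) u v := by
  have r := hR l u v hi
  have p1 := (hG l).1 u v hi
  have p2 := (hG (l+1)).1 u v hi
  have p3 := (hG l).S_pos hB hi
  have p4 := (hG (l+1)).P_pos hB hi
  unfold Dw Aw
  rw [div_eq_div_iff p2.ne' p3.ne', mul_comm, ← r]; ring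

lemma chain (hB : 0 < B) (hq : 1 ≤ q) (hG : ∀ l, Good a q B (F l))
    (hR : ∀ l, Row a q (F l) (F (l+1))) (l u n : ℕ) (h : u + n ≤ a) :
    G (Aw (F l)) 1 u q = G (Aw (F (l+n))) (1+n) (u+n) q := by
  induction n with
  | zero => rfl
  | succ n ih =>
    rw [ih (by omega), ← G_congr a q _ _ (Dw_Aw hB hG hR (l+n)) _ q le_rfl _ (by omega),
      conv2 hB (hG _) _ (by omega) hq _ (by omega)]
    rfl

lemma edge (hB : 0 < B) (hq : 1 ≤ q) (hG : ∀ l, Good a q B (F l))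
    (hR : ∀ l, Row a q (F l) (F (l+1))) (l u : ℕ) (h1 : 1 ≤ u) (h2 : u ≤ a) :
    F l u q = B * (F (l + (a + 1 - u)) (a+1-u) 1)⁻¹ := by
  obtain ⟨u, rfl⟩ : ∃ v, u = v + 1 := ⟨u - 1, by omega⟩
  obtain ⟨v, rfl⟩ : ∃ v, q = v + 1 := ⟨q - 1, by omega⟩
  rw [F_eq_G hB (hG l) v (by omega) u (by omega), chain hB hq hG hR l (u+1) (a - (u+1)) (by omega)]
  have e1 : u + 1 + (a - (u+1)) = a := by omega
  have e2 : a + 1 - (u+1) = 1 + (a - (u+1)) := by omega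
  rw [e1, e2]
  generalize hn : a - (u+1) = n
  have e3 : l + (1 + n) = l + n + 1 := by omega
  rw [e3]
  refine green hq _ (fun x y => B * (F (l+n+1) x y)⁻¹) ?_ ?_ ?_ ?_ ?_ (1+n) (by omega) (by omega)
  · intro x y hi
    exact div_pos ((hG _).1 _ _ hi) ((hG _).S_pos hB hi)
  · intro x y hi
    rw [← Dw_Aw hB hG hR _ _ _ hi]
    have p2 := (hG (l+n+1)).1 x y hi
    have p4 := (hG (l+n+1)).P_pos hB hi
    simp only [Dw]
    rw [← mul_add]
    generalize (F (l + n + 1) (x + 1) y)⁻¹ + (F (l + n + 1) x (y + 1))⁻¹ = Q at *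
    field_simp
  · beta_reduce
    rw [(hG _).2 _ _ (by unfold inR; omega)]; unfold sent
    rw [if_neg (by omega), if_pos ⟨rfl, rfl⟩]
    field_simp
  · intro y hy
    beta_reduce
    rw [(hG _).2 _ _ (by unfold inR; omega)]; simp only [sent]
    rw [if_neg (by omega), if_neg (by omega)]
    simp
  · intro y
    beta_reduce
    rw [(hG _).2 _ _ (by unfold inR; omega)]; simp only [sent]
    rw [if_neg (by omega), if_neg (by omega)]
    simp

lemma sent_recip (hB : 0 < B) (hG : ∀ l, Good a q B (F l)) (l m u v u' v' : ℕ)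
    (hu : u + u' = a + 1) (hv : v + v' = q + 1) (hn : ¬ inR a q u v) :
    F m u' v' = B * (F l u v)⁻¹ := by
  rw [(hG _).2 _ _ hn, (hG _).2 u' v' (by unfold inR at *; omega)]
  unfold sent
  by_cases h1 : u = 0 ∧ v = 1
  · rw [if_pos h1, if_neg (by omega), if_pos (by omega)]; simp
  · by_cases h2 : u = a + 1 ∧ v = q
    · rw [if_neg h1, if_pos h2, if_pos (by omega)]; field_simp
    · rw [if_neg h1, if_neg h2, if_neg (by omega), if_neg (by omega)]; simp

lemma recip_aux (hB : 0 < B) (hq : 1 ≤ q) (hG : ∀ l, Good a q B (F l))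
    (hR : ∀ l, Row a q (F l) (F (l+1))) : ∀ n, ∀ l m u v u' v' : ℕ, v' ≤ n →
    (u + u' = a + 1) → v + v' = q + 1 → 1 ≤ v → (m + 1 = l + u' + v' ∨ ¬ inR a q u v) →
    F m u' v' = B * (F l u v)⁻¹ := by
  intro n
  induction n with
  | zero =>
    intro l m u v u' v' hv' hu hv hv1 hm
    exact sent_recip hB hG l m u v u' v' hu hv (by unfold inR; omega)
  | succ n ih =>
    intro l m u v u' v' hv' hu hv hv1 hm
    by_cases hi : inR a q u v
    swap
    · exact sent_recip hB hG l m u v u' v' hu hv hi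
    have hm : m + 1 = l + u' + v' := by tauto
    obtain ⟨i1, i2, i3, i4⟩ := id hi
    have hi' : inR a q u' v' := by unfold inR; omega
    by_cases h1 : v' = 1
    · subst h1
      have := edge hB hq hG hR l u i1 i2
      have e : a + 1 - u = u' := by omega
      have e' : l + u' = m := by omega
      have e'' : q = v := by omega
      rw [e, e', e''] at this
      rw [this]
      have := (hG m).1 _ _ hi'
      field_simp
    -- pivot at (u, v+1), times l, l+1; dual (u', v'-1) at m-1, m
    obtain ⟨w, rfl⟩ : ∃ w, v' = w + 1 := ⟨v' - 1, by omega⟩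
    obtain ⟨p, rfl⟩ : ∃ p, m = p + 1 := ⟨m - 1, by omega⟩
    obtain ⟨x, rfl⟩ : ∃ p, u = p + 1 := ⟨u - 1, by omega⟩
    obtain ⟨x', rfl⟩ : ∃ p, u' = p + 1 := ⟨u' - 1, by omega⟩
    have j1 : inR a q (x+1) (v+1) := by unfold inR; omega
    have j2 : inR a q (x'+1) w := by unfold inR; omega
    have r1 := hR l _ _ j1
    have r2 := hR p _ _ j2
    have a1 := ih l p (x+1) (v+1) (x'+1) w (by omega) (by omega) (by omega) (by omega) (by omega)
    have a2 := ih (l+1) (p+1) (x+1) (v+1) (x'+1) w (by omega) (by omega) (by omega) (by omega) (by omega)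
    have a3 := ih (l+1) p (x+1+1) (v+1) x' w (by omega) (by omega) (by omega) (by omega) (by omega)
    have a4 := ih (l+1) p (x+1) (v+1+1) (x'+1) (w-1) (by omega) (by omega) (by omega) (by omega)
      (by left; omega)
    have a5 := ih l (p+1) x (v+1) (x'+1+1) w (by omega) (by omega) (by omega) (by omega) (by omega)
    simp only [Nat.add_sub_cancel] at r1 r2
    rw [a1, a2, a3, a4, a5] at r2
    have p1 := (hG l).1 _ _ j1
    have p2 := (hG (l+1)).1 _ _ j1
    have p3 := (hG (l+1)).P_pos hB j1
    have p4 := (hG (p+1)).P_pos hB j2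
    have p5 := (hG l).1 _ _ hi
    have p6 := (hG (p+1)).1 _ _ hi'
    rw [a5] at p4
    rw [← mul_add] at r2
    generalize (F (l+1) (x+1+1) (v+1))⁻¹ + (F (l+1) (x+1) (v+1+1))⁻¹ = Q at *
    generalize F l x (v+1) = S0 at *
    generalize F l (x+1) v = X at *
    generalize F (p+1) (x'+1) (w+1) = Y at *
    generalize F l (x+1) (v+1) = f0 at *
    generalize F (l+1) (x+1) (v+1) = f1 at *
    have c1 : Q * (f1 * f0) = S0 + X := by rw [r1]; field_simp
    have c2 : B * ((B * S0⁻¹)⁻¹ + Y⁻¹) = Q * (f1 * f0) := by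
      generalize (B * S0⁻¹)⁻¹ + Y⁻¹ = Z at *
      field_simp at r2
      linarith
    rw [c1, mul_inv, inv_inv, mul_add, ← mul_assoc, mul_inv_cancel₀ hB.ne', one_mul] at c2
    have : B * Y⁻¹ = X := by linarith
    rw [← this]
    field_simp

end recip

noncomputable def step (a q : ℕ) (B : ℝ) (f : ℕ → ℕ → ℝ) (u v : ℕ) : ℝ :=
  if h : inR a q u v then
    (f (u-1) v + f u (v-1)) * ((step a q B f (u+1) v)⁻¹ + (step a q B f u (v+1))⁻¹)⁻¹ / f u v
  else sent a q B u v
termination_by (a + 1 - u) + (q + 1 - v)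
decreasing_by all_goals (unfold inR at h; omega)

lemma step_good {a q : ℕ} {B : ℝ} (hB : 0 < B) {f : ℕ → ℕ → ℝ} (h : Good a q B f) :
    Good a q B (step a q B f) := by
  have out : ∀ u v, ¬ inR a q u v → step a q B f u v = sent a q B u v := by
    intro u v hn
    rw [step, dif_neg hn]
  refine ⟨?_, out⟩
  have : ∀ n u v, (a + 1 - u) + (q + 1 - v) ≤ n → inR a q u v → 0 < step a q B f u v := by
    intro n
    induction n with
    | zero => intro u v hn hi; unfold inR at hi; omega
    | succ n ih =>
      intro u v hn hi
      rw [step, dif_pos hi]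
      refine div_pos (mul_pos (h.S_pos hB hi) (inv_pos.2 ?_)) (h.1 _ _ hi)
      obtain ⟨h1, h2, h3, h4⟩ := id hi
      have n1 : 0 ≤ (step a q B f (u+1) v)⁻¹ := by
        rw [inv_nonneg]
        by_cases hh : inR a q (u+1) v
        · exact (ih _ _ (by omega) hh).le
        · rw [out _ _ hh]; exact sent_nonneg hB _ _
      have n2 : 0 ≤ (step a q B f u (v+1))⁻¹ := by
        rw [inv_nonneg]
        by_cases hh : inR a q u (v+1)
        · exact (ih _ _ (by omega) hh).le
        · rw [out _ _ hh]; exact sent_nonneg hB _ _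
      by_cases hv : v = q
      · by_cases hu : u = a
        · have : 0 < (step a q B f (u+1) v)⁻¹ := by
            rw [out (u+1) v (by unfold inR; omega)]
            unfold sent
            rw [if_neg (by omega), if_pos (by omega)]; exact inv_pos.2 hB
          linarith
        · have := inv_pos.2 (ih (u+1) v (by omega) ⟨by omega, by omega, by omega, by omega⟩)
          linarith
      · have := inv_pos.2 (ih u (v+1) (by omega) ⟨by omega, by omega, by omega, by omega⟩)
        linarith
  exact fun u v hi => this _ u v le_rfl hi

lemma step_row {a q : ℕ} {B : ℝ} {f : ℕ → ℕ → ℝ} (h : Good a q B f) :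
    Row a q f (step a q B f) := by
  intro u v hi
  have := h.1 u v hi
  rw [step, dif_pos hi]
  field_simp

def Asy (g : ℝ → ℝ) (n : ℤ) : Prop :=
  ∃ c C : ℝ, 0 < c ∧ 0 < C ∧ ∀ t : ℝ, 1 ≤ t → c * t ^ n ≤ g t ∧ g t ≤ C * t ^ n

lemma Asy.mul {g h : ℝ → ℝ} {n m : ℤ} (hg : Asy g n) (hh : Asy h m) :
    Asy (fun t => g t * h t) (n + m) := by
  obtain ⟨c, C, hc, hC, H⟩ := hg
  obtain ⟨c', C', hc', hC', H'⟩ := hh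
  refine ⟨c * c', C * C', by positivity, by positivity, fun t ht => ?_⟩
  have t0 : 0 < t := by linarith
  obtain ⟨h1, h2⟩ := H t ht
  obtain ⟨h3, h4⟩ := H' t ht
  have p1 : 0 < t ^ n := by positivity
  have p2 : 0 < t ^ m := by positivity
  have q1 : 0 < c * t ^ n := by positivity
  have q2 : 0 < c' * t ^ m := by positivity
  rw [zpow_add₀ t0.ne']
  constructor
  · calc _ = (c * t ^ n) * (c' * t ^ m) := by ring
      _ ≤ _ := mul_le_mul h1 h3 q2.le (by linarith)
  · calc g t * h t ≤ (C * t ^ n) * (C' * t ^ m) := by gcongr; linarith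
      _ = _ := by ring

lemma Asy.inv {g : ℝ → ℝ} {n : ℤ} (hg : Asy g n) : Asy (fun t => (g t)⁻¹) (-n) := by
  obtain ⟨c, C, hc, hC, H⟩ := hg
  refine ⟨C⁻¹, c⁻¹, by positivity, by positivity, fun t ht => ?_⟩
  have t0 : 0 < t := by linarith
  obtain ⟨h1, h2⟩ := H t ht
  have p1 : 0 < t ^ n := by positivity
  have q1 : 0 < c * t ^ n := by positivity
  rw [zpow_neg, ← mul_inv, ← mul_inv]
  constructor
  · exact inv_anti₀ (by linarith) h2
  · exact inv_anti₀ q1 h1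

lemma Asy.add {g h : ℝ → ℝ} {n m : ℤ} (hg : Asy g n) (hh : Asy h m) :
    Asy (fun t => g t + h t) (max n m) := by
  obtain ⟨c, C, hc, hC, H⟩ := hg
  obtain ⟨c', C', hc', hC', H'⟩ := hh
  refine ⟨min c c', C + C', by positivity, by positivity, fun t ht => ?_⟩
  have t0 : 0 < t := by linarith
  obtain ⟨h1, h2⟩ := H t ht
  obtain ⟨h3, h4⟩ := H' t ht
  have p1 : 0 < t ^ n := by positivity
  have p2 : 0 < t ^ m := by positivity
  have q1 : 0 < c * t ^ n := by positivity
  have q2 : 0 < c' * t ^ m := by positivity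
  have l1 : t ^ n ≤ t ^ (max n m) := zpow_le_zpow_right₀ ht (le_max_left _ _)
  have l2 : t ^ m ≤ t ^ (max n m) := zpow_le_zpow_right₀ ht (le_max_right _ _)
  constructor
  · rcases max_choice n m with e | e
    · rw [e]
      have : min c c' * t ^ n ≤ c * t ^ n := by gcongr; exact min_le_left _ _
      linarith
    · rw [e]
      have : min c c' * t ^ m ≤ c' * t ^ m := by gcongr; exact min_le_right _ _
      linarith
  · have a1 : C * t ^ n ≤ C * t ^ (max n m) := by gcongr
    have a2 : C' * t ^ m ≤ C' * t ^ (max n m) := by gcongr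
    linarith

lemma Asy.pow (n : ℤ) : Asy (fun t => t ^ n) n :=
  ⟨1, 1, one_pos, one_pos, fun t _ => by simp⟩

lemma Asy.congr {g h : ℝ → ℝ} {n m : ℤ} (hg : Asy g n) (e : n = m)
    (H : ∀ t : ℝ, 1 ≤ t → h t = g t) : Asy h m := by
  subst e
  obtain ⟨c, C, hc, hC, K⟩ := hg
  exact ⟨c, C, hc, hC, fun t ht => by rw [H t ht]; exact K t ht⟩

lemma Asy.le {g : ℝ → ℝ} {n m : ℤ} (hg : Asy g n) (hh : Asy g m) : n ≤ m := by
  obtain ⟨c, C, hc, hC, H⟩ := hg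
  obtain ⟨c', C', hc', hC', H'⟩ := hh
  by_contra hlt
  push Not at hlt
  obtain ⟨t, ht⟩ : ∃ t : ℝ, max 1 (C' / c) < t := exists_gt _
  have ht1 : 1 ≤ t := ((le_max_left _ _).trans_lt ht).le
  have ht2 : C' / c < t := (le_max_right _ _).trans_lt ht
  have t0 : 0 < t := by linarith
  have h1 := (H t ht1).1
  have h2 := (H' t ht1).2
  have p2 : 0 < t ^ m := by positivity
  have l1 : t ^ (m+1) ≤ t ^ n := zpow_le_zpow_right₀ ht1 (by omega)
  rw [zpow_add₀ t0.ne', zpow_one] at l1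
  rw [div_lt_iff₀ hc] at ht2
  have : c * (t ^ m * t) ≤ C' * t ^ m := by
    calc _ ≤ c * t ^ n := by gcongr
      _ ≤ _ := h1.trans h2
  have : t ^ m * C' < t ^ m * (t * c) := by gcongr
  nlinarith

section trop
variable {a q : ℕ} {b : ℤ} {L : ℕ → ℕ → ℕ → ℤ}

noncomputable def FF (a q : ℕ) (b : ℤ) (L0 : ℕ → ℕ → ℤ) (t : ℝ) : ℕ → ℕ → ℕ → ℝ
  | 0 => fun u v => if inR a q u v then t ^ (L0 u v) else sent a q (t ^ b) u v
  | l + 1 => step a q (t ^ b) (FF a q b L0 t l)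

lemma FF_good (L0 : ℕ → ℕ → ℤ) {t : ℝ} (ht : 1 ≤ t) (l : ℕ) :
    Good a q (t ^ b) (FF a q b L0 t l) := by
  have t0 : 0 < t := by linarith
  induction l with
  | zero =>
    refine ⟨fun u v hi => ?_, fun u v hi => ?_⟩
    · unfold FF
      rw [if_pos hi]; positivity
    · unfold FF
      rw [if_neg hi]
  | succ l ih => exact step_good (by positivity) ih

lemma FF_asy (ha : 1 ≤ a) (hq : 1 ≤ q)
    (hL : ∀ l u v, 0 ≤ L l u v ∧ L l u v ≤ b)
    (s1 : ∀ l v, L l 0 v = 0) (s2 : ∀ l u, u ≤ a → L l u 0 = 0)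
    (s3 : ∀ l v, L l (a+1) v = b) (s4 : ∀ l u, 1 ≤ u → L l u (q+1) = b)
    (hR : ∀ l u v, inR a q u v → L (l+1) u v + L l u v =
      max (L l (u-1) v) (L l u (v-1)) + min (L (l+1) (u+1) v) (L (l+1) u (v+1)))
    (l : ℕ) : ∀ u v, inR a q u v → Asy (fun t => FF a q b (L 0) t l u v) (L l u v) := by
  induction l with
  | zero =>
    intro u v hi
    refine (Asy.pow (L 0 u v)).congr rfl (fun t _ => ?_)
    unfold FF
    rw [if_pos hi]
  | succ l ihl =>
    have main : ∀ n u v, (a + 1 - u) + (q + 1 - v) ≤ n → inR a q u v →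
        Asy (fun t => FF a q b (L 0) t (l+1) u v) (L (l+1) u v) := by
      intro n
      induction n with
      | zero => intro u v hn hi; unfold inR at hi; omega
      | succ n ih =>
        intro u v hn hi
        obtain ⟨h1, h2, h3, h4⟩ := id hi
        have hS : Asy (fun t => FF a q b (L 0) t l (u-1) v + FF a q b (L 0) t l u (v-1))
            (max (L l (u-1) v) (L l u (v-1))) := by
          by_cases hu : u = 1
          · by_cases hv : v = 1
            · subst hu hv
              refine (Asy.pow 0).congr ?_ (fun t ht => ?_)
              · simp [s1, s2 l 1 h2]
              · rw [(FF_good _ ht l).2 _ _ (by unfold inR; omega),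
                  (FF_good _ ht l).2 _ _ (by unfold inR; omega)]
                unfold sent
                rw [if_pos (by omega), if_neg (by omega), if_neg (by omega)]; simp
            · subst hu
              refine (ihl 1 (v-1) ⟨by omega, by omega, by omega, by omega⟩).congr ?_ (fun t ht => ?_)
              · simp [s1, (hL l 1 (v-1)).1]
              · rw [(FF_good _ ht l).2 (1-1) _ (by unfold inR; omega)]
                unfold sent
                rw [if_neg (by omega), if_neg (by omega), zero_add]
          · by_cases hv : v = 1
            · subst hv
              refine (ihl (u-1) 1 ⟨by omega, by omega, by omega, by omega⟩).congr ?_ (fun t ht => ?_)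
              · simp [s2 l u h2, (hL l (u-1) 1).1]
              · rw [(FF_good _ ht l).2 u (1-1) (by unfold inR; omega)]
                unfold sent
                rw [if_neg (by omega), if_neg (by omega), add_zero]
            · exact (ihl (u-1) v ⟨by omega, by omega, by omega, by omega⟩).add
                (ihl u (v-1) ⟨by omega, by omega, by omega, by omega⟩)
        have hP : Asy (fun t => ((FF a q b (L 0) t (l+1) (u+1) v)⁻¹ +
            (FF a q b (L 0) t (l+1) u (v+1))⁻¹)⁻¹)
            (min (L (l+1) (u+1) v) (L (l+1) u (v+1))) := by
          by_cases hu : u = a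
          · by_cases hv : v = q
            · subst hu hv
              refine (Asy.pow b).congr ?_ (fun t ht => ?_)
              · simp [s3, s4 _ _ h1]
              · rw [(FF_good _ ht (l+1)).2 _ _ (by unfold inR; omega),
                  (FF_good _ ht (l+1)).2 _ _ (by unfold inR; omega)]
                unfold sent
                rw [if_neg (by omega), if_pos (by omega), if_neg (by omega), if_neg (by omega)]; simp
            · subst hu
              refine (ih u (v+1) (by omega) ⟨by omega, by omega, by omega, by omega⟩).congr ?_
                (fun t ht => ?_)
              · simp [s3, (hL (l+1) u (v+1)).2]
              · rw [(FF_good _ ht (l+1)).2 (u+1) _ (by unfold inR; omega)]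
                unfold sent
                rw [if_neg (by omega), if_neg (by omega), inv_zero, zero_add, inv_inv]
          · by_cases hv : v = q
            · subst hv
              refine (ih (u+1) v (by omega) ⟨by omega, by omega, by omega, by omega⟩).congr ?_
                (fun t ht => ?_)
              · simp [s4 _ _ h1, (hL (l+1) (u+1) v).2]
              · rw [(FF_good _ ht (l+1)).2 u (v+1) (by unfold inR; omega)]
                unfold sent
                rw [if_neg (by omega), if_neg (by omega), inv_zero, add_zero, inv_inv]
            · refine ((ih (u+1) v (by omega) ⟨by omega, by omega, by omega, by omega⟩).inv.add
                (ih u (v+1) (by omega) ⟨by omega, by omega, by omega, by omega⟩).inv).inv.congr ?_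
                (fun t ht => rfl)
              rw [max_neg_neg, neg_neg]
        refine ((hS.mul hP).mul (ihl u v hi).inv).congr ?_ (fun t ht => ?_)
        · have := hR l u v hi
          linarith
        · have hg := FF_good (a := a) (q := q) (b := b) (L 0) ht l
          have r := step_row hg u v hi
          have := hg.1 u v hi
          rw [← div_eq_mul_inv, eq_div_iff this.ne']
          exact r
    exact fun u v hi => main _ u v le_rfl hi

theorem trop_recip (ha : 1 ≤ a) (hq : 1 ≤ q)
    (hL : ∀ l u v, 0 ≤ L l u v ∧ L l u v ≤ b)
    (s1 : ∀ l v, L l 0 v = 0) (s2 : ∀ l u, u ≤ a → L l u 0 = 0)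
    (s3 : ∀ l v, L l (a+1) v = b) (s4 : ∀ l u, 1 ≤ u → L l u (q+1) = b)
    (hR : ∀ l u v, inR a q u v → L (l+1) u v + L l u v =
      max (L l (u-1) v) (L l u (v-1)) + min (L (l+1) (u+1) v) (L (l+1) u (v+1)))
    (l m u v u' v' : ℕ) (hi : inR a q u v) (hu : u + u' = a + 1) (hv : v + v' = q + 1)
    (hm : m + 1 = l + u' + v') : L m u' v' + L l u v = b := by
  have hi' : inR a q u' v' := by unfold inR at *; omega
  have A1 := FF_asy ha hq hL s1 s2 s3 s4 hR l u v hi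
  have A2 := FF_asy ha hq hL s1 s2 s3 s4 hR m u' v' hi'
  have A3 : Asy (fun t => FF a q b (L 0) t m u' v') (b + -L l u v) := by
    refine ((Asy.pow b).mul A1.inv).congr rfl (fun t ht => ?_)
    have t0 : 0 < t := by linarith
    exact recip_aux (B := t ^ b) (by positivity) hq (fun l => FF_good _ ht l)
      (fun l => step_row (FF_good _ ht l)) _ l m u v u' v' le_rfl hu hv hi.2.2.1 (Or.inl hm)
  have := A2.le A3
  have := A3.le A2
  linarith
end trop

structure GT (a b k : ℕ) (N : ℤ → ℕ → ℤ) : Prop where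
  nn : ∀ d r, 0 ≤ N d r
  le : ∀ d r, N d r ≤ b
  top : ∀ d, N d 0 = b
  bot : ∀ d r, a < r → N d r = 0
  mono : ∀ d r, N d r ≤ N (d+1) r
  inter : ∀ d r, N (d+1) (r+1) ≤ N d r
  lo : ∀ d r, d ≤ 0 → 1 ≤ r → N d r = 0
  hi : ∀ d r, (k:ℤ) ≤ d → r ≤ a → N d r = b

def tog (a : ℕ) (j : ℤ) (N : ℤ → ℕ → ℤ) : ℤ → ℕ → ℤ := fun d r =>
  if d = j ∧ 1 ≤ r ∧ r ≤ a then
    min (N (j+1) r) (N (j-1) (r-1)) + max (N (j+1) (r+1)) (N (j-1) r) - N j r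
  else N d r

lemma tog_ne (a : ℕ) (j : ℤ) (N : ℤ → ℕ → ℤ) (d : ℤ) (r : ℕ) (h : d ≠ j) :
    tog a j N d r = N d r := by
  unfold tog; rw [if_neg (by tauto)]

lemma tog_tog (a : ℕ) (j : ℤ) (N : ℤ → ℕ → ℤ) : tog a j (tog a j N) = N := by
  funext d r
  by_cases h : d = j ∧ 1 ≤ r ∧ r ≤ a
  · conv_lhs => unfold tog
    rw [if_pos h]
    have e : ∀ r, (if j + 1 = j ∧ 1 ≤ r ∧ r ≤ a then
      min (N (j+1) r) (N (j-1) (r-1)) + max (N (j+1) (r+1)) (N (j-1) r) - N j r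
      else N (j+1) r) = N (j+1) r := fun r => if_neg (by omega)
    have e' : ∀ r, (if j - 1 = j ∧ 1 ≤ r ∧ r ≤ a then
      min (N (j+1) r) (N (j-1) (r-1)) + max (N (j+1) (r+1)) (N (j-1) r) - N j r
      else N (j-1) r) = N (j-1) r := fun r => if_neg (by omega)
    simp only [e, e']
    rw [h.1, if_pos (by simpa using h.2)]; ring
  · conv_lhs => unfold tog
    rw [if_neg h, if_neg h]

lemma GT.tog {a b k : ℕ} {N : ℤ → ℕ → ℤ} (h : GT a b k N) (j : ℤ) (h1 : 1 ≤ j) (h2 : j + 1 ≤ k) :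
    GT a b k (tog a j N) := by
  have V : ∀ r, 1 ≤ r → r ≤ a → N (j+1) (r+1) ≤ Antip.tog a j N j r ∧ N (j-1) r ≤ Antip.tog a j N j r ∧
      Antip.tog a j N j r ≤ N (j+1) r ∧ Antip.tog a j N j r ≤ N (j-1) (r-1) := by
    intro r hr1 hr2
    have e : Antip.tog a j N j r =
      min (N (j+1) r) (N (j-1) (r-1)) + max (N (j+1) (r+1)) (N (j-1) r) - N j r := by
      unfold Antip.tog; rw [if_pos ⟨rfl, hr1, hr2⟩]
    have a1 := h.mono j r
    have a2 := h.mono (j-1) r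
    have a3 := h.inter j r
    have a4 := h.inter (j-1) (r-1)
    rw [Nat.sub_add_cancel hr1] at a4
    rw [sub_add_cancel] at a2 a4
    rw [e]; omega
  have W : ∀ r, ¬ (1 ≤ r ∧ r ≤ a) → ∀ d, Antip.tog a j N d r = N d r := by
    intro r hr d
    unfold Antip.tog; rw [if_neg (by tauto)]
  have U : ∀ d r, d ≠ j → Antip.tog a j N d r = N d r := fun d r hd => tog_ne a j N d r hd
  have Z : ∀ d r, d = j ∧ (1 ≤ r ∧ r ≤ a) ∨ Antip.tog a j N d r = N d r := by
    intro d r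
    by_cases hd : d = j
    · by_cases hr : (1 ≤ r ∧ r ≤ a)
      · exact Or.inl ⟨hd, hr⟩
      · exact Or.inr (W r hr d)
    · exact Or.inr (U d r hd)
  refine ⟨?_, ?_, ?_, ?_, ?_, ?_, ?_, ?_⟩
  · intro d r
    rcases Z d r with ⟨rfl, hr⟩ | e
    · have := V r hr.1 hr.2; have := h.nn (d-1) r; omega
    · rw [e]; exact h.nn d r
  · intro d r
    rcases Z d r with ⟨rfl, hr⟩ | e
    · have := V r hr.1 hr.2; have := h.le (d+1) r; omega
    · rw [e]; exact h.le d r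
  · intro d; rw [W _ (by omega)]; exact h.top d
  · intro d r hr; rw [W _ (by omega)]; exact h.bot d r hr
  · intro d r
    rcases Z d r with ⟨rfl, hr⟩ | e
    · rw [U (d+1) r (by omega)]; exact (V r hr.1 hr.2).2.2.1
    · rw [e]
      rcases Z (d+1) r with ⟨e', hr⟩ | e'
      · have := (V r hr.1 hr.2).2.1
        rw [e']; rwa [show j - 1 = d by omega] at this
      · rw [e']; exact h.mono d r
  · intro d r
    rcases Z d r with ⟨rfl, hr⟩ | e
    · rw [U (d+1) _ (by omega)]; exact (V r hr.1 hr.2).1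
    · rw [e]
      rcases Z (d+1) (r+1) with ⟨e', hr⟩ | e'
      · have := (V (r+1) hr.1 hr.2).2.2.2
        rw [e']; rwa [show j - 1 = d by omega, Nat.add_sub_cancel] at this
      · rw [e']; exact h.inter d r
  · intro d r hd hr; rw [U _ _ (by omega)]; exact h.lo d r hd hr
  · intro d r hd hr; rw [U _ _ (by omega)]; exact h.hi d r hd hr

lemma GT.zero {a b k : ℕ} {N : ℤ → ℕ → ℤ} (h : GT a b k N) :
    ∀ (r : ℕ) (d : ℤ), 1 ≤ r → d < r → N d r = 0 := by
  intro r
  induction r with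
  | zero => intro d h1; omega
  | succ r ih =>
    intro d _ hd
    by_cases hr : r = 0
    · subst hr; exact h.lo _ _ (by push_cast at hd; omega) (by omega)
    · have := h.inter (d-1) r
      rw [ih (d-1) (by omega) (by push_cast at hd; omega), sub_add_cancel] at this
      exact le_antisymm this (h.nn _ _)

lemma GT.full {a b k : ℕ} {N : ℤ → ℕ → ℤ} (h : GT a b k N) :
    ∀ (n r : ℕ) (d : ℤ), r + n = a → (k:ℤ) ≤ d + n → N d r = b := by
  intro n
  induction n with
  | zero => intro r d h1 h2; exact h.hi _ _ (by simpa using h2) (by omega)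
  | succ n ih =>
    intro r d h1 h2
    have := h.inter d r
    rw [ih (r+1) (d+1) (by omega) (by push_cast at h2; omega)] at this
    exact le_antisymm (h.le _ _) this

def PP (a n : ℕ) (N : ℤ → ℕ → ℤ) : ℤ → ℕ → ℤ :=
  (List.range n).foldl (fun S (i : ℕ) => tog a ((i : ℤ) + 1) S) N

lemma PP_succ (a n : ℕ) (N) : PP a (n+1) N = tog a ((n:ℤ)+1) (PP a n N) := by
  unfold PP; rw [List.range_succ, List.foldl_append]; rfl

lemma PP_zero (a : ℕ) (N) : PP a 0 N = N := rfl

lemma PP_GT {a b k : ℕ} {N} (h : GT a b k N) (n : ℕ) (hn : n + 1 ≤ k) : GT a b k (PP a n N) := by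
  induction n with
  | zero => exact h
  | succ n ih => rw [PP_succ]; exact (ih (by omega)).tog _ (by omega) (by omega)

lemma PP_surj {a b k : ℕ} (n : ℕ) (hn : n + 1 ≤ k) : ∀ N, GT a b k N → ∃ N0, GT a b k N0 ∧ PP a n N0 = N := by
  induction n with
  | zero => intro N h; exact ⟨N, h, rfl⟩
  | succ n ih =>
    intro N h
    obtain ⟨N0, h0, e⟩ := ih (by omega) _ (h.tog ((n:ℤ)+1) (by omega) (by omega))
    exact ⟨N0, h0, by rw [PP_succ, e, tog_tog]⟩

lemma PP_above (a n : ℕ) (N) (d : ℤ) (r : ℕ) (h : d ≤ 0 ∨ (n:ℤ) < d) : PP a n N d r = N d r := by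
  induction n with
  | zero => rfl
  | succ n ih =>
    rw [PP_succ, tog_ne _ _ _ _ _ (by push_cast at h; omega), ih (by push_cast at h; omega)]

lemma PP_stable (a n m : ℕ) (N) (d : ℤ) (r : ℕ) (h : d ≤ n) : PP a (n+m) N d r = PP a n N d r := by
  induction m with
  | zero => rfl
  | succ m ih =>
    rw [← add_assoc, PP_succ, tog_ne _ _ _ _ _ (by push_cast; omega), ih]

lemma PP_rel (a k : ℕ) (N) (d : ℤ) (r : ℕ) (h1 : 1 ≤ d) (h2 : d + 1 ≤ k) (hr : 1 ≤ r) (hr2 : r ≤ a) :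
    PP a (k-1) N d r + N d r =
      min (N (d+1) r) (PP a (k-1) N (d-1) (r-1)) + max (N (d+1) (r+1)) (PP a (k-1) N (d-1) r) := by
  obtain ⟨n, rfl⟩ : ∃ n : ℕ, d = (n:ℤ) + 1 := ⟨(d-1).toNat, by omega⟩
  obtain ⟨m, hm⟩ : ∃ m, k - 1 = (n + 1) + m := ⟨k - 1 - (n+1), by omega⟩
  have e : k - 1 = n + (1 + m) := by omega
  have e1 : PP a (k-1) N ((n:ℤ)+1) r = PP a (n+1) N ((n:ℤ)+1) r := by
    rw [hm]; exact PP_stable _ _ _ _ _ _ (by push_cast; omega)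
  have e2 : ∀ r, PP a (k-1) N ((n:ℤ)+1-1) r = PP a n N ((n:ℤ)+1-1) r := by
    intro r
    rw [e]; exact PP_stable _ _ _ _ _ _ (by omega)
  rw [e1, e2, e2, PP_succ]
  unfold tog
  rw [if_pos ⟨rfl, hr, hr2⟩, PP_above a n N ((n:ℤ)+1+1) r (by omega),
    PP_above a n N ((n:ℤ)+1+1) (r+1) (by omega), PP_above a n N ((n:ℤ)+1) r (by omega)]
  ring

section seq
variable {a b k : ℕ} {Ns : ℕ → ℤ → ℕ → ℤ}

lemma seq_recip (ha : 1 ≤ a) (hb : 1 ≤ b) (hG : ∀ i, GT a b k (Ns i))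
    (hR : ∀ i d r, 1 ≤ d → d + 1 ≤ (k:ℤ) → 1 ≤ r → r ≤ a →
      Ns (i+1) d r + Ns i d r =
      min (Ns i (d+1) r) (Ns (i+1) (d-1) (r-1)) + max (Ns i (d+1) (r+1)) (Ns (i+1) (d-1) r))
    (i d r : ℕ) (hi : k ≤ i) (hd : d ≤ k) (hr1 : 1 ≤ r) (hr2 : r ≤ a) :
    Ns i d r + Ns (i+d) ((k:ℤ)-d) (a+1-r) = b := by
  have hak : a ≤ k := by
    by_contra hlt
    have h1 := (hG 0).zero a k ha (by omega)
    have h2 := (hG 0).hi k a le_rfl le_rfl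
    omega
  obtain ⟨q, rfl⟩ : ∃ q, k = a + q := ⟨k - a, by omega⟩
  by_cases c1 : d < r
  · rw [(hG i).zero r d hr1 (by omega), (hG (i+d)).full (r-1) _ _ (by omega) (by omega)]
    simp
  by_cases c2 : q + r ≤ d
  · rw [(hG i).full (a-r) r d (by omega) (by omega),
      (hG (i+d)).zero _ _ (by omega) (by omega)]
    simp
  have hq : 1 ≤ q := by omega
  have key := trop_recip (a := a) (q := q) (b := (b:ℤ))
    (L := fun l u v => Ns (l+q-v) ((a:ℤ)-u+v) (a+1-u)) ha hq
    (fun l u v => ⟨(hG _).nn _ _, (hG _).le _ _⟩)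
    (fun l v => (hG _).bot _ _ (by omega))
    (fun l u hu => (hG _).zero _ _ (by omega) (by push_cast; omega))
    (fun l v => by
      have : a + 1 - (a + 1) = 0 := by omega
      simp only [this]; exact (hG _).top _)
    (fun l u hu => by
      by_cases h : u ≤ a + 1
      · exact (hG _).full (u-1) _ _ (by omega) (by push_cast; omega)
      · have : a + 1 - u = 0 := by omega
        simp only [this]; exact (hG _).top _)
    (fun l u v hin => by
      obtain ⟨h1, h2, h3, h4⟩ := hin
      have := hR (l+q-v) ((a:ℤ)-u+v) (a+1-u) (by omega) (by push_cast; omega) (by omega) (by omega)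
      have e1 : l + 1 + q - v = l + q - v + 1 := by omega
      have e2 : l + q - (v - 1) = l + q - v + 1 := by omega
      have e3 : l + 1 + q - (v+1) = l + q - v := by omega
      have e4 : a + 1 - (u - 1) = a + 1 - u + 1 := by omega
      have e5 : a + 1 - (u + 1) = a + 1 - u - 1 := by omega
      have e6 : (a:ℤ) - ((u - 1 : ℕ):ℤ) + v = (a:ℤ) - u + v + 1 := by omega
      have e7 : (a:ℤ) - u + ((v-1 : ℕ):ℤ) = (a:ℤ) - u + v - 1 := by omega
      have e8 : (a:ℤ) - ((u + 1 : ℕ):ℤ) + v = (a:ℤ) - u + v - 1 := by omega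
      have e9 : (a:ℤ) - u + ((v+1 : ℕ):ℤ) = (a:ℤ) - u + v + 1 := by omega
      simp only [e1, e2, e3, e4, e5, e6, e7, e8, e9]
      rw [this, min_comm, add_comm])
    (i + (d - r + 1) - q) (i + (d - r + 1) - q + r + (q + 1 - (d-r+1)) - 1)
    (a+1-r) (d-r+1) r (q+1-(d-r+1))
    (by unfold inR; omega) (by omega) (by omega) (by omega)
  convert key using 1
  rw [add_comm]
  congr 2 <;> first | omega | (push_cast; omega)
end seq

def Enc (a b : ℕ) (T : Fin a → Fin b → ℤ) (N : ℤ → ℕ → ℤ) : Prop :=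
  ∀ (x : Fin a) (y : Fin b) (d : ℤ), T x y ≤ d ↔ ((y : ℕ) : ℤ) < N d ((x : ℕ) + 1)

lemma card_Ico_fin (b : ℕ) (p s : ℤ) (hp : 0 ≤ p) (hps : p ≤ s) (hs : s ≤ b) :
    ((Finset.univ.filter (fun y : Fin b => p ≤ ((y : ℕ) : ℤ) ∧ ((y : ℕ) : ℤ) < s)).card : ℤ) = s - p := by
  have : (Finset.univ.filter (fun y : Fin b => p ≤ ((y : ℕ) : ℤ) ∧ ((y : ℕ) : ℤ) < s)).card
      = (Finset.Ico p s).card := by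
    refine Finset.card_bij (fun y _ => ((y : ℕ) : ℤ)) ?_ ?_ ?_
    · intro y hy; simpa using hy
    · intro y _ y' _ h
      ext; exact_mod_cast h
    · intro z hz
      simp only [Finset.mem_Ico] at hz
      refine ⟨⟨z.toNat, by omega⟩, ?_, ?_⟩
      · simp only [Finset.mem_filter, Finset.mem_univ, true_and]; omega
      · simp only; omega
  rw [this, Int.card_Ico]; omega

lemma enc_bk {a b k : ℕ} {T : Fin a → Fin b → ℤ} {N : ℤ → ℕ → ℤ} (h : GT a b k N)
    (hE : Enc a b T N) (j : ℤ) : Enc a b (bk a b j T) (tog a j N) := by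
  intro x y d
  have hx := x.2
  generalize hm : max (N (j+1) ((x:ℕ)+1+1)) (N (j-1) ((x:ℕ)+1)) = m
  generalize hM : min (N (j+1) ((x:ℕ)+1)) (N (j-1) ((x:ℕ)+1-1)) = M
  generalize hn : N j ((x:ℕ)+1) = n
  have a1 := h.mono j ((x:ℕ)+1)
  have a2 := h.mono (j-1) ((x:ℕ)+1)
  have a3 := h.inter j ((x:ℕ)+1)
  have a4 := h.inter (j-1) (x:ℕ)
  have a5 := h.inter (j-1) ((x:ℕ)+1)
  have a6 := h.inter j (x:ℕ)
  have a7 := h.le (j+1) ((x:ℕ)+1)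
  have a8 := h.nn (j-1) ((x:ℕ)+1)
  rw [sub_add_cancel] at a2 a4 a5
  have hx1 : (x:ℕ) + 1 - 1 = (x:ℕ) := by omega
  rw [hx1] at hM
  have low : ∀ y' : Fin b, (T x y' = j ∧ ∀ h : (x : ℕ) + 1 < a, T ⟨(x : ℕ) + 1, h⟩ y' ≠ j + 1) ↔
      m ≤ ((y':ℕ):ℤ) ∧ ((y':ℕ):ℤ) < n := by
    intro y'
    have e1 := hE x y' j
    have e2 := hE x y' (j-1)
    by_cases hc : (x:ℕ) + 1 < a
    · have e3 := hE ⟨(x:ℕ)+1, hc⟩ y' (j+1)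
      have e4 := hE ⟨(x:ℕ)+1, hc⟩ y' j
      simp only [hc, forall_true_left] at *
      omega
    · have := h.bot (j+1) ((x:ℕ)+1+1) (by omega)
      simp only [hc, IsEmpty.forall_iff, and_true]
      have : (0:ℤ) ≤ ((y':ℕ):ℤ) := by omega
      omega
  have high : ∀ y' : Fin b, (T x y' = j + 1 ∧ ∀ x' : Fin a, (x' : ℕ) + 1 = (x : ℕ) → T x' y' ≠ j) ↔
      n ≤ ((y':ℕ):ℤ) ∧ ((y':ℕ):ℤ) < M := by
    intro y'
    have e1 := hE x y' j
    have e2 := hE x y' (j+1)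
    by_cases hc : (x:ℕ) = 0
    · have t : N (j-1) (x:ℕ) = b := by rw [hc]; exact h.top (j-1)
      have : ∀ x' : Fin a, (x' : ℕ) + 1 = (x : ℕ) → T x' y' ≠ j := by intro x' hx'; omega
      have hy := y'.2
      rw [and_iff_left this]
      omega
    · have hlt : (x:ℕ) - 1 < a := by omega
      have e3 := hE ⟨(x:ℕ)-1, hlt⟩ y' (j-1)
      have e4 := hE ⟨(x:ℕ)-1, hlt⟩ y' j
      have : (∀ x' : Fin a, (x' : ℕ) + 1 = (x : ℕ) → T x' y' ≠ j) ↔ T ⟨(x:ℕ)-1, hlt⟩ y' ≠ j := by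
        constructor
        · intro H; exact H _ (by simp only; omega)
        · intro H x' hx'
          have : x' = ⟨(x:ℕ)-1, hlt⟩ := by ext; simp only; omega
          rw [this]; exact H
      rw [this]
      simp only at e3 e4
      rw [show (x:ℕ) - 1 + 1 = (x:ℕ) by omega] at e3 e4
      omega
  have ht : tog a j N j ((x:ℕ)+1) = M + m - n := by
    unfold tog
    rw [if_pos ⟨rfl, by omega, by omega⟩, hx1, hM, hm, hn]
  have hmn : m ≤ n := by omega
  have hnM : n ≤ M := by omega
  have e0 := hE x y d
  have ej := hE x y j
  have ej1 := hE x y (j+1)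
  have ejm := hE x y (j-1)
  have lh : ∀ y' : Fin b, ((m ≤ ((y':ℕ):ℤ) ∧ ((y':ℕ):ℤ) < n) ∨ (n ≤ ((y':ℕ):ℤ) ∧ ((y':ℕ):ℤ) < M)) ↔
      (m ≤ ((y':ℕ):ℤ) ∧ ((y':ℕ):ℤ) < M) := by intro y'; omega
  unfold bk
  simp only [low, high, lh]
  by_cases hf : m ≤ ((y:ℕ):ℤ) ∧ ((y:ℕ):ℤ) < M
  · rw [if_pos hf]
    have c1 := card_Ico_fin b n M (by omega) hnM (by omega)
    have c2 := card_Ico_fin b m (((y:ℕ):ℤ)+1) (by omega) (by omega) (by omega)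
    have c3 : (Finset.univ.filter (fun y' : Fin b => (m ≤ ((y':ℕ):ℤ) ∧ ((y':ℕ):ℤ) < M) ∧ y' ≤ y)) =
        (Finset.univ.filter (fun y' : Fin b => m ≤ ((y':ℕ):ℤ) ∧ ((y':ℕ):ℤ) < ((y:ℕ):ℤ) + 1)) := by
      ext y'
      simp only [Finset.mem_filter, Finset.mem_univ, true_and, Fin.le_def]
      omega
    rw [c3]
    by_cases hd : d = j
    · subst hd
      rw [ht]
      split_ifs with hc <;> omega
    · rw [tog_ne _ _ _ _ _ hd, ← e0]
      split_ifs with hc <;> omega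
  · rw [if_neg hf]
    by_cases hd : d = j
    · subst hd
      rw [ht]; omega
    · rw [tog_ne _ _ _ _ _ hd, ← e0]

lemma pro_eq (a b k : ℕ) (T : Fin a → Fin b → ℤ) :
    pro a b k T = (List.range (k - 1)).foldl (fun S (i : ℕ) => bk a b ((i : ℤ) + 1) S) T := by
  unfold pro
  simp [List.foldl_map, List.foldl_flatMap]

lemma enc_pro_aux {a b k : ℕ} {T : Fin a → Fin b → ℤ} {N : ℤ → ℕ → ℤ} (h : GT a b k N)
    (hE : Enc a b T N) (n : ℕ) (hn : n + 1 ≤ k) :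
    Enc a b ((List.range n).foldl (fun S (i : ℕ) => bk a b ((i : ℤ) + 1) S) T) (PP a n N) := by
  induction n with
  | zero => exact hE
  | succ n ih =>
    rw [PP_succ, List.range_succ, List.foldl_append]
    exact enc_bk (PP_GT h n (by omega)) (ih (by omega)) _

lemma exists_enc {a b k : ℕ} {T : Fin a → Fin b → ℤ} (hT : IsSSYT a b k T) :
    ∃ N, GT a b k N ∧ Enc a b T N := by
  obtain ⟨t1, t2, t3⟩ := hT
  let N : ℤ → ℕ → ℤ := fun d r =>
    if r = 0 then (b:ℤ) else if h : r - 1 < a then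
      ((Finset.univ.filter (fun y : Fin b => T ⟨r-1, h⟩ y ≤ d)).card : ℤ) else 0
  have N0 : ∀ d, N d 0 = b := fun d => by simp [N]
  have N1 : ∀ d (r : ℕ) (h : r < a), N d (r+1) =
      ((Finset.univ.filter (fun y : Fin b => T ⟨r, h⟩ y ≤ d)).card : ℤ) := by
    intro d r h
    simp [N, h]
  have N2 : ∀ d r, a < r → N d r = 0 := by
    intro d r h
    simp only [N]
    rw [if_neg (by omega), dif_neg (by omega)]
  have cb : ∀ s : Finset (Fin b), (s.card : ℤ) ≤ b := by
    intro s
    have := Finset.card_le_univ s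
    rw [Fintype.card_fin] at this
    exact_mod_cast this
  have nn : ∀ d r, 0 ≤ N d r := by
    intro d r
    simp only [N]; split_ifs <;> positivity
  have le : ∀ d r, N d r ≤ b := by
    intro d r
    simp only [N]; split_ifs
    · exact le_rfl
    · exact cb _
    · positivity
  refine ⟨N, ⟨nn, le, N0, N2, ?_, ?_, ?_, ?_⟩, ?_⟩
  · intro d r
    rcases r with _ | r
    · rw [N0, N0]
    · by_cases h : r < a
      · rw [N1 _ _ h, N1 _ _ h]
        have : (Finset.univ.filter (fun y : Fin b => T ⟨r, h⟩ y ≤ d)).card ≤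
          (Finset.univ.filter (fun y : Fin b => T ⟨r, h⟩ y ≤ d + 1)).card := by
          apply Finset.card_le_card
          intro y
          simp only [Finset.mem_filter, Finset.mem_univ, true_and]
          omega
        exact_mod_cast this
      · rw [N2 _ _ (by omega)]; exact nn _ _
  · intro d r
    by_cases h : r < a
    · rcases r with _ | r
      · rw [N0]; exact le _ _
      · rw [N1 _ _ h, N1 _ _ (by omega)]
        have : (Finset.univ.filter (fun y : Fin b => T ⟨r+1, h⟩ y ≤ d + 1)).card ≤
          (Finset.univ.filter (fun y : Fin b => T ⟨r, by omega⟩ y ≤ d)).card := by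
          apply Finset.card_le_card
          intro y
          simp only [Finset.mem_filter, Finset.mem_univ, true_and]
          have := t3 y ⟨r, by omega⟩ ⟨r+1, h⟩ (by simp [Fin.lt_def])
          omega
        exact_mod_cast this
    · rw [N2 _ _ (by omega)]; exact nn _ _
  · intro d r hd hr
    by_cases h : a < r
    · exact N2 _ _ h
    · obtain ⟨r, rfl⟩ : ∃ s, r = s + 1 := ⟨r - 1, by omega⟩
      rw [N1 _ _ (by omega)]
      rw [Finset.filter_eq_empty_iff.2]
      · simp
      · intro y _
        have := (t1 ⟨r, by omega⟩ y).1
        omega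
  · intro d r hd hr
    rcases r with _ | r
    · exact N0 _
    · rw [N1 _ _ (by omega), Finset.filter_true_of_mem]
      · simp
      · intro y _
        have := (t1 ⟨r, by omega⟩ y).2
        omega
  · intro x y d
    rw [N1 _ _ x.2]
    have hx : (⟨(x:ℕ), x.2⟩ : Fin a) = x := rfl
    rw [hx]
    constructor
    · intro h
      have : (Finset.Iic y).card ≤ (Finset.univ.filter (fun y : Fin b => T x y ≤ d)).card := by
        apply Finset.card_le_card
        intro z hz
        simp only [Finset.mem_Iic] at hz
        simp only [Finset.mem_filter, Finset.mem_univ, true_and]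
        exact (t2 x z y hz).trans h
      rw [Fin.card_Iic] at this
      omega
    · intro h
      by_contra hn
      have : (Finset.univ.filter (fun y : Fin b => T x y ≤ d)).card ≤ (Finset.Iio y).card := by
        apply Finset.card_le_card
        intro z hz
        simp only [Finset.mem_filter, Finset.mem_univ, true_and] at hz
        simp only [Finset.mem_Iio]
        by_contra hzy
        exact hn ((t2 x y z (not_lt.1 hzy)).trans hz)
      rw [Fin.card_Iio] at this
      omega

lemma cnt_congr (k : ℕ) (p q : ℕ → Prop) {i1 : DecidablePred p} {i2 : DecidablePred q}
    (h : ∀ i, p i ↔ q i) : Nat.count p k = Nat.count q k := by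
  have : p = q := funext fun i => propext (h i)
  subst this
  congr!

lemma count_aux (k : ℕ) (g : ℕ → ℤ) (d : ℤ) : Multiset.count d ((Multiset.range k).map g) +
      Nat.count (fun i => g i ≤ d - 1) k = Nat.count (fun i => g i ≤ d) k := by
  induction k with
  | zero => simp
  | succ k ih =>
    rw [Multiset.range_succ, Multiset.map_cons, Multiset.count_cons, Nat.count_succ, Nat.count_succ]
    split_ifs <;> omega

lemma map_eq_of_count (k : ℕ) (e f : ℕ → ℤ)
    (h : ∀ d : ℤ, Nat.count (fun i => e i ≤ d) k = Nat.count (fun i => f i ≤ d) k) :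
    (Multiset.range k).map e = (Multiset.range k).map f := by
  ext d
  have h1 := count_aux k e d
  have h2 := count_aux k f d
  rw [h, h] at h1
  omega

lemma count_shift (k s : ℕ) (p : ℕ → Prop) (hp : ∀ i, p (k + i) ↔ p i) :
    Nat.count (fun i => p (s + i)) k = Nat.count p k := by
  have h1 := Nat.count_add p s k
  have h2 := Nat.count_add p k s
  have : (fun i => p (k + i)) = p := funext fun i => propext (hp i)
  simp only [this] at h2
  rw [add_comm k s] at h2
  omega

end Antip

/-- for `T ∈ SSYT_k(a × b)`, a box `B = (x,y)`, and the box
`B* = (a+1−x, b+1−y)` obtained from `B` by 180° rotation of the rectangle,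
`SSYTDist(T,B) = {k+1−m : m ∈ SSYTDist(T,B*)}`. -/
theorem ssyt_dist_antipodal (a b k : ℕ) (ha : 0 < a) (hb : 0 < b) (hk : 0 < k)
    (T : Fin a → Fin b → ℤ) (hT : IsSSYT a b k T) (x : Fin a) (y : Fin b) :
    SSYTDist a b k T x y =
      (SSYTDist a b k T x.rev y.rev).map (fun m => (k : ℤ) + 1 - m) := by
  obtain ⟨N, hN, hE⟩ := Antip.exists_enc hT
  -- go back in time
  have back : ∀ n : ℕ, ∃ N0, Antip.GT a b k N0 ∧ (Antip.PP a (k-1))^[n] N0 = N := by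
    intro n
    induction n with
    | zero => exact ⟨N, hN, rfl⟩
    | succ n ih =>
      obtain ⟨N1, h1, e1⟩ := ih
      obtain ⟨N0, h0, e0⟩ := Antip.PP_surj (a := a) (b := b) (k := k) (k-1) (by omega) N1 h1
      exact ⟨N0, h0, by rw [Function.iterate_succ_apply, e0, e1]⟩
  obtain ⟨N0, hN0, e0⟩ := back k
  have hG : ∀ i, Antip.GT a b k ((Antip.PP a (k-1))^[i] N0) := by
    intro i
    induction i with
    | zero => exact hN0
    | succ i ih => rw [Function.iterate_succ_apply']; exact Antip.PP_GT ih _ (by omega)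
  have rec0 := Antip.seq_recip (Ns := fun i => (Antip.PP a (k-1))^[i] N0) ha hb hG
    (fun i d r h1 h2 h3 h4 => by
      simp only [Function.iterate_succ_apply']
      exact Antip.PP_rel a k _ d r h1 h2 h3 h4)
  have hM : ∀ i, (Antip.PP a (k-1))^[k+i] N0 = (Antip.PP a (k-1))^[i] N := by
    intro i
    rw [add_comm, Function.iterate_add_apply, e0]
  have hGM : ∀ i, Antip.GT a b k ((Antip.PP a (k-1))^[i] N) := fun i => by
    rw [← hM]; exact hG _
  have recM : ∀ i d r : ℕ, d ≤ k → 1 ≤ r → r ≤ a → (Antip.PP a (k-1))^[i] N d r +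
      (Antip.PP a (k-1))^[d+i] N ((k:ℤ)-d) (a+1-r) = b := by
    intro i d r hd hr1 hr2
    have := rec0 (k+i) d r (by omega) hd hr1 hr2
    rw [add_assoc, hM, hM, add_comm i d] at this
    exact this
  have hEM : ∀ i, Antip.Enc a b ((pro a b k)^[i] T) ((Antip.PP a (k-1))^[i] N) := by
    intro i
    induction i with
    | zero => exact hE
    | succ i ih =>
      rw [Function.iterate_succ_apply', Function.iterate_succ_apply', Antip.pro_eq]
      exact Antip.enc_pro_aux (hGM i) ih _ (by omega)
  have bounds : ∀ i (x : Fin a) (y : Fin b), 1 ≤ (pro a b k)^[i] T x y ∧ (pro a b k)^[i] T x y ≤ k := by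
    intro i x y
    have h1 := hEM i x y 0
    have h2 := hEM i x y k
    rw [(hGM i).lo 0 _ le_rfl (by omega)] at h1
    rw [(hGM i).hi k _ le_rfl (by omega)] at h2
    have := y.2
    omega
  have key : ∀ i d : ℕ, d ≤ k → ∀ (x : Fin a) (y : Fin b), ((pro a b k)^[i] T x y ≤ d ↔
      ¬ (pro a b k)^[d+i] T x.rev y.rev ≤ (k:ℤ) - d) := by
    intro i d hd x y
    have h1 := hEM i x y d
    have h2 := hEM (d+i) x.rev y.rev ((k:ℤ)-d)
    have h3 := recM i d ((x:ℕ)+1) hd (by omega) (by omega)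
    have e1 : ((x.rev : Fin a) : ℕ) + 1 = a + 1 - ((x:ℕ)+1) := by rw [Fin.val_rev]; omega
    have e2 : ((y.rev : Fin b) : ℕ) = b - ((y:ℕ)+1) := Fin.val_rev y
    rw [e1, e2] at h2
    have := y.2
    omega
  have per : ∀ i (x : Fin a) (y : Fin b), (pro a b k)^[k+i] T x y = (pro a b k)^[i] T x y := by
    intro i x y
    have : ∀ d : ℕ, d ≤ k → ((pro a b k)^[i] T x y ≤ d ↔ (pro a b k)^[k+i] T x y ≤ d) := by
      intro d hd
      have h1 := key i d hd x y
      have h2 := key (d+i) (k-d) (by omega) x.rev y.rev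
      rw [Fin.rev_rev, Fin.rev_rev] at h2
      have e1 : k - d + (d + i) = k + i := by omega
      have e2 : ((k - d : ℕ) : ℤ) = (k:ℤ) - d := by omega
      rw [e1, e2] at h2
      rw [h1, h2]
      simp
    have b1 := bounds i x y
    have b2 := bounds (k+i) x y
    have t1 := this ((pro a b k)^[i] T x y).toNat (by omega)
    have t2 := this ((pro a b k)^[k+i] T x y).toNat (by omega)
    omega
  unfold SSYTDist
  rw [Multiset.map_map]
  apply Antip.map_eq_of_count
  intro d
  simp only [Function.comp]
  by_cases hd : 0 ≤ d ∧ d ≤ k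
  · obtain ⟨n, rfl⟩ : ∃ n : ℕ, d = n := ⟨d.toNat, by omega⟩
    refine Eq.trans ?_ (Eq.trans (Antip.count_shift k n
      (fun i => (k:ℤ) + 1 - (pro a b k)^[i] T x.rev y.rev ≤ n) (fun i => by rw [per])) ?_)
    · apply Antip.cnt_congr
      intro i
      have := key i n (by omega) x y
      rw [this]; omega
    · apply Antip.cnt_congr
      intro i
      exact Iff.rfl
  · apply Antip.cnt_congr
    intro i
    have b1 := bounds i x y
    have b2 := bounds i x.rev y.rev
    omega
end

section
/- Let T ∈ SSYT_k(a × b), let x be a row index (1 ≤ x ≤ a), and let d ∈ ℤ. Then the multiset BCDist(T, a+1−x, k−d) equals {b − m : m ∈ BCDist(T, x, d)}, where BCDist(T, x, d) is the multiset, over 0 ≤ i ≤ k−1, of the number of boxes in row x of Pro^i(T) whose entry exceeds d. -/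
open scoped Classical

/-- `#B(T,x,d)`: the number of boxes in row `x` of `T` whose entry exceeds `d`. -/
noncomputable def bcount (a b : ℕ) (T : Fin a → Fin b → ℤ) (x : Fin a) (d : ℤ) : ℕ :=
  (Finset.univ.filter (fun y : Fin b => d < T x y)).card

/-- `BCDist(T,x,d)`: the multiset, over `0 ≤ i ≤ k−1`, of the number of boxes in row `x`
of `Pro^i(T)` whose entry exceeds `d`. -/
noncomputable def BCDist (a b k : ℕ) (T : Fin a → Fin b → ℤ) (x : Fin a) (d : ℤ) :
    Multiset ℤ :=
  (Multiset.range k).map (fun i => (bcount a b ((pro a b k)^[i] T) x d : ℤ))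

namespace BCD

/-- lower bidiagonal operator -/
def X (D : ℕ → ℕ → ℝ) (c : ℕ) (z : ℕ → ℝ) : ℕ → ℝ := fun r => D c r * z r - z (r - 1)

/-- product of bidiagonal operators -/
def P (D : ℕ → ℕ → ℝ) : ℕ → (ℕ → ℝ) → ℕ → ℝ
  | 0, z => z
  | n + 1, z => P D n (X D (n + 1) z)

lemma P_congr (p : ℕ) (D D' : ℕ → ℕ → ℝ) (n : ℕ) :
    (∀ c r, 1 ≤ c → c ≤ n → 1 ≤ r → r ≤ p → D c r = D' c r) →
    ∀ z z' : ℕ → ℝ, (∀ r, r ≤ p → z r = z' r) → z 0 = 0 →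
    ∀ r, r ≤ p → P D n z r = P D' n z' r := by
  induction n with
  | zero => intro _ z z' h _ r hr; exact h r hr
  | succ n ih =>
    intro hD z z' h h0 r hr
    refine ih (fun c r h1 h2 h3 h4 => hD c r h1 (by omega) h3 h4) _ _ ?_ ?_ r hr
    · intro s hs
      have h0' : z' 0 = 0 := by rw [← h 0 (by omega), h0]
      rcases Nat.eq_zero_or_pos s with rfl | hs0
      · simp [X, h0, h0']
      · simp only [X]
        rw [hD (n+1) s (by omega) le_rfl hs0 hs, h s hs, h (s-1) (by omega)]
    · simp [X, h0]

lemma P_shift (D : ℕ → ℕ → ℝ) (n : ℕ) : ∀ z : ℕ → ℝ, z 0 = 0 →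
    P (fun c r => D c (r - 1)) n (fun r => z (r - 1)) = fun r => P D n z (r - 1) := by
  induction n with
  | zero => intro z _; rfl
  | succ n ih =>
    intro z h0
    have : X (fun c r => D c (r - 1)) (n+1) (fun r => z (r - 1))
        = fun r => X D (n+1) z (r - 1) := by
      funext r; simp [X]
    simp only [P]
    rw [this]
    exact ih _ (by simp [X, h0])

section
variable (p q : ℕ) (u w : ℕ → ℕ → ℝ)

/-- down weights -/
def DA (c r : ℕ) : ℝ := (u (r - 1) c + u r (c - 1)) * w r c
/-- up weights -/
def DQ (c r : ℕ) : ℝ := u r c * (w (r + 1) c + w r (c + 1))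
/-- common part -/
def Ba (c r : ℕ) : ℝ := u (r - 1) c * w r c

lemma conv1 (huw : ∀ r c, 1 ≤ r → r ≤ p → 1 ≤ c → c ≤ q → u r c * w r c = 1)
    (hu0 : ∀ r, 1 ≤ r → u r 0 = 0) (n : ℕ) : n + 1 ≤ q →
    ∀ y : ℕ → ℝ, y 0 = 0 → y 1 = 0 → ∀ r, r ≤ p →
    P (DA u w) (n + 1) y r = P (fun c r => DQ u w c (r - 1)) n (X (Ba u w) (n + 1) y) r := by
  induction n with
  | zero =>
    intro _ y h0 h1 r hr
    simp only [P, X, DA, Ba]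
    rcases Nat.eq_zero_or_pos r with rfl | h
    · simp [h0]
    · simp [hu0 r h]
  | succ n ih =>
    intro hn y h0 h1 r hr
    have e : P (DA u w) (n + 1 + 1) y r = P (DA u w) (n + 1) (X (DA u w) (n + 2) y) r := rfl
    rw [e, ih (by omega) _ (by simp [X, h0]) (by simp [X, h0, h1]) r hr]
    refine P_congr p _ _ n (fun _ _ _ _ _ _ => rfl) _ _ ?_ ?_ r hr
    · intro s hs
      match s with
      | 0 => simp [X, h0]
      | 1 => simp [X, h0, h1]
      | s + 2 =>
        have a1 := huw (s+2) (n+1) (by omega) hs (by omega) (by omega)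
        have a2 := huw (s+1) (n+2) (by omega) (by omega) (by omega) (by omega)
        simp only [X, Ba, DA, DQ, Nat.add_sub_cancel, show s + 2 - 1 = s + 1 by omega,
          show n + 1 + 1 = n + 2 by omega, show n + 2 - 1 = n + 1 by omega,
          show s + 1 + 1 = s + 2 by omega]
        linear_combination (u (s+1) (n+1) * w (s+2) (n+2) * y (s+2)) * (a1 - a2)
    · simp [X, h0]

lemma conv2 (hq : 1 ≤ q) (huw : ∀ r c, 1 ≤ r → r ≤ p → 1 ≤ c → c ≤ q → u r c * w r c = 1)
    (hu0 : ∀ r, 1 ≤ r → u r 0 = 0) (hw0 : ∀ r, 1 ≤ r → r ≤ p → w r (q + 1) = 0)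
    (z : ℕ → ℝ) (h0 : z 0 = 0) (r : ℕ) (hr : r ≤ p) :
    P (DA u w) q (fun r => z (r - 1)) r = P (DQ u w) q z (r - 1) := by
  obtain ⟨n, rfl⟩ : ∃ n, q = n + 1 := ⟨q - 1, by omega⟩
  rw [conv1 p (n+1) u w huw hu0 n le_rfl _ (by simp [h0]) (by simp [h0]) r hr]
  rw [← congrFun (P_shift (DQ u w) (n+1) z h0) r]
  refine P_congr p _ _ n (fun _ _ _ _ _ _ => rfl) _ _ ?_ ?_ r hr
  · intro s hs
    match s with
    | 0 => simp [X, h0]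
    | 1 => simp [X, h0]
    | s + 2 =>
      simp only [X, Ba, DQ, show s + 2 - 1 = s + 1 by omega, hw0 (s+1) (by omega) (by omega)]
      simp
  · simp [X, h0]

lemma actA (huw : ∀ r c, 1 ≤ r → r ≤ p → 1 ≤ c → c ≤ q → u r c * w r c = 1)
    (hu0 : ∀ r, 1 ≤ r → u r 0 = 0) (hu1 : u 0 1 = 1) (hu2 : ∀ c, 2 ≤ c → u 0 c = 0)
    (n : ℕ) : n + 1 ≤ q → ∀ r, r ≤ p →
    P (DA u w) (n + 1) (fun r => if r = 0 then 0 else u r (n + 1)) r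
      = if r = 1 then 1 else 0 := by
  induction n with
  | zero =>
    intro _ r hr
    match r with
    | 0 => simp [P, X]
    | 1 =>
      have := huw 1 1 (by omega) hr (by omega) (by omega)
      simp only [P, X, DA]
      simp [hu1, hu0 1 le_rfl]
      linarith
    | r + 2 =>
      have := huw (r+2) 1 (by omega) hr (by omega) (by omega)
      simp only [P, X, DA]
      simp [hu0 (r+2) (by omega)]
      linear_combination (u (r+1) 1) * this
  | succ n ih =>
    intro hn r hr
    rw [← ih (by omega) r hr]
    change P (DA u w) (n+1) (X (DA u w) (n+2) _) r = _
    refine P_congr p _ _ (n+1) (fun _ _ _ _ _ _ => rfl) _ _ ?_ ?_ r hr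
    · intro s hs
      match s with
      | 0 => simp [X]
      | 1 =>
        have := huw 1 (n+2) (by omega) hs (by omega) (by omega)
        simp [X, DA, hu2 (n+2) (by omega)]
        linear_combination (u 1 (n+1)) * this
      | s + 2 =>
        have := huw (s+2) (n+2) (by omega) hs (by omega) (by omega)
        simp [X, DA]
        linear_combination (u (s+1) (n+2) + u (s+2) (n+1)) * this
    · simp [X]

lemma sum_parts (D w : ℕ → ℝ) (y : ℕ → ℝ) (h0 : y 0 = 0) (p : ℕ) :
    ∑ r ∈ Finset.range p, w (r + 1) * (D (r + 1) * y (r + 1) - y r)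
      = ∑ r ∈ Finset.range p, (w (r + 1) * D (r + 1) - w (r + 2)) * y (r + 1)
        + w (p + 1) * y p := by
  induction p with
  | zero => simp [h0]
  | succ p ih =>
    rw [Finset.sum_range_succ, Finset.sum_range_succ, ih]; ring

lemma actQ1 (huw : ∀ r c, 1 ≤ r → r ≤ p → 1 ≤ c → c ≤ q → u r c * w r c = 1) (c : ℕ)
    (hc : 1 ≤ c) (hc' : c ≤ q) (y : ℕ → ℝ) (h0 : y 0 = 0) :
    ∑ r ∈ Finset.range p, w (r + 1) c * X (DQ u w) c y (r + 1)
     = ∑ r ∈ Finset.range p, w (r + 1) (c + 1) * y (r + 1) + w (p + 1) c * y p := by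
  have := sum_parts (DQ u w c) (fun r => w r c) y h0 p
  simp only [X, Nat.add_sub_cancel]
  rw [this]
  congr 1
  refine Finset.sum_congr rfl fun r hr => ?_
  have := huw (r+1) c (by omega) (by simp at hr; omega) hc hc'
  simp only [DQ, show r + 1 + 1 = r + 2 by omega]
  linear_combination ((w (r+2) c + w (r+1) (c+1)) * y (r+1)) * this

lemma actQ (huw : ∀ r c, 1 ≤ r → r ≤ p → 1 ≤ c → c ≤ q → u r c * w r c = 1)
    (hw2 : ∀ c, c < q → w (p + 1) c = 0) (n : ℕ) : n + 1 ≤ q →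
    ∀ y : ℕ → ℝ, y 0 = 0 → 
    ∑ r ∈ Finset.range p, w (r + 1) 1 * P (DQ u w) (n + 1) y (r + 1)
     = ∑ r ∈ Finset.range p, w (r + 1) (n + 2) * y (r + 1) + w (p + 1) (n + 1) * y p := by
  induction n with
  | zero => intro hq y h0; exact actQ1 p q u w huw 1 le_rfl hq y h0
  | succ n ih =>
    intro hq y h0
    have := ih (by omega) (X (DQ u w) (n+2) y) (by simp [X, h0])
    rw [hw2 (n+1) (by omega)] at this
    have h2 := actQ1 p q u w huw (n+2) (by omega) hq y h0
    change ∑ r ∈ Finset.range p, w (r + 1) 1 * P (DQ u w) (n + 1) (X (DQ u w) (n+2) y) (r + 1) = _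
    rw [this, h2]; ring
end

section
variable (p q : ℕ) (β : ℝ) (u w : ℕ → ℕ → ℕ → ℝ)

lemma geo_edge (hq : 1 ≤ q)
    (huw : ∀ l r c, 1 ≤ r → r ≤ p → 1 ≤ c → c ≤ q → u l r c * w l r c = 1)
    (hu0 : ∀ l r, 1 ≤ r → u l r 0 = 0) (hu1 : ∀ l, u l 0 1 = 1)
    (hu2 : ∀ l c, 2 ≤ c → u l 0 c = 0)
    (hw0 : ∀ l r, 1 ≤ r → r ≤ p → w l r (q + 1) = 0) (hw1 : ∀ l, w l (p + 1) q = β⁻¹)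
    (hw2 : ∀ l c, c < q → w l (p + 1) c = 0)
    (hrec : ∀ l r c, 1 ≤ r → r ≤ p → 1 ≤ c → c ≤ q →
      u (l + 1) r c * u l r c * (w (l + 1) (r + 1) c + w (l + 1) r (c + 1))
        = u l (r - 1) c + u l r (c - 1))
    (l m : ℕ) (hm : m + 1 ≤ p) :
    w (l + 1 + m) (m + 1) 1 = β⁻¹ * u l (p - m) q := by
  have hAQ : ∀ l c r, 1 ≤ c → c ≤ q → 1 ≤ r → r ≤ p →
      DQ (u (l+1)) (w (l+1)) c r = DA (u l) (w l) c r := by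
    intro l c r h1 h2 h3 h4
    have a := hrec l r c h3 h4 h1 h2
    have b := huw l r c h3 h4 h1 h2
    simp only [DA, DQ, ← a]
    linear_combination (-u (l+1) r c * (w (l+1) (r+1) c + w (l+1) r (c+1))) * b
  set z : ℕ → ℝ := fun r => if r = 0 then 0 else u l r q with hz
  have key : ∀ m r, r ≤ p → P (DQ (u (l+1+m)) (w (l+1+m))) q (fun r => z (r - m)) r
      = if r = m + 1 then 1 else 0 := by
    intro m
    induction m with
    | zero =>
      intro r hr
      obtain ⟨n, rfl⟩ : ∃ n, q = n + 1 := ⟨q - 1, by omega⟩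
      rw [P_congr p _ (DA (u l) (w l)) (n+1) (fun c r => hAQ l c r) _ z (by simp) (by simp [hz]) r hr]
      exact actA p (n+1) (u l) (w l) (huw l) (hu0 l) (hu1 l) (hu2 l) n le_rfl r hr
    | succ m ih =>
      intro r hr
      have h0 : z (0 - m) = 0 := by simp [hz]
      have hc := P_congr p (DQ (u (l+1+m+1)) (w (l+1+m+1))) (DA (u (l+1+m)) (w (l+1+m))) q
        (fun c r => hAQ (l+1+m) c r) (fun r => z (r - (m + 1)))
        (fun r => z (r - 1 - m)) (fun r _ => congrArg z (by omega)) (by simp [hz]) r hr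
      rw [show l + 1 + (m + 1) = l + 1 + m + 1 from rfl, hc]
      rw [conv2 p q _ _ hq (huw _) (hu0 _) (hw0 _) (fun r => z (r - m)) h0 r hr,
        ih (r-1) (by omega)]
      congr 1
      simp only [eq_iff_iff]; omega
  have h1 := actQ p q (u (l+1+m)) (w (l+1+m)) (huw _) (hw2 _) (q - 1) (by omega)
    (fun r => z (r - m)) (by simp [hz])
  rw [show q - 1 + 1 = q by omega, show q - 1 + 2 = q + 1 by omega, hw1] at h1
  rw [Finset.sum_congr rfl (g := fun r => if r = m then w (l+1+m) (m+1) 1 else 0)] at h1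
  · rw [Finset.sum_ite_eq' , if_pos (by simp; omega)] at h1
    rw [h1, Finset.sum_eq_zero]
    · simp only [hz, zero_add]
      rw [if_neg (by omega)]
    · intro r hr
      simp at hr
      rw [hw0 _ _ (by omega) (by omega), zero_mul]
  · intro r hr
    simp at hr
    rw [key m (r+1) (by omega)]
    by_cases h : r = m
    · simp [h]
    · simp [h]

theorem geo (hq : 1 ≤ q) (hβ : β ≠ 0)
    (huw : ∀ l r c, 1 ≤ r → r ≤ p → 1 ≤ c → c ≤ q → u l r c * w l r c = 1)
    (hu0 : ∀ l r, 1 ≤ r → u l r 0 = 0) (hu1 : ∀ l, u l 0 1 = 1)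
    (hu2 : ∀ l c, 2 ≤ c → u l 0 c = 0)
    (hw0 : ∀ l r, 1 ≤ r → r ≤ p → w l r (q + 1) = 0) (hw1 : ∀ l, w l (p + 1) q = β⁻¹)
    (hw2 : ∀ l c, c < q → w l (p + 1) c = 0)
    (hrec : ∀ l r c, 1 ≤ r → r ≤ p → 1 ≤ c → c ≤ q →
      u (l + 1) r c * u l r c * (w (l + 1) (r + 1) c + w (l + 1) r (c + 1))
        = u l (r - 1) c + u l r (c - 1)) (c : ℕ) :
    1 ≤ c → c ≤ q → ∀ s l r r' c', 1 ≤ r → r ≤ p → r + r' = p + 1 → c + c' = q + 1 →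
      l + 1 = s + r + c → w l r c = β⁻¹ * u s r' c' := by
  induction c using Nat.strong_induction_on with
  | _ c ih =>
  intro hc hcq s l r r' c' hr hrp hrr hcc hl
  rcases Nat.lt_or_ge 1 c with h1 | h1
  swap
  · obtain rfl : c = 1 := by omega
    have := geo_edge p q β u w hq huw hu0 hu1 hu2 hw0 hw1 hw2 hrec s (r-1) (by omega)
    rw [show s + 1 + (r - 1) = l by omega, show r - 1 + 1 = r by omega] at this
    rw [this]; congr 2 <;> omega
  obtain ⟨e, rfl⟩ : ∃ e, c = e + 1 := ⟨c - 1, by omega⟩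
  obtain ⟨t, rfl⟩ : ∃ t, l = t + 1 := ⟨l - 1, by omega⟩
  have E1 := hrec t r e hr hrp (by omega) (by omega)
  have E2 := hrec s r' (c'+1) (by omega) (by omega) (by omega) (by omega)
  simp only [Nat.add_sub_cancel] at E2
  have A1 := ih e (by omega) (by omega) (by omega) (s+1) (t+1) r r' (c'+1) hr hrp hrr (by omega) (by omega)
  have A2 := ih e (by omega) (by omega) (by omega) s t r r' (c'+1) hr hrp hrr (by omega) (by omega)
  have U1 := huw (t+1) r e hr hrp (by omega) (by omega)
  have U2 := huw t r e hr hrp (by omega) (by omega)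
  have V1 := huw (s+1) r' (c'+1) (by omega) (by omega) (by omega) (by omega)
  have V2 := huw s r' (c'+1) (by omega) (by omega) (by omega) (by omega)
  -- neighbour facts
  have N1 : w (t+1) (r+1) e = β⁻¹ * u s (r'-1) (c'+1) := by
    by_cases h : r = p
    · rw [h, hw2 _ _ (by omega), show r' - 1 = 0 by omega, hu2 _ _ (by omega), mul_zero]
    · exact ih e (by omega) (by omega) (by omega) s (t+1) (r+1) (r'-1) (c'+1) (by omega) (by omega) (by omega) (by omega) (by omega)
  have N2 : u t (r-1) e = β * w (s+1) (r'+1) (c'+1) := by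
    by_cases h : r = 1
    · rw [h, show r' + 1 = p + 1 by omega]
      by_cases h2 : e = 1
      · rw [h2, show c' + 1 = q by omega, hw1, hu1, mul_inv_cancel₀ hβ]
      · rw [hw2 _ _ (by omega), hu2 _ _ (by omega), mul_zero]
    · have a := ih e (by omega) (by omega) (by omega) (s+1) t (r-1) (r'+1) (c'+1) (by omega) (by omega) (by omega) (by omega) (by omega)
      have b := huw t (r-1) e (by omega) (by omega) (by omega) (by omega)
      have d := huw (s+1) (r'+1) (c'+1) (by omega) (by omega) (by omega) (by omega)
      rw [a] at b
      field_simp at b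
      linear_combination w (s+1) (r'+1) (c'+1) * b - u t (r-1) e * d
  have N3 : u t r (e-1) = β * w (s+1) r' (c'+1+1) := by
    by_cases h : e = 1
    · rw [h, hu0 _ _ hr, show c'+1 = q by omega, hw0 _ _ (by omega) (by omega), mul_zero]
    · have a := ih (e-1) (by omega) (by omega) (by omega) (s+1) t r r' (c'+1+1) (by omega) (by omega) (by omega) (by omega) (by omega)
      have b := huw t r (e-1) (by omega) (by omega) (by omega) (by omega)
      have d := huw (s+1) r' (c'+1+1) (by omega) (by omega) (by omega) (by omega)
      rw [a] at b
      field_simp at b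
      linear_combination w (s+1) r' (c'+1+1) * b - u t r (e-1) * d
  rw [N1, N2, N3] at E1
  rw [A1] at U1
  rw [A2] at U2
  have n1 := left_ne_zero_of_mul_eq_one U1
  have n2 := left_ne_zero_of_mul_eq_one U2
  have n3 := left_ne_zero_of_mul_eq_one V1
  have n4 := left_ne_zero_of_mul_eq_one V2
  have F1 : u (t+1) r e = β / u (s+1) r' (c'+1) := by field_simp at U1 ⊢; linarith
  have F2 : u t r e = β / u s r' (c'+1) := by field_simp at U2 ⊢; linarith
  rw [F1, F2] at E1
  field_simp at E1 ⊢
  have : β * (β⁻¹ * u s (r'-1) (c'+1) + w (t+1) r (e+1)) = u s (r'-1) (c'+1) + u s r' c' := by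
    rw [← E2]; field_simp; linarith
  rw [mul_add, mul_inv_cancel_left₀ hβ] at this
  linarith
end
end BCD

namespace BCD
open Filter Topology

/-- tropical limit -/
def IsTrop (f : ℕ → ℝ) (F : ℝ) : Prop :=
  (∀ n, 0 < f n) ∧ Tendsto (fun n : ℕ => Real.log (f n) / ((n : ℝ) + 1)) atTop (𝓝 F)

lemma IsTrop.mul {f g : ℕ → ℝ} {F G : ℝ} (hf : IsTrop f F) (hg : IsTrop g G) :
    IsTrop (fun n => f n * g n) (F + G) := by
  refine ⟨fun n => mul_pos (hf.1 n) (hg.1 n), (hf.2.add hg.2).congr fun n => ?_⟩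
  rw [Real.log_mul (hf.1 n).ne' (hg.1 n).ne', add_div]

lemma IsTrop.inv {f : ℕ → ℝ} {F : ℝ} (hf : IsTrop f F) :
    IsTrop (fun n => (f n)⁻¹) (-F) := by
  refine ⟨fun n => inv_pos.2 (hf.1 n), (hf.2.neg).congr fun n => ?_⟩
  rw [Real.log_inv, neg_div]

lemma IsTrop.exp (F : ℝ) : IsTrop (fun n => Real.exp (((n : ℝ) + 1) * F)) F := by
  refine ⟨fun n => Real.exp_pos _, tendsto_const_nhds.congr fun n => ?_⟩
  have : (n : ℝ) + 1 ≠ 0 := by positivity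
  rw [Real.log_exp]; field_simp

lemma IsTrop.one : IsTrop (fun _ => (1 : ℝ)) 0 := by
  refine ⟨fun n => one_pos, tendsto_const_nhds.congr fun n => ?_⟩
  simp

lemma IsTrop.add {f g : ℕ → ℝ} {F G : ℝ} (hf : IsTrop f F) (hg : IsTrop g G) :
    IsTrop (fun n => f n + g n) (max F G) := by
  refine ⟨fun n => add_pos (hf.1 n) (hg.1 n), ?_⟩
  have hm := hf.2.max hg.2
  have h2 : Tendsto (fun n : ℕ => Real.log 2 * (1 / ((n : ℝ) + 1))) atTop (𝓝 0) := by
    simpa using (tendsto_one_div_add_atTop_nhds_zero_nat (𝕜 := ℝ)).const_mul (Real.log 2)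
  have hm2 := hm.add h2
  rw [add_zero] at hm2
  refine tendsto_of_tendsto_of_tendsto_of_le_of_le hm hm2 ?_ ?_
  · intro n
    have hn : (0 : ℝ) < (n : ℝ) + 1 := by positivity
    have := hf.1 n
    have := hg.1 n
    refine max_le ?_ ?_
    · exact div_le_div_of_nonneg_right (Real.log_le_log (hf.1 n) (by linarith)) hn.le
    · exact div_le_div_of_nonneg_right (Real.log_le_log (hg.1 n) (by linarith)) hn.le
  · intro n
    have hn : (0 : ℝ) < (n : ℝ) + 1 := by positivity
    have h1 := hf.1 n
    have h2 := hg.1 n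
    have key : Real.log (f n + g n) ≤ max (Real.log (f n)) (Real.log (g n)) + Real.log 2 := by
      rcases le_total (f n) (g n) with h | h
      · calc Real.log (f n + g n) ≤ Real.log (g n * 2) := Real.log_le_log (by linarith) (by linarith)
          _ = Real.log (g n) + Real.log 2 := Real.log_mul h2.ne' (by norm_num)
          _ ≤ _ := by gcongr; exact le_max_right _ _
      · calc Real.log (f n + g n) ≤ Real.log (f n * 2) := Real.log_le_log (by linarith) (by linarith)
          _ = Real.log (f n) + Real.log 2 := Real.log_mul h1.ne' (by norm_num)
          _ ≤ _ := by gcongr; exact le_max_left _ _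
    show Real.log (f n + g n) / ((n:ℝ)+1) ≤ max (Real.log (f n) / ((n:ℝ)+1)) (Real.log (g n) / ((n:ℝ)+1)) + Real.log 2 * (1 / ((n:ℝ)+1))
    rw [max_div_div_right hn.le, mul_one_div, ← add_div]
    exact div_le_div_of_nonneg_right key hn.le

lemma IsTrop.unique {f : ℕ → ℝ} {F G : ℝ} (hf : IsTrop f F) (hg : IsTrop f G) : F = G :=
  tendsto_nhds_unique hf.2 hg.2

/-- one step of birational rowmotion -/
noncomputable def evol (p q : ℕ) (β : ℝ) (f : ℕ → ℕ → ℝ) (r c : ℕ) : ℝ :=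
  if _h : 1 ≤ r ∧ r ≤ p ∧ 1 ≤ c ∧ c ≤ q then
    (f (r - 1) c + f r (c - 1)) /
      (f r c * ((if r = p then (if c = q then β⁻¹ else 0) else (evol p q β f (r + 1) c)⁻¹) +
        (if c = q then 0 else (evol p q β f r (c + 1))⁻¹)))
  else if r = 0 ∧ c = 1 then 1 else 0
termination_by (p + 1 - r) + (q + 1 - c)

/-- rowmotion orbit -/
noncomputable def orb (p q : ℕ) (β : ℝ) (f : ℕ → ℕ → ℝ) : ℕ → ℕ → ℕ → ℝ
  | 0 => fun r c => if 1 ≤ r ∧ r ≤ p ∧ 1 ≤ c ∧ c ≤ q then f r c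
      else if r = 0 ∧ c = 1 then 1 else 0
  | l + 1 => evol p q β (orb p q β f l)

/-- reciprocals, with boundary values -/
noncomputable def orw (p q : ℕ) (β : ℝ) (f : ℕ → ℕ → ℝ) (l r c : ℕ) : ℝ :=
  if r = p + 1 then (if c = q then β⁻¹ else 0) else
    if c = q + 1 then 0 else (orb p q β f l r c)⁻¹

lemma orb_out (p q : ℕ) (β : ℝ) (f : ℕ → ℕ → ℝ) (l r c : ℕ)
    (h : ¬ (1 ≤ r ∧ r ≤ p ∧ 1 ≤ c ∧ c ≤ q)) :
    orb p q β f l r c = if r = 0 ∧ c = 1 then 1 else 0 := by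
  cases l with
  | zero => simp only [orb]; rw [if_neg h]
  | succ l => simp only [orb]; rw [evol, dif_neg h]

lemma orb_succ (p q : ℕ) (β : ℝ) (f : ℕ → ℕ → ℝ) (l r c : ℕ)
    (h : 1 ≤ r ∧ r ≤ p ∧ 1 ≤ c ∧ c ≤ q) :
    orb p q β f (l + 1) r c = (orb p q β f l (r - 1) c + orb p q β f l r (c - 1)) *
      (orb p q β f l r c * (orw p q β f (l+1) (r + 1) c + orw p q β f (l+1) r (c + 1)))⁻¹ := by
  have e : orb p q β f (l+1) = evol p q β (orb p q β f l) := rfl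
  simp only [orw, e]
  rw [evol, dif_pos h, div_eq_mul_inv]
  congr 3
  congr 1
  · by_cases hr : r = p
    · simp [hr]
    · rw [if_neg hr, if_neg (by omega), if_neg (by omega)]
  · by_cases hc : c = q
    · rw [if_pos hc, if_neg (by omega), if_pos (by omega)]
    · rw [if_neg hc, if_neg (by omega), if_neg (by omega)]

section
variable (p q : ℕ) (b : ℝ) (U : ℕ → ℕ → ℕ → ℝ)

theorem trop_orb (hU0 : ∀ l r c, 0 ≤ U l r c) (hUb : ∀ l r c, U l r c ≤ b)
    (h1 : ∀ l c, U l 0 c = 0) (h2 : ∀ l r, r ≤ p → U l r 0 = 0)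
    (h3 : ∀ l c, U l (p + 1) c = b) (h4 : ∀ l r, 1 ≤ r → r ≤ p → U l r (q + 1) = b)
    (hrec : ∀ l r c, 1 ≤ r → r ≤ p → 1 ≤ c → c ≤ q →
      U (l + 1) r c + U l r c = max (U l (r - 1) c) (U l r (c - 1))
        + min (U (l + 1) (r + 1) c) (U (l + 1) r (c + 1))) (l : ℕ) :
    ∀ r c, 1 ≤ r → r ≤ p → 1 ≤ c → c ≤ q →
      IsTrop (fun n => orb p q (Real.exp (((n : ℝ) + 1) * b))
        (fun r c => Real.exp (((n : ℝ) + 1) * U 0 r c)) l r c) (U l r c) := by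
  induction l with
  | zero =>
    intro r c a1 a2 a3 a4
    simp only [orb]
    simp only [a1, a2, a3, a4, and_self, if_true]
    exact IsTrop.exp _
  | succ l ih =>
    suffices H : ∀ m r c, 1 ≤ r → r ≤ p → 1 ≤ c → c ≤ q → (p - r) + (q - c) = m →
      IsTrop (fun n => orb p q (Real.exp (((n : ℝ) + 1) * b))
        (fun r c => Real.exp (((n : ℝ) + 1) * U 0 r c)) (l+1) r c) (U (l+1) r c) from
      fun r c a1 a2 a3 a4 => H _ r c a1 a2 a3 a4 rfl
    intro m
    induction m using Nat.strong_induction_on with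
    | _ m ihm =>
    intro r c a1 a2 a3 a4 hm
    have lo : IsTrop (fun n => orb p q (Real.exp (((n : ℝ) + 1) * b))
        (fun r c => Real.exp (((n : ℝ) + 1) * U 0 r c)) l (r-1) c +
        orb p q (Real.exp (((n : ℝ) + 1) * b))
        (fun r c => Real.exp (((n : ℝ) + 1) * U 0 r c)) l r (c-1))
        (max (U l (r - 1) c) (U l r (c - 1))) := by
      by_cases e1 : r = 1
      · subst e1
        simp only [Nat.sub_self, h1, max_eq_right (hU0 _ _ _)]
        by_cases e2 : c = 1
        · subst e2
          simp only [orb_out p q _ _ l 0 1 (by omega), orb_out p q _ _ l 1 (1-1) (by omega)]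
          simpa [h2 l 1 a2] using IsTrop.one
        · simp only [orb_out p q _ _ l 0 c (by omega)]
          simpa [e2] using ih 1 (c-1) (by omega) (by omega) (by omega) (by omega)
      · by_cases e2 : c = 1
        · subst e2
          simp only [Nat.sub_self, h2 l r a2, max_eq_left (hU0 _ _ _), orb_out p q _ _ l r 0 (by omega)]
          simpa using ih (r-1) 1 (by omega) (by omega) (by omega) (by omega)
        · exact (ih (r-1) c (by omega) (by omega) (by omega) (by omega)).add
            (ih r (c-1) (by omega) (by omega) (by omega) (by omega))
    have hi : IsTrop (fun n => orw p q (Real.exp (((n : ℝ) + 1) * b))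
        (fun r c => Real.exp (((n : ℝ) + 1) * U 0 r c)) (l+1) (r+1) c +
        orw p q (Real.exp (((n : ℝ) + 1) * b))
        (fun r c => Real.exp (((n : ℝ) + 1) * U 0 r c)) (l+1) r (c+1))
        (-(min (U (l+1) (r + 1) c) (U (l+1) r (c + 1)))) := by
      simp only [orw]
      by_cases e1 : r = p
      · subst e1
        simp only [h3, min_eq_right (hUb _ _ _), if_true, show r ≠ r + 1 by omega, if_false]
        by_cases e2 : c = q
        · subst e2
          simp only [if_true, h4 _ r a1 le_rfl, add_zero]
          exact (IsTrop.exp b).inv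
        · simp only [e2, if_false, zero_add, show c + 1 ≠ q + 1 by omega]
          exact (ihm _ (by omega) r (c+1) (by omega) (by omega) (by omega) (by omega) rfl).inv
      · simp only [show r + 1 ≠ p + 1 by omega, show c ≠ q + 1 by omega, if_false,
          show r ≠ p + 1 by omega]
        have t1 := (ihm _ (by omega) (r+1) c (by omega) (by omega) (by omega) (by omega) rfl).inv
        by_cases e2 : c = q
        · subst e2
          simp only [if_true, h4 _ r a1 a2, min_eq_left (hUb _ _ _), add_zero]
          exact t1
        · simp only [show c + 1 ≠ q + 1 by omega, if_false]
          rw [← max_neg_neg]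
          exact t1.add
            (ihm _ (by omega) r (c+1) (by omega) (by omega) (by omega) (by omega) rfl).inv
    have := lo.mul ((ih r c a1 a2 a3 a4).mul hi).inv
    simp only [orb_succ p q _ _ l r c ⟨a1, a2, a3, a4⟩]
    convert this using 1
    have := hrec l r c a1 a2 a3 a4
    linarith

theorem trop_main (hq : 1 ≤ q) (hU0 : ∀ l r c, 0 ≤ U l r c) (hUb : ∀ l r c, U l r c ≤ b)
    (h1 : ∀ l c, U l 0 c = 0) (h2 : ∀ l r, r ≤ p → U l r 0 = 0)
    (h3 : ∀ l c, U l (p + 1) c = b) (h4 : ∀ l r, 1 ≤ r → r ≤ p → U l r (q + 1) = b)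
    (hrec : ∀ l r c, 1 ≤ r → r ≤ p → 1 ≤ c → c ≤ q →
      U (l + 1) r c + U l r c = max (U l (r - 1) c) (U l r (c - 1))
        + min (U (l + 1) (r + 1) c) (U (l + 1) r (c + 1)))
    (s l r c r' c' : ℕ) (a1 : 1 ≤ r) (a2 : r ≤ p) (a3 : 1 ≤ c) (a4 : c ≤ q)
    (hr : r + r' = p + 1) (hc : c + c' = q + 1) (hl : l + 1 = s + r + c) :
    U l r c + U s r' c' = b := by
  have T := trop_orb p q b U hU0 hUb h1 h2 h3 h4 hrec
  have t1 := T l r c a1 a2 a3 a4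
  have t2 := T s r' c' (by omega) (by omega) (by omega) (by omega)
  have t3 := t1.mul t2
  refine t3.unique ?_
  convert IsTrop.exp b using 1
  funext n
  have hpos : ∀ l r c, 1 ≤ r → r ≤ p → 1 ≤ c → c ≤ q → 0 < orb p q (Real.exp (((n : ℝ) + 1) * b))
        (fun r c => Real.exp (((n : ℝ) + 1) * U 0 r c)) l r c :=
    fun l r c a1 a2 a3 a4 => (T l r c a1 a2 a3 a4).1 n
  have hhi : ∀ l r c, 1 ≤ r → r ≤ p → 1 ≤ c → c ≤ q →
      0 < orw p q (Real.exp (((n : ℝ) + 1) * b))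
        (fun r c => Real.exp (((n : ℝ) + 1) * U 0 r c)) l (r+1) c +
        orw p q (Real.exp (((n : ℝ) + 1) * b))
        (fun r c => Real.exp (((n : ℝ) + 1) * U 0 r c)) l r (c+1) := by
    intro l r c a1 a2 a3 a4
    simp only [orw]
    have hb := Real.exp_pos (((n : ℝ) + 1) * b)
    rw [if_neg (show r ≠ p + 1 by omega), if_neg (show c ≠ q + 1 by omega)]
    by_cases e1 : r = p
    · rw [if_pos (by omega)]
      by_cases e2 : c = q
      · rw [if_pos e2, if_pos (by omega)]; positivity
      · rw [if_neg e2, if_neg (by omega), zero_add]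
        exact inv_pos.2 (hpos _ _ _ (by omega) (by omega) (by omega) (by omega))
    · rw [if_neg (by omega)]
      have t := inv_pos.2 (hpos l (r+1) c (by omega) (by omega) (by omega) (by omega))
      by_cases e2 : c = q
      · rw [if_pos (by omega), add_zero]; exact t
      · rw [if_neg (by omega)]
        exact add_pos t (inv_pos.2 (hpos _ _ _ (by omega) (by omega) (by omega) (by omega)))
  have G := geo p q (Real.exp (((n : ℝ) + 1) * b))
    (orb p q (Real.exp (((n : ℝ) + 1) * b)) (fun r c => Real.exp (((n : ℝ) + 1) * U 0 r c)))
    (orw p q (Real.exp (((n : ℝ) + 1) * b)) (fun r c => Real.exp (((n : ℝ) + 1) * U 0 r c)))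
    hq (Real.exp_pos _).ne'
    (by
      intro l r c a1 a2 a3 a4
      simp only [orw]
      rw [if_neg (by omega), if_neg (by omega)]
      exact mul_inv_cancel₀ (hpos l r c a1 a2 a3 a4).ne')
    (by
      intro l r _
      rw [orb_out _ _ _ _ _ _ _ (by omega), if_neg (by omega)])
    (by
      intro l
      rw [orb_out _ _ _ _ _ _ _ (by omega), if_pos (by omega)])
    (by
      intro l c _
      rw [orb_out _ _ _ _ _ _ _ (by omega), if_neg (by omega)])
    (by
      intro l r _ _
      simp only [orw]
      rw [if_neg (by omega), if_pos trivial])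
    (by intro l; simp [orw])
    (by intro l c hc; simp only [orw]; rw [if_pos trivial, if_neg (by omega)])
    (by
      intro l r c a1 a2 a3 a4
      rw [orb_succ p q _ _ l r c ⟨a1, a2, a3, a4⟩]
      have t1 := (hpos l r c a1 a2 a3 a4).ne'
      have t2 := (hhi (l+1) r c a1 a2 a3 a4).ne'
      rw [mul_inv]
      field_simp)
    c a3 a4 s l r r' c' a1 a2 hr hc hl
  simp only [orw] at G
  rw [if_neg (by omega), if_neg (by omega)] at G
  have t1 := (hpos l r c a1 a2 a3 a4).ne'
  have t2 := Real.exp_pos (((n : ℝ) + 1) * b)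
  have t2' := t2.ne'
  field_simp at G
  linarith
end
end BCD

namespace BCD

/-- Gelfand-Tsetlin pattern of a rectangular tableau -/
structure GT (a b k : ℕ) (C : ℤ → ℕ → ℤ) : Prop where
  nn : ∀ d x, 0 ≤ C d x
  le : ∀ d x, C d x ≤ b
  mono : ∀ d x, C d x ≤ C (d + 1) x
  inter : ∀ d x, C (d + 1) (x + 1) ≤ C d x
  low : ∀ d x, d ≤ 0 → C d x = 0
  high : ∀ d x, (k : ℤ) ≤ d → x < a → C d x = b
  out : ∀ d x, a ≤ x → C d x = 0

/-- number of entries of row `x` at most `d` -/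
noncomputable def cnt (a b : ℕ) (T : Fin a → Fin b → ℤ) (d : ℤ) (x : ℕ) : ℤ :=
  if h : x < a then ((Finset.univ.filter (fun y : Fin b => T ⟨x, h⟩ y ≤ d)).card : ℤ) else 0

lemma card_iff (b : ℕ) (Q : Fin b → Prop) (hQ : ∀ y y', y ≤ y' → Q y' → Q y) (y : Fin b) :
    Q y ↔ (y : ℕ) < (Finset.univ.filter Q).card := by
  constructor
  · intro h
    have : Finset.Iic y ⊆ Finset.univ.filter Q := by
      intro z hz
      simp at hz ⊢
      exact hQ z y hz h
    have := Finset.card_le_card this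
    rw [Fin.card_Iic] at this
    omega
  · intro h
    by_contra hn
    have : Finset.univ.filter Q ⊆ Finset.Iio y := by
      intro z hz
      simp at hz ⊢
      by_contra hc
      exact hn (hQ y z (not_lt.1 hc) hz)
    have := Finset.card_le_card this
    rw [Fin.card_Iio] at this
    omega

lemma card_int (b : ℕ) (s e : ℤ) (hs : 0 ≤ s) (hse : s ≤ e) (he : e ≤ b) :
    ((Finset.univ.filter (fun y : Fin b => s ≤ (y : ℤ) ∧ (y : ℤ) < e)).card : ℤ) = e - s := by
  have : (Finset.univ.filter (fun y : Fin b => s ≤ (y : ℤ) ∧ (y : ℤ) < e)).map Fin.valEmbedding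
      = Finset.Ico s.toNat e.toNat := by
    ext n
    simp only [Finset.mem_map, Finset.mem_filter, Finset.mem_univ, true_and, Finset.mem_Ico,
      Fin.valEmbedding_apply]
    constructor
    · rintro ⟨y, hy, rfl⟩; omega
    · intro h
      exact ⟨⟨n, by omega⟩, by constructor <;> simp <;> omega, rfl⟩
  rw [← Finset.card_map Fin.valEmbedding, this, Nat.card_Ico]
  omega

/-- `C` records the tableau `T` -/
def Rep (a b : ℕ) (T : Fin a → Fin b → ℤ) (C : ℤ → ℕ → ℤ) : Prop :=
  ∀ (x : Fin a) (y : Fin b) d, T x y ≤ d ↔ (y : ℤ) < C d x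

lemma rep_cnt (a b k : ℕ) (T : Fin a → Fin b → ℤ) (hT : IsSSYT a b k T) :
    Rep a b T (cnt a b T) := by
  intro x y d
  have := card_iff b (fun y => T x y ≤ d) (fun y y' h h' => (hT.2.1 x y y' h).trans h') y
  simp only [cnt, x.2, dif_pos, Fin.eta, Nat.cast_lt]
  convert this

lemma cnt_eq (a b k : ℕ) (T : Fin a → Fin b → ℤ) (C : ℤ → ℕ → ℤ) (hC : GT a b k C)
    (hR : Rep a b T C) : cnt a b T = C := by
  funext d x
  simp only [cnt]
  split_ifs with h
  · have := card_int b 0 (C d x) le_rfl (hC.nn d x) (hC.le d x)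
    rw [sub_zero] at this
    rw [← this]
    congr 2
    ext y
    simp only [Finset.mem_filter, Finset.mem_univ, true_and]
    rw [hR ⟨x, h⟩ y d]
    simp
  · exact (hC.out d x (by omega)).symm

lemma gt_cnt (a b k : ℕ) (T : Fin a → Fin b → ℤ) (hT : IsSSYT a b k T) :
    GT a b k (cnt a b T) where
  nn d x := by unfold cnt; split_ifs <;> simp
  le d x := by
    unfold cnt; split_ifs
    · have := Finset.card_le_univ (Finset.univ.filter (fun y : Fin b => T ⟨x, by assumption⟩ y ≤ d))
      simp only [Fintype.card_fin] at this
      exact_mod_cast this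
    · simp
  mono d x := by
    unfold cnt; split_ifs
    · norm_cast
      apply Finset.card_le_card
      intro y; simp; intro h; linarith
    · simp
  inter d x := by
    unfold cnt; split_ifs with h1 h2
    · norm_cast
      apply Finset.card_le_card
      intro y; simp; intro h
      have := hT.2.2 y ⟨x, h2⟩ ⟨x+1, h1⟩ (by simp)
      linarith
    · omega
    · simp
    · simp
  low d x hd := by
    unfold cnt; split_ifs with h
    · norm_cast
      rw [Finset.card_eq_zero, Finset.filter_eq_empty_iff]
      intro y _ hy
      have := (hT.1 ⟨x, h⟩ y).1
      linarith
    · rfl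
  high d x hd h := by
    unfold cnt; rw [dif_pos h, Finset.filter_true_of_mem]
    · simp
    · intro y _
      exact (hT.1 ⟨x, h⟩ y).2.trans hd
  out d x h := by unfold cnt; rw [dif_neg (by omega)]

lemma ssyt_of_rep (a b k : ℕ) (T : Fin a → Fin b → ℤ) (C : ℤ → ℕ → ℤ) (hC : GT a b k C)
    (hR : Rep a b T C) : IsSSYT a b k T := by
  refine ⟨fun x y => ⟨?_, ?_⟩, ?_, ?_⟩
  · by_contra h
    have := (hR x y 0).1 (by omega)
    rw [hC.low 0 _ le_rfl] at this
    omega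
  · rw [hR, hC.high _ _ le_rfl x.2]
    have := y.2
    omega
  · intro x y y' h
    rw [hR]
    have := (hR x y' (T x y')).1 le_rfl
    have h' : (y : ℕ) ≤ y' := h
    omega
  · intro y x x' h
    have step : ∀ (n : ℕ) (h1 : n + 1 < a), T ⟨n, by omega⟩ y < T ⟨n+1, h1⟩ y := by
      intro n h1
      have e1 := (hR ⟨n+1, h1⟩ y (T ⟨n+1, h1⟩ y)).1 le_rfl
      have e2 := hC.inter (T ⟨n+1, h1⟩ y - 1) n
      rw [sub_add_cancel] at e2
      have e3 := (hR ⟨n, by omega⟩ y (T ⟨n+1, h1⟩ y - 1)).2 (lt_of_lt_of_le e1 e2)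
      omega
    have gen : ∀ (m n : ℕ) (h1 : n + m + 1 < a), T ⟨n, by omega⟩ y < T ⟨n+m+1, h1⟩ y := by
      intro m
      induction m with
      | zero => intro n h1; exact step n h1
      | succ m ih => intro n h1; exact (ih n (by omega)).trans (step (n+m+1) h1)
    have hx : (x : ℕ) < x' := h
    have := gen (x' - x - 1) x (by omega)
    have e : (⟨(x:ℕ) + (x' - x - 1) + 1, by omega⟩ : Fin a) = x' := by
      ext; simp; omega
    rw [e] at this
    exact this

/-- toggle value -/
def tv (b : ℕ) (Cp Cm C0 : ℕ → ℤ) (x : ℕ) : ℤ :=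
  min (Cp x) (if x = 0 then (b : ℤ) else Cm (x - 1)) + max (Cp (x + 1)) (Cm x) - C0 x

/-- toggling level `j` -/
noncomputable def tog (a b : ℕ) (j : ℤ) (C : ℤ → ℕ → ℤ) : ℤ → ℕ → ℤ := fun d x =>
  if d = j ∧ x < a then tv b (C (j + 1)) (C (j - 1)) (C j) x else C d x

lemma gt_bounds {a b k : ℕ} {C : ℤ → ℕ → ℤ} (hC : GT a b k C) (j : ℤ) (x : ℕ) :
    max (C (j + 1) (x + 1)) (C (j - 1) x) ≤ C j x ∧
    C j x ≤ min (C (j + 1) x) (if x = 0 then (b : ℤ) else C (j - 1) (x - 1)) := by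
  constructor
  · refine max_le (hC.inter j x) ?_
    have := hC.mono (j-1) x
    rwa [sub_add_cancel] at this
  · refine le_min (hC.mono j x) ?_
    split_ifs with h
    · exact hC.le _ _
    · have := hC.inter (j-1) (x-1)
      rwa [sub_add_cancel, show x - 1 + 1 = x by omega] at this

lemma gt_tog (a b k : ℕ) (j : ℤ) (h1 : 1 ≤ j) (h2 : j < k) (C : ℤ → ℕ → ℤ)
    (hC : GT a b k C) : GT a b k (tog a b j C) := by
  have key : ∀ x, max (C (j + 1) (x + 1)) (C (j - 1) x) ≤ tv b (C (j + 1)) (C (j - 1)) (C j) x ∧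
      tv b (C (j + 1)) (C (j - 1)) (C j) x ≤
        min (C (j + 1) x) (if x = 0 then (b : ℤ) else C (j - 1) (x - 1)) := by
    intro x
    have := gt_bounds hC j x
    unfold tv
    constructor <;> omega
  refine ⟨?_, ?_, ?_, ?_, ?_, ?_, ?_⟩
  · intro d x
    unfold tog; split_ifs
    · exact ((hC.nn (j-1) x).trans (le_max_right _ _)).trans (key x).1
    · exact hC.nn d x
  · intro d x
    unfold tog; split_ifs
    · exact ((key x).2.trans (min_le_left _ _)).trans (hC.le (j+1) x)
    · exact hC.le d x
  · intro d x
    unfold tog; split_ifs with e1 e2 e2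
    · omega
    · rw [e1.1]; exact (key x).2.trans (min_le_left _ _)
    · obtain rfl : d = j - 1 := by omega
      exact (le_max_right _ _).trans (key x).1
    · exact hC.mono d x
  · intro d x
    unfold tog; split_ifs with e1 e2 e2
    · omega
    · obtain rfl : d = j - 1 := by omega
      have := (key (x+1)).2.trans (min_le_right _ _)
      simpa using this
    · rw [e2.1]; exact (le_max_left _ _).trans (key x).1
    · exact hC.inter d x
  · intro d x hd
    unfold tog; rw [if_neg (by omega)]; exact hC.low d x hd
  · intro d x hd hx
    unfold tog; rw [if_neg (by omega)]; exact hC.high d x hd hx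
  · intro d x hx
    unfold tog; rw [if_neg (by omega)]; exact hC.out d x hx

lemma bk_rep (a b k : ℕ) (j : ℤ) (T : Fin a → Fin b → ℤ) (hT : IsSSYT a b k T) :
    Rep a b (bk a b j T) (tog a b j (cnt a b T)) := by
  have hC := gt_cnt a b k T hT
  have hR := rep_cnt a b k T hT
  set C := cnt a b T with hCdef
  intro x y d
  obtain ⟨B1, B2⟩ := gt_bounds hC j x
  set Lo := max (C (j + 1) (x + 1)) (C (j - 1) x) with hLo
  set Up := min (C (j + 1) x) (if (x:ℕ) = 0 then (b : ℤ) else C (j - 1) (x - 1)) with hUp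
  have hlow : ∀ y' : Fin b, (T x y' = j ∧ ∀ h : (x : ℕ) + 1 < a, T ⟨(x : ℕ) + 1, h⟩ y' ≠ j + 1)
      ↔ (Lo ≤ (y' : ℤ) ∧ (y' : ℤ) < C j x) := by
    intro y'
    have r1 := hR x y' j
    have r2 := hR x y' (j-1)
    have nn := hC.nn (j+1) (x+1)
    rw [hLo, max_le_iff]
    by_cases h : (x : ℕ) + 1 < a
    · have r3 := hR ⟨(x:ℕ)+1, h⟩ y' (j+1)
      have r4 := hT.2.2 y' x ⟨(x:ℕ)+1, h⟩ (by rw [Fin.lt_def]; simp)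
      simp only [h, forall_true_left]
      simp only at r3
      constructor
      · rintro ⟨e1, e2⟩; omega
      · intro e; constructor
        · omega
        · have : ¬ T ⟨(x:ℕ)+1, h⟩ y' ≤ j + 1 := by omega
          omega
    · have := hC.out (j+1) (x+1) (by omega)
      simp only [h, IsEmpty.forall_iff, and_true]
      omega
  have hhigh : ∀ y' : Fin b, (T x y' = j + 1 ∧ ∀ x' : Fin a, (x' : ℕ) + 1 = (x : ℕ) → T x' y' ≠ j)
      ↔ (C j x ≤ (y' : ℤ) ∧ (y' : ℤ) < Up) := by
    intro y'
    have r1 := hR x y' j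
    have r2 := hR x y' (j+1)
    have hy := y'.2
    rw [hUp, lt_min_iff]
    by_cases h : (x : ℕ) = 0
    · rw [if_pos h]
      have : ∀ x' : Fin a, (x' : ℕ) + 1 = (x : ℕ) → T x' y' ≠ j := by intro x' hx'; omega
      rw [and_iff_left this]
      omega
    · rw [if_neg h]
      have hx1 : (x : ℕ) - 1 < a := by omega
      have r3 := hR ⟨(x:ℕ)-1, hx1⟩ y' (j-1)
      have r4 := hT.2.2 y' ⟨(x:ℕ)-1, hx1⟩ x (by rw [Fin.lt_def]; simp; omega)
      simp only at r3
      constructor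
      · rintro ⟨e1, e2⟩
        have := e2 ⟨(x:ℕ)-1, hx1⟩ (by simp; omega)
        omega
      · intro e
        refine ⟨by omega, ?_⟩
        intro x' hx'
        obtain rfl : x' = ⟨(x:ℕ)-1, hx1⟩ := by ext; simp; omega
        omega
  have hUb : Up ≤ b := (min_le_left _ _).trans (hC.le _ _)
  have hL0 : 0 ≤ Lo := (hC.nn _ _).trans (le_max_left _ _)
  have hval : bk a b j T x y = if Lo ≤ (y:ℤ) ∧ (y:ℤ) < Up then
      (if (y:ℤ) < Lo + Up - C j x then j else j + 1) else T x y := by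
    unfold bk
    simp only [hlow, hhigh]
    have e0 : (Lo ≤ (y:ℤ) ∧ (y:ℤ) < C j x ∨ C j x ≤ (y:ℤ) ∧ (y:ℤ) < Up) ↔
      (Lo ≤ (y:ℤ) ∧ (y:ℤ) < Up) := by omega
    simp only [e0]
    by_cases hy : Lo ≤ (y:ℤ) ∧ (y:ℤ) < Up
    swap
    · rw [if_neg hy, if_neg hy]
    rw [if_pos hy, if_pos hy]
    have c1 := card_int b Lo ((y:ℤ)+1) hL0 (by omega) (by have := y.2; omega)
    have c2 := card_int b (C j x) Up (hC.nn _ _) B2 hUb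
    have c3 : (Finset.univ.filter (fun y' : Fin b => (Lo ≤ (y':ℤ) ∧ (y':ℤ) < C j x ∨
        C j x ≤ (y':ℤ) ∧ (y':ℤ) < Up) ∧ y' ≤ y)) =
        Finset.univ.filter (fun y' : Fin b => Lo ≤ (y':ℤ) ∧ (y':ℤ) < (y:ℤ) + 1) := by
      ext y'
      simp only [Finset.mem_filter, Finset.mem_univ, true_and, Fin.le_def]
      omega
    rw [c3]
    congr 1
    rw [eq_iff_iff]
    omega
  rw [hval]
  have r0 := hR x y d
  have r1 := hR x y j
  have r2 := hR x y (j-1)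
  have r3 := hR x y (j+1)
  have hLo2 : C (j-1) x ≤ Lo := le_max_right _ _
  have hUp2 : Up ≤ C (j+1) x := min_le_left _ _
  have htv : tv b (C (j + 1)) (C (j - 1)) (C j) x = Up + Lo - C j x := rfl

  by_cases hd : d = j
  · subst hd
    have ht : tog a b d C d x = Up + Lo - C d x := by
      unfold tog; rw [if_pos (show d = d ∧ (x:ℕ) < a from ⟨rfl, x.2⟩), htv]
    rw [ht]
    split_ifs <;> omega
  · have ht : tog a b j C d x = C d x := by
      unfold tog; exact if_neg (show ¬ (d = j ∧ (x:ℕ) < a) from fun h => hd h.1)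
    rw [ht]
    split_ifs with e1 e2
    · rcases lt_or_gt_of_ne hd with h | h <;> omega
    · rcases lt_or_gt_of_ne hd with h | h <;> omega
    · exact r0

lemma bk_spec (a b k : ℕ) (j : ℤ) (h1 : 1 ≤ j) (h2 : j < k) (T : Fin a → Fin b → ℤ)
    (hT : IsSSYT a b k T) :
    IsSSYT a b k (bk a b j T) ∧ cnt a b (bk a b j T) = tog a b j (cnt a b T) := by
  have g := gt_tog a b k j h1 h2 _ (gt_cnt a b k T hT)
  have r := bk_rep a b k j T hT
  exact ⟨ssyt_of_rep a b k _ _ g r, cnt_eq a b k _ _ g r⟩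

/-- partial promotion -/
noncomputable def fold (a b : ℕ) (T : Fin a → Fin b → ℤ) (n : ℕ) : Fin a → Fin b → ℤ :=
  (List.range n).foldl (fun S (i : ℕ) => bk a b ((i : ℤ) + 1) S) T

lemma fold_succ (a b : ℕ) (T : Fin a → Fin b → ℤ) (n : ℕ) :
    fold a b T (n + 1) = bk a b ((n : ℤ) + 1) (fold a b T n) := by
  unfold fold
  rw [List.range_succ, List.foldl_append]
  rfl

lemma pro_fold (a b k : ℕ) (T : Fin a → Fin b → ℤ) : pro a b k T = fold a b T (k - 1) := by
  unfold pro fold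
  have : (List.flatMap (fun a : ℕ => [(a : ℤ)]) (List.range (k - 1))) =
      (List.range (k - 1)).map (fun a : ℕ => (a : ℤ)) := by
    rw [List.map_eq_flatMap]
  simp only [List.pure_def, List.bind_eq_flatMap, this, List.foldl_map]

lemma pro_spec (a b k : ℕ) (T : Fin a → Fin b → ℤ) (hT : IsSSYT a b k T) :
    IsSSYT a b k (pro a b k T) ∧ ∀ (d : ℤ) x, 1 ≤ d → d < k → x < a →
      cnt a b (pro a b k T) d x =
        tv b (cnt a b T (d + 1)) (cnt a b (pro a b k T) (d - 1)) (cnt a b T d) x := by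
  have H : ∀ n : ℕ, n + 1 ≤ k → 
      IsSSYT a b k (fold a b T n) ∧
      (∀ (d : ℤ), (d ≤ 0 ∨ n < d) →
        cnt a b (fold a b T n) d = cnt a b T d) ∧
      ∀ (d : ℤ) x, 1 ≤ d → d ≤ n → x < a →
      cnt a b (fold a b T n) d x =
        tv b (cnt a b T (d + 1))
          (cnt a b (fold a b T n) (d - 1))
          (cnt a b T d) x := by
    intro n
    induction n with
    | zero => intro _; exact ⟨by simpa [fold] using hT, by simp [fold], by intros; omega⟩
    | succ n ih =>
      intro hn
      obtain ⟨i1, i2, i3⟩ := ih (by omega)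
      rw [fold_succ]
      set S := fold a b T n
      obtain ⟨s1, s2⟩ := bk_spec a b k ((n:ℤ)+1) (by omega) (by omega) S i1
      have hne : ∀ d : ℤ, d ≠ (n:ℤ) + 1 → cnt a b (bk a b ((n:ℤ)+1) S) d = cnt a b S d := by
        intro d hd
        rw [s2]; funext x; unfold tog; rw [if_neg (by tauto)]
      refine ⟨s1, ?_, ?_⟩
      · intro d hd
        push_cast at hd
        rw [hne d (by omega)]
        exact i2 d (by omega)
      · intro d x h1 h2 hx
        push_cast at h2
        rw [hne (d-1) (by omega)]
        by_cases hd : d = (n:ℤ) + 1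
        · subst hd
          rw [s2]; unfold tog; rw [if_pos ⟨rfl, hx⟩]
          rw [i2 ((n:ℤ)+1+1) (by omega), i2 ((n:ℤ)+1) (by omega)]
        · rw [hne d hd]
          exact i3 d x h1 (by omega) hx
  rcases Nat.eq_zero_or_pos k with h | h
  · subst h
    exact ⟨by simpa [pro_fold, fold] using hT, by intros; omega⟩
  · obtain ⟨i1, i2, i3⟩ := H (k-1) (by omega)
    rw [pro_fold]
    exact ⟨i1, fun d x h1 h2 hx => i3 d x h1 (by omega) hx⟩

end BCD

namespace BCD

lemma gt_zero {a b k : ℕ} {C : ℤ → ℕ → ℤ} (hC : GT a b k C) (x : ℕ) :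
    ∀ d : ℤ, d ≤ x → C d x = 0 := by
  induction x with
  | zero => intro d hd; exact hC.low d 0 (by simpa using hd)
  | succ x ih =>
    intro d hd
    have h1 := ih (d - 1) (by push_cast at hd; omega)
    have h2 := hC.inter (d - 1) x
    rw [sub_add_cancel] at h2
    have := hC.nn d (x + 1)
    omega

lemma gt_top {a b k : ℕ} {C : ℤ → ℕ → ℤ} (hC : GT a b k C) (n : ℕ) :
    ∀ (d : ℤ) (x : ℕ), x + n + 1 = a → (k : ℤ) ≤ d + n → C d x = b := by
  induction n with
  | zero => intro d x hx hd; exact hC.high d x (by simpa using hd) (by omega)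
  | succ n ih =>
    intro d x hx hd
    have h1 := ih (d + 1) (x + 1) (by omega) (by push_cast at hd; omega)
    have h2 := hC.inter d x
    have := hC.le d x
    omega

lemma key0 (a b k : ℕ) (ha : 0 < a) (hb : 0 < b) (lam : ℕ → ℤ → ℕ → ℤ)
    (hG : ∀ i, GT a b k (lam i))
    (hrec : ∀ i (d : ℤ) x, 1 ≤ d → d < k → x < a →
      lam (i + 1) d x = tv b (lam i (d + 1)) (lam (i + 1) (d - 1)) (lam i d) x)
    (i : ℕ) (hi : k ≤ i) (d e x x' : ℕ) (hde : d + e = k) (hx : x + x' + 1 = a) :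
    lam (i + e) d x + lam i e x' = b := by
  have hak : a ≤ k := by
    by_contra h
    have h1 := gt_zero (hG 0) k k le_rfl
    have h2 := (hG 0).high k k le_rfl (by omega)
    omega
  obtain ⟨q, rfl⟩ := Nat.exists_eq_add_of_le hak
  by_cases c1 : d ≤ x
  · rw [gt_zero (hG _) x d (by omega), gt_top (hG _) x e x' (by omega) (by push_cast; omega)]
    simp
  by_cases c2 : x + q + 1 ≤ d
  · rw [gt_zero (hG _) x' e (by omega), gt_top (hG _) x' d x (by omega) (by push_cast; omega)]
    simp
  let V : ℕ → ℕ → ℕ → ℤ := fun l r c => if r = 0 then 0 else if a < r then (b:ℤ) else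
    if c = 0 then 0 else if q < c then (b:ℤ) else lam (l + q - c) ((c + a - r : ℕ) : ℤ) (a - r)
  have hV : ∀ l r c i x (d : ℤ), 1 ≤ r → 1 ≤ c → c ≤ q → r + x = a → c + i = l + q → d = c + x →
      V l r c = lam i d x := by
    intro l r c i x d h1 h2 h3 h4 h5 h6
    simp only [V]
    rw [if_neg (by omega), if_neg (by omega), if_neg (by omega), if_neg (by omega)]
    rw [show l + q - c = i by omega, show a - r = x by omega,
      show ((c + a - r : ℕ) : ℤ) = d by omega]
  have V0 : ∀ l r c, 0 ≤ V l r c := by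
    intro l r c; simp only [V]; split_ifs
    · exact le_rfl
    · omega
    · exact le_rfl
    · omega
    · exact (hG _).nn _ _
  have Vb : ∀ l r c, V l r c ≤ b := by
    intro l r c; simp only [V]; split_ifs
    · omega
    · exact le_rfl
    · omega
    · exact le_rfl
    · exact (hG _).le _ _
  have V1 : ∀ l c, V l 0 c = 0 := by intro l c; simp [V]
  have V2 : ∀ l r, r ≤ a → V l r 0 = 0 := by
    intro l r h; simp only [V]; rw [if_neg (show ¬ a < r by omega)]; simp
  have V3 : ∀ l c, V l (a + 1) c = b := by intro l c; simp [V]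
  have V4 : ∀ l r, 1 ≤ r → r ≤ a → V l r (q + 1) = b := by
    intro l r h1 h2; simp only [V]
    rw [if_neg (by omega), if_neg (by omega), if_neg (by omega), if_pos (by omega)]
  have Vrec : ∀ l r c, 1 ≤ r → r ≤ a → 1 ≤ c → c ≤ q →
      V (l+1) r c + V l r c = max (V l (r-1) c) (V l r (c-1)) +
        min (V (l+1) (r+1) c) (V (l+1) r (c+1)) := by
    intro l r c h1 h2 h3 h4
    obtain ⟨x, hx⟩ := Nat.exists_eq_add_of_le h2
    obtain ⟨i, hi⟩ : ∃ i, c + i = l + q := ⟨l + q - c, by omega⟩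
    have R := hrec i ((c:ℤ) + x) x (by omega) (by push_cast; omega) (by omega)
    unfold tv at R
    have e1 := hV (l+1) r c (i+1) x ((c:ℤ) + x) h1 h3 h4 hx.symm (by omega) rfl
    have e2 := hV l r c i x ((c:ℤ) + x) h1 h3 h4 hx.symm (by omega) rfl
    have e3 : V l (r-1) c = lam i ((c:ℤ) + x + 1) (x + 1) := by
      by_cases h : r = 1
      · subst h
        rw [(hG i).out _ (x+1) (by omega)]; exact V1 l c
      · exact hV l (r-1) c i (x+1) _ (by omega) h3 h4 (by omega) hi (by push_cast; ring)
    have e4 : V l r (c-1) = lam (i+1) ((c:ℤ) + x - 1) x := by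
      by_cases h : c = 1
      · subst h
        rw [gt_zero (hG (i+1)) x _ (by push_cast; omega)]; exact V2 l r h2
      · exact hV l r (c-1) (i+1) x _ (by omega) (by omega) (by omega) (by omega) (by omega)
          (by omega)
    have e5 : V (l+1) (r+1) c = if x = 0 then (b:ℤ) else lam (i+1) ((c:ℤ) + x - 1) (x-1) := by
      by_cases h : x = 0
      · rw [if_pos h]
        have : r = a := by omega
        rw [this]; exact V3 _ _
      · rw [if_neg h]
        exact hV (l+1) (r+1) c (i+1) (x-1) _ (by omega) h3 h4 (by omega) (by omega) (by omega)
    have e6 : V (l+1) r (c+1) = lam i ((c:ℤ) + x + 1) x := by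
      by_cases h : c = q
      · subst h
        rw [gt_top (hG i) (r-1) _ x (by omega) (by push_cast; omega)]; exact V4 _ r h1 h2
      · exact hV (l+1) r (c+1) i x _ (by omega) (by omega) (by omega) (by omega) (by omega)
          (by push_cast; ring)
    rw [e1, e2, e3, e4, e5, e6, R, min_comm]
    ring
  obtain ⟨c, hc⟩ : ∃ c, d = c + x := ⟨d - x, by omega⟩
  obtain ⟨c', hc'⟩ : ∃ c', c + c' = q + 1 := ⟨q + 1 - c, by omega⟩
  obtain ⟨l, hl⟩ : ∃ l, c + (i + e) = l + q := ⟨c + (i + e) - q, by omega⟩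
  obtain ⟨s, hs⟩ : ∃ s, c' + i = s + q := ⟨c' + i - q, by omega⟩
  have M := trop_main a q (b:ℝ) (fun l r c => ((V l r c : ℤ) : ℝ)) (by omega)
    (fun l r c => by exact_mod_cast V0 l r c) (fun l r c => by exact_mod_cast Vb l r c)
    (fun l c => by exact_mod_cast V1 l c) (fun l r h => by exact_mod_cast V2 l r h)
    (fun l c => by exact_mod_cast V3 l c) (fun l r h h' => by exact_mod_cast V4 l r h h')
    (fun l r c h1 h2 h3 h4 => by exact_mod_cast Vrec l r c h1 h2 h3 h4)
    s l (x' + 1) c (x + 1) c' (by omega) (by omega) (by omega) (by omega) (by omega) (by omega)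
    (by omega)
  have M' : V l (x'+1) c + V s (x+1) c' = b := by exact_mod_cast M
  rw [hV l (x'+1) c (i+e) x d (by omega) (by omega) (by omega) (by omega) (by omega) (by omega),
    hV s (x+1) c' i x' e (by omega) (by omega) (by omega) (by omega) (by omega) (by omega)] at M'
  exact M'

lemma key1 (a b k : ℕ) (ha : 0 < a) (hb : 0 < b) (hk : 0 < k) (lam : ℕ → ℤ → ℕ → ℤ)
    (hG : ∀ i, GT a b k (lam i))
    (hrec : ∀ i (d : ℤ) x, 1 ≤ d → d < k → x < a →
      lam (i + 1) d x = tv b (lam i (d + 1)) (lam (i + 1) (d - 1)) (lam i d) x) :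
    (∀ i, lam (i + k) = lam i) ∧ ∀ (i d e x x' : ℕ), d + e = k → x + x' + 1 = a →
    lam (i + e) d x + lam i e x' = b := by
  have K := key0 a b k ha hb lam hG hrec
  have out : ∀ i j (d : ℤ) x, (d ≤ 0 ∨ k ≤ d ∨ a ≤ x) → lam i d x = lam j d x := by
    intro i j d x h
    by_cases hx : a ≤ x
    · rw [(hG i).out d x hx, (hG j).out d x hx]
    · rcases h with h | h | h
      · rw [(hG i).low d x h, (hG j).low d x h]
      · rw [(hG i).high d x h (by omega), (hG j).high d x h (by omega)]
      · exact absurd h hx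
  have P1 : ∀ i, k ≤ i → lam (i + k) = lam i := by
    intro i hi
    funext d x
    by_cases h : d ≤ 0 ∨ (k:ℤ) ≤ d ∨ a ≤ x
    · exact out _ _ _ _ h
    · obtain ⟨d, rfl⟩ := Int.eq_ofNat_of_zero_le (show 0 ≤ d by omega)
      have k1 := K (i + d) (by omega) d (k - d) x (a - 1 - x) (by omega) (by omega)
      have k2 := K i hi (k - d) d (a - 1 - x) x (by omega) (by omega)
      rw [show i + d + (k - d) = i + k by omega] at k1
      omega
  have back : ∀ i, lam (i + 1 + k) = lam (i + 1) → lam (i + k) = lam i := by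
    intro i h
    have D : ∀ (n : ℕ) (d : ℤ), d + n = k → ∀ x, lam (i + k) d x = lam i d x := by
      intro n
      induction n with
      | zero => intro d hd x; exact out _ _ _ _ (by right; left; simpa using hd.ge)
      | succ n ih =>
        intro d hd x
        push_cast at hd
        by_cases h' : d ≤ 0 ∨ (k:ℤ) ≤ d ∨ a ≤ x
        · exact out _ _ _ _ h'
        · have r1 := hrec (i + k) d x (by omega) (by omega) (by omega)
          have r2 := hrec i d x (by omega) (by omega) (by omega)
          have e := ih (d + 1) (by omega)
          rw [show i + k + 1 = i + 1 + k by omega, h] at r1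
          unfold tv at r1 r2
          rw [e, e] at r1
          omega
    funext d x
    by_cases h' : (k:ℤ) ≤ d
    · exact out _ _ _ _ (by right; left; exact h')
    · exact D (k - d).toNat d (by omega) x
  have P : ∀ n i, i + n = k → lam (i + k) = lam i := by
    intro n
    induction n with
    | zero => intro i hi; exact P1 i (by omega)
    | succ n ih => intro i hi; exact back i (ih (i+1) (by omega))
  have PP : ∀ i, lam (i + k) = lam i := by
    intro i
    by_cases h : k ≤ i
    · exact P1 i h
    · exact P (k - i) i (by omega)
  refine ⟨PP, ?_⟩
  intro i d e x x' h1 h2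
  have := K (i + k) (by omega) d e x x' h1 h2
  rw [show i + k + e = i + e + k by omega, PP, PP] at this
  exact this

lemma shift_map (k : ℕ) (f : ℕ → ℤ) (hf : ∀ i, f (i + k) = f i) (s : ℕ) :
    (Multiset.range k).map (fun i => f (i + s)) = (Multiset.range k).map f := by
  induction s with
  | zero => rfl
  | succ s ih =>
    rw [← ih]
    have e1 : (Multiset.range (k+1)).map (fun i => f (i + s)) =
        f (k + s) ::ₘ (Multiset.range k).map (fun i => f (i + s)) := by
      rw [Multiset.range_succ, Multiset.map_cons]
    have e2 : (Multiset.range (k+1)).map (fun i => f (i + s)) =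
        f (0 + s) ::ₘ (Multiset.range k).map (fun i => f (i + (s + 1))) := by
      have : Multiset.range (k+1) = 0 ::ₘ (Multiset.range k).map Nat.succ := by
        simp only [Multiset.range, List.range_succ_eq_map]
        rfl
      rw [this, Multiset.map_cons, Multiset.map_map]
      congr 1
      apply Multiset.map_congr rfl
      intro i _
      simp only [Function.comp]
      congr 1
      omega
    rw [e1, show k + s = s + k by omega, hf, zero_add] at e2
    exact ((Multiset.cons_inj_right _).1 e2).symm

lemma bcount_eq (a b : ℕ) (T : Fin a → Fin b → ℤ) (x : Fin a) (d : ℤ) :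
    (bcount a b T x d : ℤ) = b - cnt a b T d x := by
  have h := Finset.card_filter_add_card_filter_not (s := (Finset.univ : Finset (Fin b)))
    (fun y => T x y ≤ d)
  simp only [not_le, Finset.card_univ, Fintype.card_fin] at h
  simp only [cnt, x.2, dif_pos, Fin.eta, bcount]
  have h' : ((Finset.univ.filter (fun y : Fin b => T x y ≤ d)).card : ℤ) +
      ((Finset.univ.filter (fun y : Fin b => d < T x y)).card : ℤ) = b := by
    have h2 : ((Finset.univ.filter (fun y : Fin b => T x y ≤ d)).card +
      (Finset.univ.filter (fun y : Fin b => d < T x y)).card : ℕ) = b := by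
      convert h
    exact_mod_cast h2
  have h3 : ∀ u v w : ℤ, u + v = w → v = w - u := by intros; omega
  exact h3 _ _ _ h'

theorem final (a b k : ℕ) (ha : 0 < a) (hb : 0 < b) (hk : 0 < k)
    (T : Fin a → Fin b → ℤ) (hT : IsSSYT a b k T) (x : Fin a) (d : ℤ) :
    BCDist a b k T x.rev ((k : ℤ) - d) =
      (BCDist a b k T x d).map (fun m => (b : ℤ) - m) := by
  let lam : ℕ → ℤ → ℕ → ℤ := fun i => cnt a b ((pro a b k)^[i] T)
  have hS : ∀ i, IsSSYT a b k ((pro a b k)^[i] T) := by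
    intro i
    induction i with
    | zero => exact hT
    | succ i ih => rw [Function.iterate_succ_apply']; exact (pro_spec a b k _ ih).1
  have hG : ∀ i, GT a b k (lam i) := fun i => gt_cnt a b k _ (hS i)
  obtain ⟨P, K⟩ := key1 a b k ha hb hk lam hG (by
    intro i d x h1 h2 h3
    have := (pro_spec a b k _ (hS i)).2 d x h1 h2 h3
    simp only [lam, Function.iterate_succ_apply']
    exact this)
  have hrev : (x : ℕ) + (x.rev : ℕ) + 1 = a := by
    rw [Fin.val_rev]; have := x.2; omega
  unfold BCDist
  simp only [bcount_eq, Multiset.map_map, Function.comp, sub_sub_cancel]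
  change (Multiset.range k).map (fun i => (b:ℤ) - lam i ((k:ℤ) - d) x.rev) =
    (Multiset.range k).map (fun i => lam i d x)
  by_cases h1 : d < 0
  · apply Multiset.map_congr rfl
    intro i _
    rw [(hG i).low d x h1.le, (hG i).high _ _ (by omega) x.rev.2]
    ring
  by_cases h2 : (k:ℤ) < d
  · apply Multiset.map_congr rfl
    intro i _
    rw [(hG i).low _ x.rev (by omega), (hG i).high d x h2.le x.2]
    ring
  obtain ⟨d, rfl⟩ := Int.eq_ofNat_of_zero_le (show 0 ≤ d by omega)
  rw [← shift_map k (fun i => lam i d x) (fun i => by simp only [P]) (k - d)]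
  apply Multiset.map_congr rfl
  intro i _
  have := K i d (k - d) x x.rev (by omega) hrev
  rw [show ((k - d : ℕ) : ℤ) = (k:ℤ) - d by omega] at this
  omega

end BCD

/-- for `T ∈ SSYT_k(a × b)`, a row `x`, and `d ∈ ℤ`,
`BCDist(T, a+1−x, k−d) = {b − m : m ∈ BCDist(T, x, d)}`, where `a+1−x` is the row
corresponding to `x` under 180° rotation. -/
theorem ssyt_bcdist_antipodal (a b k : ℕ) (ha : 0 < a) (hb : 0 < b) (hk : 0 < k)
    (T : Fin a → Fin b → ℤ) (hT : IsSSYT a b k T) (x : Fin a) (d : ℤ) :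
    BCDist a b k T x.rev ((k : ℤ) - d) =
      (BCDist a b k T x d).map (fun m => (b : ℤ) - m) := by
  exact BCD.final a b k ha hb hk T hT x d
end

section
/- Let a, b, k be positive integers with k ≥ a, let x be a row index in {1,...,a}, and d ∈ ℤ. For T ∈ SSYT_k(a × b), define #B(T,x,d) as the number of boxes in row x of T with entry greater than d. Then the statistic T ↦ #B(T,x,d) + #B(T,a+1−x,k−d) is b-mesic under promotion: the average of this statistic over every promotion orbit equals b. -/
open scoped Classical

noncomputable def rd (a : ℕ) (f : ℕ → Fin a → ℝ) : ℝ := Matrix.det (Matrix.of fun i : Fin a => f i)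

lemma rd_congr {a : ℕ} {f g : ℕ → Fin a → ℝ} (h : ∀ i, i < a → f i = g i) : rd a f = rd a g := by
  unfold rd
  congr 2
  funext i
  exact h i i.2

lemma rd_eq_zero {a : ℕ} (f : ℕ → Fin a → ℝ) (i j : ℕ) (hi : i < a) (hj : j < a) (hij : i ≠ j)
    (h : f i = f j) : rd a f = 0 := by
  unfold rd
  exact Matrix.det_zero_of_row_eq (i := ⟨i, hi⟩) (j := ⟨j, hj⟩) (by simpa [Fin.ext_iff] using hij) h

lemma rd_swap {a : ℕ} (f : ℕ → Fin a → ℝ) (i j : ℕ) (hi : i < a) (hj : j < a) (hij : i ≠ j) :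
    rd a (fun l => f (Equiv.swap i j l)) = - rd a f := by
  unfold rd
  have := Matrix.det_permute (Equiv.swap (⟨i, hi⟩ : Fin a) ⟨j, hj⟩)
    (Matrix.of fun i : Fin a => f i)
  rw [Equiv.Perm.sign_swap (by simpa [Fin.ext_iff] using hij)] at this
  simp only [Units.val_neg, Units.val_one, Int.cast_neg, Int.cast_one, neg_mul, one_mul] at this
  rw [← this]
  congr 1
  ext l m
  simp only [Matrix.submatrix_apply, Matrix.of_apply, id]
  congr 1
  simp only [Equiv.swap_apply_def, Fin.ext_iff]
  split_ifs <;> rfl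

lemma rd_move {a : ℕ} (f : ℕ → Fin a → ℝ) (i0 n : ℕ) (h : i0 + n < a) :
    rd a (fun i => if i < i0 then f i else if i < i0 + n then f (i+1) else
      if i = i0 + n then f i0 else f i) = (-1)^n * rd a f := by
  induction n with
  | zero =>
    simp only [pow_zero, one_mul, add_zero]
    apply rd_congr
    intro i hi
    grind
  | succ n ih =>
    have ih := ih (by omega)
    rw [pow_succ]
    have h2 : ((-1:ℝ)^n * -1) * rd a f = - ((-1)^n * rd a f) := by ring
    rw [h2, ← ih, ← rd_swap _ (i0+n) (i0+n+1) (by omega) (by omega) (by omega)]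
    apply rd_congr
    intro i hi
    simp only [Equiv.swap_apply_def]
    grind

lemma rd_update {a : ℕ} (f : ℕ → Fin a → ℝ) (i : ℕ) (hi : i < a) (α : Fin a → ℝ) :
    rd a (Function.update f i α) = ((Matrix.of fun i : Fin a => f i).updateRow ⟨i, hi⟩ α).det := by
  unfold rd
  congr 1
  ext l m
  simp only [Matrix.updateRow_apply, Matrix.of_apply, Function.update_apply, Fin.ext_iff]
  split_ifs <;> rfl

lemma rd_smul {a : ℕ} (f : ℕ → Fin a → ℝ) (i : ℕ) (hi : i < a) (c : ℝ) (α : Fin a → ℝ) :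
    rd a (Function.update f i (c • α)) = c * rd a (Function.update f i α) := by
  rw [rd_update _ _ hi, rd_update _ _ hi, Matrix.det_updateRow_smul]

lemma rd_sum {a : ℕ} (f : ℕ → Fin a → ℝ) (i : ℕ) (hi : i < a) (g : Fin a → ℝ)
    (α : Fin a → Fin a → ℝ) :
    rd a (Function.update f i (∑ l, g l • α l)) = ∑ l, g l * rd a (Function.update f i (α l)) := by
  have e : ∀ α, rd a (Function.update f i α) =
      Matrix.detRowAlternating.toMultilinearMap.toLinearMap (Matrix.of fun i : Fin a => f i) ⟨i, hi⟩ α := by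
    intro α
    rw [rd_update _ _ hi]
    rfl
  simp only [e, map_sum, map_smul, smul_eq_mul]

lemma rd_rot {a : ℕ} (ha : 0 < a) (f : ℕ → Fin a → ℝ) (c : ℝ) (m : ℕ)
    (h : ∀ i, i < m → f (i + a) = ((-1)^(a-1) * c) • f i) :
    rd a (fun i => f (i + m)) = c ^ m * rd a f := by
  induction m with
  | zero => simp
  | succ m ih =>
    have ih := ih (fun i hi => h i (by omega))
    rw [pow_succ, mul_right_comm, ← ih]
    have hm := rd_move (fun i => f (i + m)) 0 (a-1) (by omega)
    have h1 : rd a (fun i => f (i + (m+1))) = ((-1)^(a-1) * c) * rd a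
      (fun i => if i < 0 then f (i + m) else if i < 0 + (a-1) then f (i+1+m) else
      if i = 0 + (a-1) then f (0 + m) else f (i+m)) := by
      have h2 := rd_smul (fun i => f (i + (m+1))) (a-1) (by omega) ((-1)^(a-1) * c) (f m)
      have h3 : rd a (Function.update (fun i => f (i + (m+1))) (a-1) (((-1)^(a-1) * c) • f m)) =
          rd a (fun i => f (i + (m+1))) := by
        apply rd_congr
        intro i hi
        rw [Function.update_apply]
        split_ifs with h5
        · rw [← h m (by omega)]
          congr 1; omega
        · rfl
      rw [← h3, h2]
      congr 1
      apply rd_congr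
      intro i hi
      rw [Function.update_apply]
      split_ifs with h5 h6 h7 h8
      all_goals first | omega | skip
      · simp
      · congr 1; omega
    rw [h1, hm]
    have h4 : ((-1:ℝ)^(a-1))*(-1)^(a-1) = 1 := by rw [← mul_pow]; simp
    linear_combination (c * rd a (fun i => f (i+m))) * h4

lemma rd_plucker {a : ℕ} (f : ℕ → Fin a → ℝ) (i j : ℕ) (hi : i < a) (hj : j < a) (hij : i ≠ j)
    (F : (Fin a → ℝ) → (Fin a → ℝ) → ℝ)
    (hF : ∀ α β, F α β = rd a (Function.update (Function.update f i α) j β))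
    (p q u w : Fin a → ℝ) :
    F p u * F q w = F p w * F q u + F p q * F u w := by
  have hanti : ∀ α β, F α β = - F β α := by
    intro α β
    rw [hF, hF, ← rd_swap _ i j hi hj hij]
    apply rd_congr
    intro l hl
    simp only [Equiv.swap_apply_def, Function.update_apply]
    grind
  have hF2 : ∀ α β, F α β = rd a (Function.update (Function.update f j β) i α) := by
    intro α β
    rw [hF, Function.update_comm hij]
  set n : ℕ → Fin a → ℝ := Function.update (Function.update f i p) j q with hn
  set N : Matrix (Fin a) (Fin a) ℝ := Matrix.of fun i : Fin a => n i with hN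
  have hdet : N.det = F p q := by rw [hF]; rfl
  have hc := Matrix.mulVec_cramer N.transpose u
  have hk : ∀ l : Fin a, Matrix.cramer N.transpose u l = rd a (Function.update n l u) := by
    intro l
    rw [Matrix.cramer_transpose_apply, rd_update _ _ l.2]
  have hx : N.det • u = ∑ l : Fin a, (rd a (Function.update n l u)) • n l := by
    rw [← Matrix.det_transpose N, ← hc]
    funext m
    simp only [Matrix.mulVec, dotProduct, hk]
    simp [hN, mul_comm]
  have h1 : F (N.det • u) w = N.det * F u w := by
    rw [hF2, hF2, rd_smul _ _ hi]
  rw [hx, hF2, rd_sum _ _ hi (fun l : Fin a => rd a (Function.update n l u)) (fun l : Fin a => n l)] at h1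
  have hne : (⟨i, hi⟩ : Fin a) ≠ ⟨j, hj⟩ := by simpa [Fin.ext_iff] using hij
  rw [Finset.sum_eq_add ⟨i, hi⟩ ⟨j, hj⟩ hne] at h1
  · have a1 : n i = p := by simp [hn, Function.update_apply, hij]
    have a2 : n j = q := by simp [hn]
    have k1 : rd a (Function.update n i u) = F u q := by
      rw [hF]; congr 1
      funext l; simp only [hn, Function.update_apply]; grind
    have k2 : rd a (Function.update n j u) = F p u := by
      rw [hF]; congr 1
      funext l; simp only [hn, Function.update_apply]; grind
    simp only [a1, a2, k1, k2, ← hF2] at h1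
    rw [hanti u q, hdet] at h1
    linarith
  · intro l _ hl
    have l1 : (l : ℕ) ≠ i := fun h => hl.1 (Fin.ext h)
    have l2 : (l : ℕ) ≠ j := fun h => hl.2 (Fin.ext h)
    rw [rd_eq_zero (Function.update (Function.update f j w) i (n l)) i l hi l.2 (Ne.symm l1), mul_zero]
    simp [hn, Function.update_apply, l1, l2]
  · simp
  · simp
noncomputable def sD (a : ℕ) (v : ℕ → Fin a → ℝ) (t s r : ℕ) : ℝ :=
  rd a (fun i => if i < r then v (t + i) else v (s + (i - r)))

lemma sD_contig {a : ℕ} (v : ℕ → Fin a → ℝ) (t r : ℕ) :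
    sD a v t (t + r) r = sD a v t t 0 := by
  apply rd_congr
  intro i hi
  simp only [Nat.not_lt_zero, if_false]
  split_ifs
  · rfl
  · congr 1; omega

lemma sD_zero {a : ℕ} (v : ℕ → Fin a → ℝ) (t s : ℕ) :
    sD a v t s 0 = sD a v s s 0 := by
  apply rd_congr
  intro i hi
  simp

lemma sD_full {a : ℕ} (v : ℕ → Fin a → ℝ) (t s : ℕ) :
    sD a v t s a = sD a v t t 0 := by
  apply rd_congr
  intro i hi
  simp [hi]

lemma sD_period {a : ℕ} (ha : 0 < a) (v : ℕ → Fin a → ℝ) (c : ℝ) (t t' s r : ℕ) (hr : r ≤ a)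
    (h : ∀ i, i < r → v (t' + i) = ((-1)^(a-1) * c) • v (t + i)) :
    sD a v s t' (a - r) = c ^ r * sD a v t s r := by
  have := rd_rot ha (fun i => if i < r then v (t + i) else if i < a then v (s + (i - r)) else
    ((-1)^(a-1) * c) • v (t + (i - a))) c r (by
      intro i hi
      rw [if_neg (by omega), if_neg (by omega), if_pos hi]
      congr 3; omega)
  unfold sD
  convert this using 1
  · apply rd_congr
    intro i hi
    split_ifs
    all_goals first | omega | skip
    · congr 1; omega
    · rw [h _ (by omega)]
      congr 3; omega
  · congr 1
    apply rd_congr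
    intro i hi
    simp only [hi, if_true]

lemma sD_plucker {a : ℕ} (v : ℕ → Fin a → ℝ) (t s r : ℕ) (hr : 1 ≤ r) (hra : r < a) :
    sD a v t s r * sD a v (t+1) (s+1) r =
      sD a v t (s+1) r * sD a v (t+1) s r + sD a v t (s+1) (r+1) * sD a v (t+1) s (r-1) := by
  set f : ℕ → Fin a → ℝ := fun i => if i < r then v (t + i) else v (s + (i - r)) with hf
  have key := rd_plucker f 0 r (by omega) hra (by omega)
    (fun α β => rd a (Function.update (Function.update f 0 α) r β)) (fun _ _ => rfl)
    (v t) (v (t + r)) (v s) (v (s + (a - r)))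
  have m1 : ∀ α β, (-1)^(r-1) * rd a (Function.update (Function.update f 0 α) r β) =
      rd a (fun i => if i + 1 < r then v (t + 1 + i) else if i + 1 = r then α else
        if i = r then β else v (s + (i - r))) := by
    intro α β
    rw [← rd_move _ 0 (r-1) (by omega)]
    apply rd_congr
    intro i hi
    simp only [Function.update_apply, hf]
    have e : t + (i + 1) = t + 1 + i := by omega
    rw [e]
    clear_value f
    grind
  have m2 : ∀ g : ℕ → Fin a → ℝ, (-1)^(a-1-r) * rd a g = rd a (fun i => if i < r then g i else
      if i + 1 < a then g (i+1) else g r) := by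
    intro g
    rw [← rd_move _ r (a-1-r) (by omega)]
    apply rd_congr
    intro i hi
    grind
  have e1 : rd a (Function.update (Function.update f 0 (v t)) r (v s)) = sD a v t s r := by
    apply rd_congr
    intro i hi
    simp only [Function.update_apply, hf]
    split_ifs with h1 h2 <;> first | omega | simp [*]
  have e2 : (-1)^(a-1-r) * ((-1)^(r-1) * rd a (Function.update (Function.update f 0 (v (t+r))) r (v (s + (a-r)))))
      = sD a v (t+1) (s+1) r := by
    rw [m1, m2]
    apply rd_congr
    intro i hi
    simp only
    split_ifs <;> first | omega | (congr 1 <;> omega) | simp_all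
  have e3 : (-1)^(a-1-r) * (rd a (Function.update (Function.update f 0 (v t)) r (v (s + (a-r)))))
      = sD a v t (s+1) r := by
    rw [m2]
    apply rd_congr
    intro i hi
    simp only [Function.update_apply, hf]
    split_ifs <;> first | omega | (congr 1 <;> omega) | simp_all
  have e4 : ((-1)^(r-1) * rd a (Function.update (Function.update f 0 (v (t+r))) r (v s)))
      = sD a v (t+1) s r := by
    rw [m1]
    apply rd_congr
    intro i hi
    split_ifs <;> first | omega | (congr 1 <;> omega) | simp_all
  have e5 : rd a (Function.update (Function.update f 0 (v t)) r (v (t+r))) = sD a v t (s+1) (r+1) := by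
    apply rd_congr
    intro i hi
    simp only [Function.update_apply, hf]
    split_ifs <;> first | omega | (congr 1 <;> omega) | simp_all
  have e6 : (-1)^(a-1-r) * ((-1)^(r-1) * rd a (Function.update (Function.update f 0 (v s)) r (v (s + (a-r)))))
      = sD a v (t+1) s (r-1) := by
    rw [m1, m2]
    apply rd_congr
    intro i hi
    simp only
    split_ifs <;> first | omega | (congr 1 <;> omega) | simp_all
  rw [← e1, ← e2, ← e3, ← e4, ← e5, ← e6]
  linear_combination ((-1)^(a-1-r) * (-1)^(r-1)) * key

lemma exists_vecs {a : ℕ} (ha : 0 < a) (c : ℕ → ℕ → ℝ) (hc : ∀ r s, c r s ≠ 0)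
    (h1 : ∀ r, r ≤ a → c r r = 1) (h2 : ∀ s, c a s = 1) (n : ℕ) :
    ∃ v : ℕ → Fin a → ℝ, (∀ i : Fin a, v i = Pi.single i 1) ∧
      ∀ r s, r ≤ a → r ≤ s → s + a - r ≤ a + n → sD a v 0 s r = c r s := by
  have hfull : ∀ v : ℕ → Fin a → ℝ, (∀ i : Fin a, v i = Pi.single i 1) → sD a v 0 0 0 = 1 := by
    intro v hv
    unfold sD rd
    convert Matrix.det_one (n := Fin a) (R := ℝ)
    ext i j
    simp [hv, Matrix.one_apply, Pi.single_apply, eq_comm]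
  induction n with
  | zero =>
    refine ⟨fun i j => if i = j then 1 else 0, ?_, ?_⟩
    · intro i; funext j; simp [Pi.single_apply, Fin.ext_iff, eq_comm]
    · intro r s hr hs hsr
      obtain rfl : s = r := by omega
      have := sD_contig (fun i (j : Fin a) => if i = (j:ℕ) then (1:ℝ) else 0) 0 s
      rw [zero_add] at this
      rw [this, h1 _ hr, hfull]
      intro i; funext j; simp [Pi.single_apply, Fin.ext_iff, eq_comm]
  | succ n ih =>
    obtain ⟨v, hv, hD⟩ := ih
    -- rows sequence with hole at r
    let f : ℕ → ℕ → Fin a → ℝ := fun r i => if i < r then v i else v (n + 1 + (i - 1))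
    have hs : ∀ r, r < a → ∀ w : Fin a → ℝ, sD a (Function.update v (a+n) w) 0 (n+1+r) r =
        (-1)^(a-1-r) * rd a (Function.update (f r) r w) := by
      intro r hr w
      rw [← rd_move _ r (a-1-r) (by omega)]
      apply rd_congr
      intro i hi
      simp only [Function.update_apply, f]
      split_ifs <;> first | omega | rfl | (congr 1; omega)
    let M : Matrix (Fin a) (Fin a) ℝ := Matrix.of fun r j => rd a (Function.update (f r) r (v j))
    have hM : M.det ≠ 0 := by
      rw [Matrix.det_of_isUpperTriangular]
      · rw [Finset.prod_ne_zero_iff]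
        intro r _
        have : M r r = sD a v 0 (n+1+r) (r+1) := by
          apply rd_congr
          intro i hi
          simp only [Function.update_apply, f]
          split_ifs <;> first | omega | (congr 1 <;> omega) | simp_all
        rw [this, hD _ _ (by omega) (by omega) (by omega)]
        exact hc _ _
      · intro r j hj
        have hj : (j:ℕ) < r := hj
        apply rd_eq_zero _ r j r.2 j.2 (by omega)
        simp [Function.update_apply, f, hj, hj.ne]
    let y : Fin a → ℝ := fun r => (-1)^(a-1-(r:ℕ)) * c r (n+1+r)
    obtain ⟨w, hw⟩ : ∃ w, M.mulVec w = y := by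
      have hu : IsUnit M.det := isUnit_iff_ne_zero.mpr hM
      exact ⟨M⁻¹.mulVec y, by rw [Matrix.mulVec_mulVec, Matrix.mul_nonsing_inv _ hu, Matrix.one_mulVec]⟩
    have hw' : w = ∑ j : Fin a, w j • v j := by
      funext j
      simp [hv, Finset.sum_apply, Pi.single_apply]
    have hv' : ∀ i : Fin a, Function.update v (a+n) w i = Pi.single i 1 := by
      intro i
      rw [Function.update_of_ne (by omega), hv]
    refine ⟨Function.update v (a+n) w, hv', ?_⟩
    intro r s hr hrs hsr
    rcases Nat.lt_or_ge r a with hra | hra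
    · by_cases hlast : s + a - r = a + (n+1)
      · obtain rfl : s = n + 1 + r := by omega
        rw [hs r hra]
        have e1 : rd a (Function.update (f r) r w) = y ⟨r, hra⟩ := by
          rw [← hw]
          conv_lhs => rw [hw']
          rw [rd_sum _ _ hra w (fun j => v j)]
          simp [Matrix.mulVec, dotProduct, M, mul_comm]
        rw [e1]
        have h4 : ((-1:ℝ)^(a-1-r))*(-1)^(a-1-r) = 1 := by rw [← mul_pow]; simp
        simp only [y]
        linear_combination (c r (n+1+r)) * h4
      · rw [← hD r s hr hrs (by omega)]
        apply rd_congr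
        intro i hi
        simp only [Function.update_apply]
        split_ifs <;> first | omega | rfl
    · obtain rfl : r = a := by omega
      rw [sD_full, h2, hfull _ hv']
def TrV (f : ℝ → ℝ) (e : ℤ) : Prop :=
  ∃ C : ℝ, 0 < C ∧ ∀ q : ℝ, 1 ≤ q → q ^ e ≤ C * f q ∧ f q ≤ C * q ^ e

lemma TrV.zpow (e : ℤ) : TrV (fun q => q ^ e) e :=
  ⟨1, one_pos, fun q _ => by simp⟩

lemma TrV.congr {f g : ℝ → ℝ} {e : ℤ} (h : TrV f e) (hfg : ∀ q, 1 ≤ q → g q = f q) : TrV g e := by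
  obtain ⟨C, hC, h⟩ := h
  exact ⟨C, hC, fun q hq => by rw [hfg q hq]; exact h q hq⟩

lemma TrV.pos {f : ℝ → ℝ} {e : ℤ} (h : TrV f e) (q : ℝ) (hq : 1 ≤ q) : 0 < f q := by
  obtain ⟨C, hC, h⟩ := h
  have h1 := (h q hq).1
  have h2 : 0 < q ^ e := zpow_pos (by linarith) e
  exact pos_of_mul_pos_right (lt_of_lt_of_le h2 h1) hC.le

lemma TrV.add_aux {f g : ℝ → ℝ} {e e' : ℤ} (h : TrV f e) (h' : TrV g e') (hle : e' ≤ e) :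
    TrV (fun q => f q + g q) e := by
  have hp := h.pos
  have hp' := h'.pos
  obtain ⟨C, hC, h⟩ := h
  obtain ⟨C', hC', h'⟩ := h'
  refine ⟨C + C', by positivity, fun q hq => ⟨?_, ?_⟩⟩
  · have := (h q hq).1
    have := hp q hq
    have := hp' q hq
    have : 0 ≤ C * g q + C' * (f q + g q) := by positivity
    linarith
  · have h1 := (h q hq).2
    have h2 := (h' q hq).2
    have h3 : q ^ e' ≤ q ^ e := zpow_le_zpow_right₀ hq hle
    have := mul_le_mul_of_nonneg_left h3 hC'.le
    linarith

lemma TrV.add {f g : ℝ → ℝ} {e e' : ℤ} (h : TrV f e) (h' : TrV g e') :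
    TrV (fun q => f q + g q) (max e e') := by
  rcases le_total e' e with hle | hle
  · rw [max_eq_left hle]; exact h.add_aux h' hle
  · rw [max_eq_right hle]
    exact (h'.add_aux h hle).congr (fun q _ => add_comm _ _)

lemma TrV.mul {f g : ℝ → ℝ} {e e' : ℤ} (h : TrV f e) (h' : TrV g e') :
    TrV (fun q => f q * g q) (e + e') := by
  have hp := h.pos
  have hp' := h'.pos
  obtain ⟨C, hC, h⟩ := h
  obtain ⟨C', hC', h'⟩ := h'
  refine ⟨C * C', by positivity, fun q hq => ?_⟩
  have hq0 : 0 < q := by linarith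
  have := hp q hq
  have := hp' q hq
  have h1 := h q hq
  have h2 := h' q hq
  have := zpow_pos hq0 e
  have := zpow_pos hq0 e'
  rw [zpow_add₀ hq0.ne']
  constructor
  · calc _ ≤ (C * f q) * (C' * g q) := mul_le_mul h1.1 h2.1 (by positivity) (by positivity)
      _ = _ := by ring
  · calc _ ≤ (C * q ^ e) * (C' * q ^ e') := mul_le_mul h1.2 h2.2 (by positivity) (by positivity)
      _ = _ := by ring

lemma TrV.inv {f : ℝ → ℝ} {e : ℤ} (h : TrV f e) : TrV (fun q => (f q)⁻¹) (-e) := by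
  have hp := h.pos
  obtain ⟨C, hC, h⟩ := h
  refine ⟨C, hC, fun q hq => ?_⟩
  have hq0 : 0 < q := by linarith
  have h0 := hp q hq
  have h1 := h q hq
  have h2 := zpow_pos hq0 e
  rw [zpow_neg]
  constructor
  · show (q ^ e)⁻¹ ≤ C * (f q)⁻¹
    rw [← div_eq_mul_inv, inv_eq_one_div, div_le_div_iff₀ h2 h0]; linarith
  · show (f q)⁻¹ ≤ C * (q ^ e)⁻¹
    rw [← div_eq_mul_inv, inv_eq_one_div, div_le_div_iff₀ h0 h2]; linarith

lemma TrV.le {f : ℝ → ℝ} {e e' : ℤ} (h : TrV f e) (h' : TrV f e') : e' ≤ e := by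
  by_contra hlt
  push Not at hlt
  obtain ⟨C, hC, h⟩ := h
  obtain ⟨C', hC', h'⟩ := h'
  have hCC : 0 < C' * C := by positivity
  set q := C' * C + 1 with hq
  have hq1 : 1 ≤ q := by linarith
  have hq0 : 0 < q := by linarith
  have h1 := (h' q hq1).1
  have h2 := (h q hq1).2
  have h3 : q ^ (e + 1) ≤ q ^ e' := zpow_le_zpow_right₀ hq1 (by omega)
  rw [zpow_add_one₀ hq0.ne'] at h3
  have h4 := mul_le_mul_of_nonneg_left h2 hC'.le
  have h5 := zpow_pos hq0 e
  have : q ^ e * q ≤ q ^ e * (C' * C) := by linarith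
  have := le_of_mul_le_mul_left this h5
  linarith

lemma TrV.unique {f : ℝ → ℝ} {e e' : ℤ} (h : TrV f e) (h' : TrV f e') : e = e' :=
  le_antisymm (h'.le h) (h.le h')

theorem recip_main (a b k : ℕ) (ha : 0 < a) (hak : a ≤ k) (G : ℕ → ℕ → ℕ → ℤ)
    (H0 : ∀ t d, G t 0 d = 0)
    (Hlow : ∀ t r d, d ≤ r → r ≤ a → G t r d = G t a d)
    (Hhigh : ∀ t r d, r ≤ a → d ≤ k → k + r ≤ a + d → G t r d = r * b)
    (Hocta : ∀ t r d, 1 ≤ r → r < a → 1 ≤ d → d < k →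
      G (t+1) r d + G t r d = max (G t r (d+1) + G (t+1) r (d-1))
        (G t (r+1) (d+1) + G (t+1) (r-1) (d-1)))
    (Ha : ∀ t d, 1 ≤ d → d < k → G (t+1) a d + G t a d = G t a (d+1) + G (t+1) a (d-1))
    (r t : ℕ) (hr : r ≤ a) (ht : t ≤ k) :
    G t (a - r) (k - t) = ((a:ℤ) - r) * b + G 0 r t - G 0 a t := by
  have Hd0 : ∀ t, G t a 0 = 0 := fun t => by rw [← Hlow t 0 0 le_rfl (by omega), H0]
  have HW : ∀ t d, t + d ≤ k → G t a d = G 0 a (t + d) - G 0 a t := by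
    intro t
    induction t with
    | zero => intro d _; rw [Hd0]; simp
    | succ t iht =>
      intro d
      induction d with
      | zero => intro _; rw [Hd0]; simp
      | succ d ihd =>
        intro hd
        have e := Ha t (d+1) (by omega) (by omega)
        have e1 := iht (d+1) (by omega)
        have e2 := iht (d+1+1) (by omega)
        have e3 := ihd (by omega)
        simp only [Nat.add_sub_cancel] at e
        have s1 : t + (d+1) = t + 1 + d := by omega
        have s2 : t + (d+1+1) = t + 1 + (d + 1) := by omega
        rw [s1] at e1
        rw [s2] at e2
        linarith
  -- trivial zones
  rcases Nat.lt_or_ge t r with htr | htr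
  · rw [Hhigh t (a-r) (k-t) (by omega) (by omega) (by omega), Hlow 0 r t (by omega) hr]
    push_cast [hr]; ring
  rcases Nat.lt_or_ge (k + r) (a + t) with htk | htk
  · rw [Hlow t (a-r) (k-t) (by omega) (by omega), HW t (k-t) (by omega), Hhigh 0 r t hr ht (by omega)]
    have : t + (k - t) = k := by omega
    rw [this, Hhigh 0 a k le_rfl le_rfl (by omega)]
    ring
  -- the lift
  have hex : ∀ q : ℝ, ∃ v : ℕ → Fin a → ℝ, 1 ≤ q →
      (∀ r s, r ≤ a → r ≤ s → s + a ≤ k + r → sD a v 0 s r = q ^ (G 0 r s - G 0 a s)) ∧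
      (∀ i, i < k → v (k + i) = ((-1)^(a-1) * q ^ (-(b:ℤ))) • v i) := by
    intro q
    by_cases hq : 1 ≤ q
    · have hq0 : q ≠ 0 := by linarith
      obtain ⟨u, -, hu⟩ := exists_vecs ha (fun r s => q ^ (G 0 r s - G 0 a s))
        (fun r s => zpow_ne_zero _ hq0) (fun r hr => by simp [Hlow 0 r r le_rfl hr])
        (fun s => by simp) (k - a)
      refine ⟨fun i => if i < k then u i else ((-1)^(a-1) * q ^ (-(b:ℤ))) • u (i - k), fun _ => ⟨?_, ?_⟩⟩
      · intro r s hr hrs hs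
        rw [← hu r s hr hrs (by omega)]
        apply rd_congr
        intro i hi
        dsimp only
        split_ifs <;> first | omega | rfl
      · intro i hi
        simp [hi]
    · exact ⟨fun _ _ => 0, fun h => absurd h hq⟩
  choose v hv using hex
  have hinit : ∀ r s, r ≤ a → r ≤ s → s + a ≤ k + r →
      TrV (fun q => sD a (v q) 0 s r) (G 0 r s - G 0 a s) := by
    intro r s h1 h2 h3
    exact (TrV.zpow _).congr (fun q hq => (hv q hq).1 r s h1 h2 h3)
  have hper : ∀ t s r q, 1 ≤ q → r ≤ a → t + r ≤ k →
      sD a (v q) s (t + k) (a - r) = (q ^ (-(b:ℤ))) ^ r * sD a (v q) t s r := by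
    intro t s r q hq hr htr
    apply sD_period ha _ _ _ _ _ _ hr
    intro i hi
    rw [← (hv q hq).2 (t + i) (by omega)]
    congr 1; omega
  have hpow : ∀ r : ℕ, TrV (fun q => (q ^ (-(b:ℤ))) ^ r) (-(r * b)) := by
    intro r
    refine (TrV.zpow _).congr (fun q hq => ?_)
    rw [← zpow_natCast, ← zpow_mul]; congr 1; ring
  have hΔ : ∀ u, u ≤ k → TrV (fun q => sD a (v q) u u 0) (- G 0 a u) := by
    intro u hu
    rcases Nat.lt_or_ge (k - a) u with h | h
    · obtain ⟨ρ, rfl⟩ : ∃ ρ, u = k - a + ρ := ⟨u - (k - a), by omega⟩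
      have e := (hpow ρ).mul (hinit ρ (k - a + ρ) (by omega) (by omega) (by omega))
      rw [Hhigh 0 ρ _ (by omega) (by omega) (by omega)] at e
      have e0 : -((ρ:ℤ) * b) + (ρ * b - G 0 a (k - a + ρ)) = - G 0 a (k - a + ρ) := by ring
      rw [e0] at e
      refine e.congr (fun q hq => ?_)
      rw [← hper 0 _ ρ q hq (by omega) (by omega), ← sD_contig (v q) (k - a + ρ) (a - ρ)]
      congr 1; omega
    · have e := hinit 0 u (by omega) (by omega) (by omega)
      rw [H0, zero_sub] at e
      exact e.congr (fun q hq => (sD_zero _ _ _).symm)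
  have main : ∀ t d r, r ≤ a → r ≤ d → d + a ≤ k + r → t + d ≤ k →
      TrV (fun q => sD a (v q) t (t + d) r) (G t r d - G 0 a (t + d)) := by
    intro t
    induction t with
    | zero =>
      intro d r h1 h2 h3 h4
      rw [Nat.zero_add]
      exact hinit r d h1 h2 h3
    | succ t iht =>
      intro d
      induction d with
      | zero =>
        intro r h1 h2 h3 h4
        obtain rfl : r = 0 := by omega
        have := hΔ (t+1) (by omega)
        simpa [H0] using this
      | succ d ihd =>
        intro r h1 h2 h3 h4
        rcases Nat.eq_zero_or_pos r with rfl | hr0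
        · rw [H0, zero_sub]
          exact (hΔ _ h4).congr (fun q hq => sD_zero _ _ _)
        rcases Nat.eq_or_lt_of_le h1 with rfl | hra
        · rw [HW _ _ h4]
          have e : G 0 r (t+1+(d+1)) - G 0 r (t+1) - G 0 r (t+1+(d+1)) = - G 0 r (t+1) := by ring
          rw [e]
          exact (hΔ _ (by omega)).congr (fun q hq => sD_full _ _ _)
        rcases Nat.eq_or_lt_of_le h2 with hrd | hrd
        · rw [Hlow _ r (d+1) hrd.ge h1, HW _ _ h4]
          have e : G 0 a (t+1+(d+1)) - G 0 a (t+1) - G 0 a (t+1+(d+1)) = - G 0 a (t+1) := by ring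
          rw [e, ← hrd]
          exact (hΔ _ (by omega)).congr (fun q hq => sD_contig _ _ _)
        rcases Nat.eq_or_lt_of_le h3 with hkd | hkd
        · rw [Hhigh _ r (d+1) h1 (by omega) (by omega)]
          have e := (hpow r).inv.mul (hΔ _ h4)
          have e0 : - -((r:ℤ) * b) + - G 0 a (t + 1 + (d+1)) = r * b - G 0 a (t+1+(d+1)) := by ring
          rw [e0] at e
          refine e.congr (fun q hq => ?_)
          have hp := hper (t+1) (t+1+(d+1)) r q hq h1 (by omega)
          have hk : t + 1 + k = t + 1 + (d+1) + (a - r) := by omega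
          rw [hk, sD_contig] at hp
          rw [hp, inv_mul_cancel_left₀]
          have : 0 < q := by linarith
          positivity
        -- interior
        have p1 := iht (d+1) r h1 (by omega) (by omega) (by omega)
        have p2 := iht (d+1+1) r h1 (by omega) (by omega) (by omega)
        have p3 := ihd r h1 (by omega) (by omega) (by omega)
        have p4 := iht (d+1+1) (r+1) (by omega) (by omega) (by omega) (by omega)
        have p5 := ihd (r-1) (by omega) (by omega) (by omega) (by omega)
        have o := Hocta t r (d+1) hr0 hra (by omega) (by omega)
        simp only [Nat.add_sub_cancel] at o
        have hh := ((p2.mul p3).add (p4.mul p5)).mul p1.inv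
        have s1 : t + (d+1) = t + 1 + d := by omega
        have s2 : t + (d+1+1) = t + 1 + (d + 1) := by omega
        rw [s1] at p1
        rw [s1, s2] at hh
        have ee : max (G t r (d + 1 + 1) - G 0 a (t + 1 + (d + 1)) + (G (t + 1) r d - G 0 a (t + 1 + d)))
          (G t (r + 1) (d + 1 + 1) - G 0 a (t + 1 + (d + 1)) + (G (t + 1) (r - 1) d - G 0 a (t + 1 + d))) +
          -(G t r (d + 1) - G 0 a (t + 1 + d)) = G (t+1) r (d+1) - G 0 a (t+1+(d+1)) := by
          omega
        rw [ee] at hh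
        refine hh.congr (fun q hq => ?_)
        have hp := sD_plucker (v q) t (t+1+d) r hr0 hra
        have s3 : t + 1 + d + 1 = t + 1 + (d+1) := by omega
        rw [s3] at hp
        have := (p1.pos q hq).ne'
        rw [← div_eq_mul_inv, eq_div_iff this, ← hp]; ring
  have f1 := main t (k - t) (a - r) (by omega) (by omega) (by omega) (by omega)
  have f2 := (hpow r).mul (hinit r t hr htr (by omega))
  have f3 : TrV (fun q => sD a (v q) t (t + (k - t)) (a - r)) (-(r * b) + (G 0 r t - G 0 a t)) := by
    refine f2.congr (fun q hq => ?_)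
    rw [← hper 0 t r q hq hr (by omega)]
    congr 1; omega
  have f4 := f1.unique f3
  have : t + (k - t) = k := by omega
  rw [this, Hhigh 0 a k le_rfl le_rfl (by omega)] at f4
  linarith
structure GTp (a b k : ℕ) (L : ℕ → ℤ → ℤ) : Prop where
  top : ∀ d, L 0 d = b
  bot : ∀ d, L (a+1) d = 0
  lo : ∀ x d, 1 ≤ x → x ≤ a → d ≤ 0 → L x d = 0
  hi : ∀ x d, 1 ≤ x → x ≤ a → (k:ℤ) ≤ d → L x d = b
  mono : ∀ x d, x ≤ a + 1 → L x d ≤ L x (d+1)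
  diag : ∀ x d, x ≤ a → L (x+1) (d+1) ≤ L x d

def TRep (a b : ℕ) (T : Fin a → Fin b → ℤ) (L : ℕ → ℤ → ℤ) : Prop :=
  ∀ (x : Fin a) (y : Fin b) (d : ℤ), T x y ≤ d ↔ ((y:ℕ):ℤ) < L ((x:ℕ)+1) d

def updL (a : ℕ) (j : ℤ) (L : ℕ → ℤ → ℤ) : ℕ → ℤ → ℤ := fun x d =>
  if d = j ∧ 1 ≤ x ∧ x ≤ a then
    min (L x (j+1)) (L (x-1) (j-1)) + max (L x (j-1)) (L (x+1) (j+1)) - L x j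
  else L x d

lemma GTp.mono' {a b k : ℕ} {L : ℕ → ℤ → ℤ} (h : GTp a b k L) (x : ℕ) (hx : x ≤ a + 1)
    {d e : ℤ} (hde : d ≤ e) : L x d ≤ L x e :=
  monotone_int_of_le_succ (fun d => h.mono x d hx) hde

lemma GTp.nonneg {a b k : ℕ} {L : ℕ → ℤ → ℤ} (h : GTp a b k L) (x : ℕ) (hx : x ≤ a + 1)
    (d : ℤ) : 0 ≤ L x d := by
  rcases Nat.eq_zero_or_pos x with rfl | h0
  · rw [h.top]; positivity
  rcases Nat.eq_or_lt_of_le hx with rfl | h1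
  · rw [h.bot]
  rw [← h.lo x (min 0 d) h0 (by omega) (min_le_left _ _)]
  exact h.mono' x hx (min_le_right _ _)

lemma GTp.le_b {a b k : ℕ} {L : ℕ → ℤ → ℤ} (h : GTp a b k L) (x : ℕ) (hx : x ≤ a + 1)
    (d : ℤ) : L x d ≤ b := by
  rcases Nat.eq_zero_or_pos x with rfl | h0
  · rw [h.top]
  rcases Nat.eq_or_lt_of_le hx with rfl | h1
  · rw [h.bot]; positivity
  rw [← h.hi x (max k d) h0 (by omega) (le_max_left _ _)]
  exact h.mono' x hx (le_max_right _ _)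

lemma card_Ico_fin (b : ℕ) (p q : ℤ) (hp : 0 ≤ p) (hpq : p ≤ q) (hq : q ≤ b) (P : Fin b → Prop)
    [DecidablePred P]
    (hP : ∀ y : Fin b, P y ↔ p ≤ ((y:ℕ):ℤ) ∧ ((y:ℕ):ℤ) < q) :
    ((Finset.univ.filter P).card : ℤ) = q - p := by
  have : (Finset.univ.filter P).card = (Finset.Ico p.toNat q.toNat).card := by
    apply Finset.card_bij (fun (y : Fin b) _ => (y:ℕ))
    · intro y hy
      simp only [Finset.mem_filter, Finset.mem_univ, true_and, hP] at hy
      simp only [Finset.mem_Ico]; omega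
    · intro y _ z _ h
      exact Fin.ext h
    · intro n hn
      simp only [Finset.mem_Ico] at hn
      refine ⟨⟨n, by omega⟩, ?_, rfl⟩
      simp only [Finset.mem_filter, Finset.mem_univ, true_and, hP]
      omega
  rw [this, Nat.card_Ico]; omega

lemma GTp.upd {a b k : ℕ} {L : ℕ → ℤ → ℤ} (h : GTp a b k L) {j : ℤ} (hj : 1 ≤ j) (hjk : j < k) :
    GTp a b k (updL a j L) := by
  have key : ∀ x, 1 ≤ x → x ≤ a → L x (j-1) ≤ L x j ∧ L x j ≤ L x (j+1) ∧
      L (x+1) (j+1) ≤ L x j ∧ L x j ≤ L (x-1) (j-1) := by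
    intro x h1 h2
    refine ⟨h.mono' x (by omega) (by omega), h.mono' x (by omega) (by omega), h.diag x j h2, ?_⟩
    have := h.diag (x-1) (j-1) (by omega)
    rwa [Nat.sub_add_cancel h1, sub_add_cancel] at this
  refine ⟨?_, ?_, ?_, ?_, ?_, ?_⟩
  · intro d; simp [updL, h.top]
  · intro d; simp [updL, h.bot]
  · intro x d h1 h2 h3
    rw [updL, if_neg (by omega)]; exact h.lo x d h1 h2 h3
  · intro x d h1 h2 h3
    rw [updL, if_neg (by omega)]; exact h.hi x d h1 h2 h3
  · intro x d hx
    unfold updL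
    split_ifs with c1 c2 c2
    · omega
    · obtain ⟨rfl, h1, h2⟩ := c1
      have := key x h1 h2
      omega
    · obtain ⟨rfl, h1, h2⟩ := c2
      have := key x h1 h2
      simp only [add_sub_cancel_right] at *
      omega
    · exact h.mono x d hx
  · intro x d hx
    unfold updL
    split_ifs with c1 c2 c2
    · omega
    · obtain ⟨rfl, h1, h2⟩ := c1
      have := key (x+1) h1 h2
      simp only [add_sub_cancel_right, Nat.add_sub_cancel] at *
      omega
    · obtain ⟨rfl, h1, h2⟩ := c2
      have := key x h1 h2
      omega
    · exact h.diag x d hx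

lemma TRep.upd {a b k : ℕ} {T : Fin a → Fin b → ℤ} {L : ℕ → ℤ → ℤ} (h : GTp a b k L)
    (hT : TRep a b T L) (j : ℤ) : TRep a b (bk a b j T) (updL a j L) := by
  intro x y d
  have hxa := x.2
  have hu : updL a j L (x+1) d = if d = j then
      min (L (x+1) (j+1)) (L x (j-1)) + max (L (x+1) (j-1)) (L (x+1+1) (j+1)) - L (x+1) j
      else L (x+1) d := by
    unfold updL
    simp only [Nat.add_sub_cancel]
    congr 1
    simp only [eq_iff_iff]; omega
  rw [hu]
  have k1 : L (x+1) (j-1) ≤ L (x+1) j := h.mono' _ (by omega) (by omega)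
  have k2 : L (x+1) j ≤ L (x+1) (j+1) := h.mono' _ (by omega) (by omega)
  have k3 : L (x+1+1) (j+1) ≤ L (x+1) j := h.diag _ _ (by omega)
  have k4 : L (x+1) j ≤ L x (j-1) := by simpa using h.diag x (j-1) (by omega)
  have k5 : L (x+1) (j+1) ≤ L x j := h.diag _ _ (by omega)
  have k6 : L (x+1+1) j ≤ L (x+1) (j-1) := by simpa using h.diag (x+1) (j-1) (by omega)
  have k7 := h.nonneg (x+1) (by omega) (j-1)
  have k8 := h.le_b (x+1) (by omega) (j+1)
  have hlow : ∀ y' : Fin b, (T x y' = j ∧ ∀ h : (x : ℕ) + 1 < a, T ⟨(x : ℕ) + 1, h⟩ y' ≠ j + 1) ↔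
      (max (L (x+1) (j-1)) (L (x+1+1) (j+1)) ≤ ((y':ℕ):ℤ) ∧ ((y':ℕ):ℤ) < L (x+1) j) := by
    intro y'
    have e1 := hT x y' j
    have e2 := hT x y' (j-1)
    by_cases hx : (x:ℕ) + 1 < a
    · have e3 := hT ⟨(x:ℕ)+1, hx⟩ y' (j+1)
      have e4 := hT ⟨(x:ℕ)+1, hx⟩ y' j
      simp only at e3 e4
      simp only [hx, forall_true_left]
      omega
    · have : (x:ℕ) + 1 = a := by omega
      have e3 := h.bot (j+1)
      rw [← this] at e3
      simp only [hx, IsEmpty.forall_iff, and_true]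
      omega
  have hhigh : ∀ y' : Fin b, (T x y' = j + 1 ∧ ∀ x' : Fin a, (x' : ℕ) + 1 = (x : ℕ) → T x' y' ≠ j) ↔
      (L (x+1) j ≤ ((y':ℕ):ℤ) ∧ ((y':ℕ):ℤ) < min (L (x+1) (j+1)) (L x (j-1))) := by
    intro y'
    have e1 := hT x y' j
    have e2 := hT x y' (j+1)
    have hy := y'.2
    by_cases hx : (x:ℕ) = 0
    · have e3 := h.top (j-1)
      rw [← hx] at e3
      have : ∀ x' : Fin a, (x' : ℕ) + 1 = (x : ℕ) → T x' y' ≠ j := fun x' h => by omega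
      rw [and_iff_left this]
      have k8 := h.le_b (x+1) (by omega) (j+1)
      omega
    · have e3 := hT ⟨(x:ℕ)-1, by omega⟩ y' (j-1)
      have e4 := hT ⟨(x:ℕ)-1, by omega⟩ y' j
      have e5 : (x:ℕ) - 1 + 1 = x := by omega
      rw [e5] at e3 e4
      have : (∀ x' : Fin a, (x' : ℕ) + 1 = (x : ℕ) → T x' y' ≠ j) ↔ T ⟨(x:ℕ)-1, by omega⟩ y' ≠ j := by
        constructor
        · intro h; exact h _ e5
        · intro h x' hx'
          have : x' = ⟨(x:ℕ)-1, by omega⟩ := Fin.ext (by simp; omega)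
          rwa [this]
      rw [this]
      omega
  have hTd := hT x y d
  have hTj := hT x y j
  unfold bk
  simp only [hlow, hhigh]
  set p := max (L (x+1) (j-1)) (L (x+1+1) (j+1)) with hp
  set r := min (L (x+1) (j+1)) (L x (j-1)) with hr
  by_cases hfree : p ≤ ((y:ℕ):ℤ) ∧ ((y:ℕ):ℤ) < r
  · have c1 := card_Ico_fin b p (y+1) (by omega) (by omega) (by omega)
      (fun y' : Fin b => (p ≤ ((y':ℕ):ℤ) ∧ ((y':ℕ):ℤ) < L (x+1) j ∨
        L (x+1) j ≤ ((y':ℕ):ℤ) ∧ ((y':ℕ):ℤ) < r) ∧ y' ≤ y)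
      (fun y' => by rw [Fin.le_def]; omega)
    have c2 := card_Ico_fin b (L (x+1) j) r (by omega) (by omega) (by omega)
      (fun y' : Fin b => L (x+1) j ≤ ((y':ℕ):ℤ) ∧ ((y':ℕ):ℤ) < r) (fun y' => Iff.rfl)
    rw [if_pos (by omega)]
    have m1 : d ≤ j - 1 → L (x+1) d ≤ L (x+1) (j-1) := fun hd => h.mono' _ (by omega) hd
    have m2 : j + 1 ≤ d → L (x+1) (j+1) ≤ L (x+1) d := fun hd => h.mono' _ (by omega) hd
    split_ifs with c3 c4 c4 <;> omega
  · rw [if_neg (by omega)]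
    split_ifs with c4
    · subst c4
      omega
    · exact hTd

def stg (a : ℕ) (L : ℕ → ℤ → ℤ) : ℕ → ℕ → ℤ → ℤ
  | 0 => L
  | n+1 => updL a ((n:ℤ)+1) (stg a L n)

lemma stg_gt {a b k : ℕ} {L : ℕ → ℤ → ℤ} (h : GTp a b k L) (n : ℕ) (hn : n < k ∨ n = 0) :
    GTp a b k (stg a L n) := by
  induction n with
  | zero => exact h
  | succ n ih => exact (ih (by omega)).upd (by omega) (by omega)

lemma stg_rep {a b k : ℕ} {T : Fin a → Fin b → ℤ} {L : ℕ → ℤ → ℤ} (h : GTp a b k L)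
    (hT : TRep a b T L) (n : ℕ) (hn : n < k ∨ n = 0) :
    TRep a b ((List.range n).foldl (fun S i => bk a b ((i : ℤ) + 1) S) T) (stg a L n) := by
  have hb : ∀ l : List ℕ, (do let a ← l; pure (a:ℤ) : List ℤ) = l.map (fun i : ℕ => (i:ℤ)) := by
    intro l; exact List.flatMap_pure_eq_map _ _
  rw [hb]
  induction n with
  | zero => exact hT
  | succ n ih =>
    rw [List.range_succ, List.map_append, List.foldl_append]
    exact (ih (by omega)).upd (stg_gt h n (by omega)) _

lemma stg_hi (a : ℕ) (L : ℕ → ℤ → ℤ) (n x : ℕ) (d : ℤ) (hd : (n:ℤ) < d) :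
    stg a L n x d = L x d := by
  induction n with
  | zero => rfl
  | succ n ih =>
    rw [stg, updL, if_neg (by omega)]
    exact ih (by omega)

lemma stg_lo (a : ℕ) (L : ℕ → ℤ → ℤ) (n m x : ℕ) (d : ℤ) (hd : d ≤ n) :
    stg a L (n + m) x d = stg a L n x d := by
  induction m with
  | zero => rfl
  | succ m ih =>
    rw [← Nat.add_assoc, stg, updL, if_neg (by omega)]
    exact ih

lemma stg_rec (a k : ℕ) (L : ℕ → ℤ → ℤ) (x d : ℕ) (h1 : 1 ≤ x) (h2 : x ≤ a) (hd : 1 ≤ d) (hdk : d < k) :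
    stg a L (k-1) x d + L x d = min (L x (d+1)) (stg a L (k-1) (x-1) ((d:ℤ)-1)) +
      max (stg a L (k-1) x ((d:ℤ)-1)) (L (x+1) (d+1)) := by
  obtain ⟨e, rfl⟩ : ∃ e, d = e + 1 := ⟨d - 1, by omega⟩
  obtain ⟨m, hm⟩ : ∃ m, k - 1 = e + 1 + m := ⟨k - 1 - (e+1), by omega⟩
  have hm' : k - 1 = e + (1 + m) := by omega
  have q1 : stg a L (k-1) x ((e+1:ℕ):ℤ) = stg a L (e+1) x ((e+1:ℕ):ℤ) := by
    rw [hm]; exact stg_lo _ _ _ _ _ _ le_rfl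
  have q2 : ∀ x, stg a L (k-1) x (((e+1:ℕ):ℤ)-1) = stg a L e x (((e+1:ℕ):ℤ)-1) := by
    intro x
    rw [hm']; exact stg_lo _ _ _ _ _ _ (by push_cast; omega)
  rw [q1, q2, q2, stg, updL, if_pos ⟨by push_cast; rfl, h1, h2⟩]
  push_cast
  rw [stg_hi _ _ _ _ (((e:ℤ)+1+1)) (by omega), stg_hi _ _ _ _ (((e:ℤ)+1+1)) (by omega),
    stg_hi _ _ _ _ (((e:ℤ)+1)) (by omega)]
  ring

lemma GTp.zero_tri {a b k : ℕ} {L : ℕ → ℤ → ℤ} (h : GTp a b k L) (x : ℕ) (hx : x < a) (d : ℤ)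
    (hd : d ≤ x) : L (x+1) d = 0 := by
  induction x generalizing d with
  | zero => exact h.lo 1 d le_rfl (by omega) (by simpa using hd)
  | succ x ih =>
    have h1 := h.diag (x+1) (d-1) (by omega)
    rw [ih (by omega) (d-1) (by push_cast at hd; omega), sub_add_cancel] at h1
    exact le_antisymm h1 (h.nonneg _ (by omega) _)

lemma GTp.full_tri {a b k : ℕ} {L : ℕ → ℤ → ℤ} (h : GTp a b k L) (m x : ℕ) (hx : 1 ≤ x)
    (hm : x + m = a) (d : ℤ) (hd : (k:ℤ) ≤ d + m) : L x d = b := by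
  induction m generalizing x d with
  | zero => exact h.hi x d hx (by omega) (by simpa using hd)
  | succ m ih =>
    have h1 := h.diag x d (by omega)
    rw [ih (x+1) (by omega) (by omega) (d+1) (by push_cast at hd; omega)] at h1
    exact le_antisymm (h.le_b _ (by omega) _) h1

lemma sum_minmax (A B : ℕ → ℤ) (h0 : A 1 ≤ B 0) (s : ℕ) :
    ∑ x ∈ Finset.range (s+1), (min (A (x+1)) (B x) + max (B (x+1)) (A (x+1+1))) =
      ∑ x ∈ Finset.range (s+1), A (x+1) + ∑ x ∈ Finset.range s, B (x+1) +
        max (B (s+1)) (A (s+1+1)) := by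
  induction s with
  | zero => simp [h0]
  | succ s ih =>
    rw [Finset.sum_range_succ, ih, Finset.sum_range_succ (fun x => A (x+1)) (s+1),
      Finset.sum_range_succ (fun x => B (x+1)) s]
    omega

lemma GTp.recip {a b k : ℕ} (ha : 0 < a) (hak : a ≤ k) {L : ℕ → ℤ → ℤ} (h : GTp a b k L)
    (r t : ℕ) (hr : r < a) (ht : t ≤ k) :
    (fun M => stg a M (k-1))^[t] L (a - r) ((k:ℤ) - t) = b - L (r+1) t := by
  set M : ℕ → ℕ → ℤ → ℤ := fun t => (fun M => stg a M (k-1))^[t] L with hM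
  have hMs : ∀ t, M (t+1) = stg a (M t) (k-1) := fun t => by
    simp only [hM, Function.iterate_succ_apply']
  have hG : ∀ t, GTp a b k (M t) := by
    intro t
    induction t with
    | zero => exact h
    | succ t ih => rw [hMs]; exact stg_gt ih _ (by omega)
  have hsum : ∀ t s d, s < a → 1 ≤ d → d < k →
      ∑ x ∈ Finset.range (s+1), M (t+1) (x+1) (d:ℕ) + ∑ x ∈ Finset.range (s+1), M t (x+1) (d:ℕ) =
      ∑ x ∈ Finset.range (s+1), M t (x+1) ((d+1:ℕ):ℤ) +
        ∑ x ∈ Finset.range s, M (t+1) (x+1) ((d-1:ℕ):ℤ) +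
        max (M (t+1) (s+1) ((d-1:ℕ):ℤ)) (M t (s+1+1) ((d+1:ℕ):ℤ)) := by
    intro t s d hs h1 h2
    rw [← sum_minmax (fun x => M t x ((d+1:ℕ):ℤ)) (fun x => M (t+1) x ((d-1:ℕ):ℤ)) (by
      simp only [(hG (t+1)).top]; exact (hG t).le_b _ (by omega) _), ← Finset.sum_add_distrib]
    apply Finset.sum_congr rfl
    intro x hx
    simp only [Finset.mem_range] at hx
    have := stg_rec a k (M t) (x+1) d (by omega) (by omega) h1 h2
    rw [← hMs] at this
    simp only [Nat.add_sub_cancel] at this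
    push_cast [h1]
    exact this
  have main := recip_main a b k ha hak (fun t r d => ∑ x ∈ Finset.range r, M t (x+1) (d:ℕ))
    (fun t d => by simp)
    (fun t r d h1 h2 => by
      apply Finset.sum_subset (by simpa using h2)
      intro x hx hx'
      simp only [Finset.mem_range] at hx hx'
      exact (hG t).zero_tri x hx _ (by omega))
    (fun t r d h1 h2 h3 => by
      rw [Finset.sum_congr rfl (g := fun _ => (b:ℤ))]
      · simp
      intro x hx
      simp only [Finset.mem_range] at hx
      exact (hG t).full_tri (a - (x+1)) (x+1) (by omega) (by omega) _ (by omega))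
    (fun t r d h1 h2 h3 h4 => by
      obtain ⟨s, rfl⟩ : ∃ s, r = s + 1 := ⟨r - 1, by omega⟩
      rw [hsum t s d (by omega) h3 h4, Nat.add_sub_cancel,
        Finset.sum_range_succ (fun x => M (t+1) (x+1) ((d-1:ℕ):ℤ)) s,
        Finset.sum_range_succ (fun x => M t (x+1) ((d+1:ℕ):ℤ)) (s+1)]
      omega)
    (fun t d h3 h4 => by
      obtain ⟨s, rfl⟩ : ∃ s, a = s + 1 := ⟨a - 1, by omega⟩
      rw [hsum t s d (by omega) h3 h4,
        Finset.sum_range_succ (fun x => M (t+1) (x+1) ((d-1:ℕ):ℤ)) s, (hG t).bot]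
      have := (hG (t+1)).nonneg (s+1) (by omega) ((d-1:ℕ):ℤ)
      omega)
  have m1 := main r t hr.le ht
  have m2 := main (r+1) t hr ht
  obtain ⟨s, hs⟩ : ∃ s, a - r = s + 1 := ⟨a - r - 1, by omega⟩
  have hs' : a - (r+1) = s := by omega
  rw [hs, Finset.sum_range_succ] at m1
  rw [hs', Finset.sum_range_succ _ r] at m2
  rw [hs]
  have hc : ((k - t : ℕ) : ℤ) = (k:ℤ) - t := by omega
  rw [hc] at m1 m2
  have hM0 : M 0 = L := rfl
  rw [hM0] at m1 m2
  push_cast at m2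
  linarith

lemma exists_rep (a b k : ℕ) (T : Fin a → Fin b → ℤ) (hT : IsSSYT a b k T) :
    ∃ L, GTp a b k L ∧ TRep a b T L := by
  obtain ⟨hr, hw, hc⟩ := hT
  set L : ℕ → ℤ → ℤ := fun x d => if x = 0 then (b:ℤ) else
    if h : x - 1 < a then ((Finset.univ.filter (fun y : Fin b => T ⟨x-1, h⟩ y ≤ d)).card : ℤ) else 0
    with hL
  have hLe : ∀ x d (h : x < a), L (x+1) d =
      ((Finset.univ.filter (fun y : Fin b => T ⟨x, h⟩ y ≤ d)).card : ℤ) := by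
    intro x d h
    simp [hL, h]
  have hrep : TRep a b T L := by
    intro x y d
    rw [hLe x d x.2]
    simp only [Fin.eta, Nat.cast_lt]
    constructor
    · intro h
      have : (Finset.univ.filter (fun z : Fin b => z ≤ y)) ⊆
          Finset.univ.filter (fun z : Fin b => T x z ≤ d) := by
        intro z hz
        simp only [Finset.mem_filter, Finset.mem_univ, true_and] at hz ⊢
        exact (hw x z y hz).trans h
      have c := Finset.card_le_card this
      have c1 := card_Ico_fin b 0 (y+1) (by omega) (by omega) (by omega) (fun z : Fin b => z ≤ y)
        (fun z => by rw [Fin.le_def]; omega)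
      omega
    · intro h
      by_contra hn
      have : Finset.univ.filter (fun z : Fin b => T x z ≤ d) ⊆
          (Finset.univ.filter (fun z : Fin b => z < y)) := by
        intro z hz
        simp only [Finset.mem_filter, Finset.mem_univ, true_and] at hz ⊢
        by_contra hzy
        exact hn ((hw x y z (not_lt.mp hzy)).trans hz)
      have c := Finset.card_le_card this
      have c1 := card_Ico_fin b 0 y (by omega) (by omega) (by omega) (fun z : Fin b => z < y)
        (fun z => by rw [Fin.lt_def]; omega)
      omega
  refine ⟨L, ⟨?_, ?_, ?_, ?_, ?_, ?_⟩, hrep⟩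
  · intro d; simp [hL]
  · intro d; simp [hL]
  · intro x d h1 h2 hd
    obtain ⟨x, rfl⟩ : ∃ s, x = s + 1 := ⟨x - 1, by omega⟩
    rw [hLe x d h2]
    simp only [Nat.cast_eq_zero, Finset.card_eq_zero, Finset.filter_eq_empty_iff]
    intro y _
    have := hr ⟨x, h2⟩ y
    omega
  · intro x d h1 h2 hd
    obtain ⟨x, rfl⟩ : ∃ s, x = s + 1 := ⟨x - 1, by omega⟩
    rw [hLe x d h2, Finset.filter_true_of_mem]
    · simp
    intro y _
    have := hr ⟨x, h2⟩ y
    omega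
  · intro x d hx
    simp only [hL]
    split_ifs
    · exact le_rfl
    · norm_cast
      apply Finset.card_le_card
      intro y hy
      simp only [Finset.mem_filter, Finset.mem_univ, true_and] at hy ⊢
      omega
    · exact le_rfl
  · intro x d hx
    rcases Nat.eq_or_lt_of_le hx with rfl | hx'
    · have : L (x+1) (d+1) = 0 := by simp [hL]
      rw [this]
      simp only [hL]
      split_ifs <;> positivity
    rw [hLe x _ hx']
    rcases Nat.eq_zero_or_pos x with rfl | h0
    · have : L 0 d = b := by simp [hL]
      rw [this]
      norm_cast
      simpa using Finset.card_filter_le (Finset.univ : Finset (Fin b)) (fun y : Fin b => T ⟨0, hx'⟩ y ≤ d + 1)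
    · obtain ⟨s, rfl⟩ : ∃ s, x = s + 1 := ⟨x - 1, by omega⟩
      rw [hLe s d (by omega)]
      norm_cast
      apply Finset.card_le_card
      intro y hy
      simp only [Finset.mem_filter, Finset.mem_univ, true_and] at hy ⊢
      have := hc y ⟨s, by omega⟩ ⟨s+1, hx'⟩ (by simp [Fin.lt_def])
      omega

lemma bcount_rep {a b k : ℕ} {T : Fin a → Fin b → ℤ} {L : ℕ → ℤ → ℤ} (h : GTp a b k L)
    (hT : TRep a b T L) (x : Fin a) (d : ℤ) : (bcount a b T x d : ℤ) = b - L (x+1) d := by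
  have hx := x.2
  exact card_Ico_fin b (L (x+1) d) b (h.nonneg _ (by omega) _) (h.le_b _ (by omega) _) le_rfl _
    (fun y => by have := hT x y d; have := y.2; omega)

lemma rep_iter {a b k : ℕ} {T : Fin a → Fin b → ℤ} {L : ℕ → ℤ → ℤ} (h : GTp a b k L)
    (hT : TRep a b T L) (t : ℕ) : GTp a b k ((fun M => stg a M (k-1))^[t] L) ∧
      TRep a b ((pro a b k)^[t] T) ((fun M => stg a M (k-1))^[t] L) := by
  induction t with
  | zero => exact ⟨h, hT⟩
  | succ t ih =>
    rw [Function.iterate_succ_apply', Function.iterate_succ_apply']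
    exact ⟨stg_gt ih.1 _ (by omega), stg_rep ih.1 ih.2 _ (by omega)⟩

lemma sum_shift (f : ℕ → ℤ) (n : ℕ) (hf : ∀ i, f (i + n) = f i) (d : ℕ) :
    ∑ i ∈ Finset.range n, f (i + d) = ∑ i ∈ Finset.range n, f i := by
  induction d with
  | zero => rfl
  | succ d ih =>
    rw [← ih]
    have h1 := Finset.sum_range_succ (fun i => f (i + d)) n
    have h2 := Finset.sum_range_succ' (fun i => f (i + d)) n
    have h3 := hf d
    rw [add_comm] at h3
    simp only [Nat.zero_add] at h2
    rw [h1, h3] at h2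
    have : ∑ i ∈ Finset.range n, f (i + (d+1)) = ∑ i ∈ Finset.range n, f (i + 1 + d) :=
      Finset.sum_congr rfl (fun i _ => by congr 1; omega)
    rw [this]
    linarith

/-- for positive `a, b, k` with `k ≥ a`, a row `x`, and `d ∈ ℤ`, the
statistic `T ↦ #B(T,x,d) + #B(T,a+1−x,k−d)` is `b`-mesic on `SSYT_k(a × b)` under
promotion: for every promotion orbit (of size the minimal period `n` of any of its
elements), the average of the statistic over the orbit equals `b`. -/
theorem ssyt_bcount_homomesy (a b k : ℕ) (ha : 0 < a) (hb : 0 < b) (hak : a ≤ k)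
    (x : Fin a) (d : ℤ)
    (T : Fin a → Fin b → ℤ) (hT : IsSSYT a b k T)
    (n : ℕ) (hn : 0 < n)
    (hper : (pro a b k)^[n] T = T)
    (hmin : ∀ m : ℕ, 0 < m → m < n → (pro a b k)^[m] T ≠ T) :
    ∑ i ∈ Finset.range n,
        ((bcount a b ((pro a b k)^[i] T) x d : ℤ) +
          (bcount a b ((pro a b k)^[i] T) x.rev ((k : ℤ) - d) : ℤ)) = (b : ℤ) * n := by
  obtain ⟨L, hL, hR⟩ := exists_rep a b k T hT
  have hxa := x.2
  have hrev : ((x.rev : Fin a) : ℕ) + 1 = a - x := by rw [Fin.val_rev]; omega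
  by_cases hd : 0 ≤ d ∧ d ≤ k
  · obtain ⟨hd0, hdk⟩ := hd
    lift d to ℕ using hd0
    have key : ∀ i, (bcount a b ((pro a b k)^[i + d] T) x.rev ((k:ℤ) - d) : ℤ) =
        b - bcount a b ((pro a b k)^[i] T) x d := by
      intro i
      obtain ⟨g, r⟩ := rep_iter hL hR i
      obtain ⟨g2, r2⟩ := rep_iter g r d
      rw [← Function.iterate_add_apply, Nat.add_comm] at r2
      rw [bcount_rep g2 r2, bcount_rep g r, hrev, g.recip ha hak x d hxa (by omega)]
    have hs := sum_shift (fun i => (bcount a b ((pro a b k)^[i] T) x.rev ((k:ℤ) - d) : ℤ)) n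
      (fun i => by rw [Function.iterate_add_apply, hper]) d
    rw [Finset.sum_add_distrib, ← hs, ← Finset.sum_add_distrib]
    simp only [key]
    simp [mul_comm]
  · rw [Finset.sum_congr rfl (g := fun _ => (b:ℤ))]
    · simp [mul_comm]
    intro i _
    obtain ⟨g, r⟩ := rep_iter hL hR i
    rw [bcount_rep g r, bcount_rep g r, hrev]
    rcases lt_or_ge d 0 with h | h
    · rw [g.lo _ d (by omega) (by omega) h.le, g.hi _ _ (by omega) (by omega) (by omega)]; ring
    · rw [g.hi _ d (by omega) (by omega) (by omega), g.lo _ _ (by omega) (by omega) (by omega)]; ring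
end
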